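/- arXiv:1711.04267 — 2 statements merged into one kernel-verified Lean document; each statement's English description precedes it below -/
import Mathlib

section
/- Let C be a chamber, let A be an embedded arc in C with both endpoints in the top C_t, and let B be an embedded arc in C with both endpoints in the bottom C_b, with A and B disjoint and meeting ∂C only at their endpoints. Suppose there exists an embedded disc D ⊂ C whose boundary is A together with an arc in C_t joining the two endpoints of A, and suppose B intersects D transversally in exactly one point. Then every interior meridional disc of C intersects A ∪ B; consequently the geometric index N(A ∪ B, C) is at least 2, and if some interior meridional disc meets A ∪ B transversally in exactly 2 points then N(A ∪ B, C) = 2 (so A ∪ B forms a clasp, as in the Whitehead clasp). -/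
open Set Topology unitInterval

noncomputable section

/-- The closed unit 2-disc `B²` in the complex plane. -/
abbrev Disc2 : Set ℂ := Metric.closedBall 0 1

variable {X : Type} [TopologicalSpace X] {Y : Type} [TopologicalSpace Y]

/-- A simple closed curve: a subset homeomorphic to the circle. -/
def IsSimpleClosedCurve (A : Set X) : Prop := Nonempty (↥A ≃ₜ Circle)

/-- An arc: a subset homeomorphic to the unit interval. -/
def IsArc (A : Set X) : Prop := Nonempty (↥A ≃ₜ unitInterval)

/-- A link: a finite disjoint union of simple closed curves. -/
def IsLink (L : Set X) : Prop :=
  ∃ (k : ℕ) (c : Fin k → Set X), (∀ i, IsSimpleClosedCurve (c i)) ∧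
    (Pairwise fun i j => Disjoint (c i) (c j)) ∧ L = ⋃ i, c i

/-- `A` is null-homotopic inside the subset `Y`: `A ⊆ Y` and the inclusion of `A`
into `Y` is homotopic to a constant map. -/
def NullHomotopicIn (A Y : Set X) : Prop :=
  ∃ (h : A ⊆ Y) (y : ↥Y),
    (⟨Set.inclusion h, continuous_inclusion h⟩ : C(↥A, ↥Y)).Homotopic
      (ContinuousMap.const _ y)

/-- Two simple closed curves `A` and `B` are isotopic within the subset `Y`:
there is a continuous one-parameter family of embedded circles in `Y`
starting at a parametrization of `A` and ending at one of `B`. -/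
def IsotopicCirclesIn (Y A B : Set X) : Prop :=
  ∃ H : C(Circle × unitInterval, X),
    (∀ t, Function.Injective fun s => H (s, t)) ∧
    (∀ s t, H (s, t) ∈ Y) ∧
    (Set.range fun s => H (s, 0)) = A ∧
    (Set.range fun s => H (s, 1)) = B

/-- A solid torus in `X`: a subset together with a homeomorphism to `B² × S¹`. -/
structure SolidTorus (X : Type) [TopologicalSpace X] where
  carrier : Set X
  homeo : ↥carrier ≃ₜ ↥Disc2 × Circle

namespace SolidTorus

variable (T : SolidTorus X)

/-- The boundary torus `∂T`, corresponding to `∂B² × S¹`. -/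
def bdry : Set X := Subtype.val '' (T.homeo ⁻¹' {p | ‖(p.1 : ℂ)‖ = 1})

/-- The (manifold) interior of the solid torus, corresponding to `int B² × S¹`. -/
def intr : Set X := Subtype.val '' (T.homeo ⁻¹' {p | ‖(p.1 : ℂ)‖ < 1})

/-- The standard meridian curve `∂B² × {1}` on the boundary of the solid torus. -/
def meridianCurve : Set X :=
  Subtype.val '' (T.homeo ⁻¹' {p | ‖(p.1 : ℂ)‖ = 1 ∧ p.2 = 1})

/-- The core circle `{0} × S¹` of the solid torus. -/
def core : Set X := Subtype.val '' (T.homeo ⁻¹' {p | (p.1 : ℂ) = 0})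

end SolidTorus

/-- A meridional disc of a solid torus `T`: an embedded disc `D ⊆ T` with
`D ∩ ∂T = ∂D` and with `∂D` isotopic in `∂T` to the meridian `∂B² × {pt}`. -/
structure MeridionalDisc (T : SolidTorus X) where
  carrier : Set X
  subset : carrier ⊆ T.carrier
  homeo : ↥carrier ≃ₜ ↥Disc2
  bdry : Set X
  bdry_spec : bdry = Subtype.val '' (homeo ⁻¹' {p | ‖(p : ℂ)‖ = 1})
  inter_bdry : carrier ∩ T.bdry = bdry
  isotopic_meridian : IsotopicCirclesIn T.bdry bdry T.meridianCurve

/-- The geometric index `N(L, T)` of a subset `L` of a solid torus `T`: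
the minimum over all meridional discs `D` of `T` of the number of points of `L ∩ D`. -/
def geomIndex (L : Set X) (T : SolidTorus X) : ℕ∞ :=
  ⨅ D : MeridionalDisc T, (L ∩ D.carrier).encard

/-- The geometric index of a finite union of disjoint solid tori in `T`:
the geometric index of a core link of the union. -/
def geomIndexTori {k : ℕ} (F : Fin k → SolidTorus X) (T : SolidTorus X) : ℕ∞ :=
  geomIndex (⋃ i, (F i).core) T

/-- The 3-sphere. -/
abbrev S3 : Type := ↥(Metric.sphere (0 : EuclideanSpace ℝ (Fin 4)) 1)

/-- A simple closed curve is an unknot if it bounds an embedded disc. -/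
def IsUnknot (J : Set X) : Prop :=
  ∃ (D : Set X) (e : ↥D ≃ₜ ↥Disc2),
    J = Subtype.val '' (e ⁻¹' {p | ‖(p : ℂ)‖ = 1})

/-- A solid torus is unknotted if its core circle is an unknot. -/
def SolidTorus.Unknotted (T : SolidTorus X) : Prop := IsUnknot T.core

/-- The surface `D` and the set `L` intersect transversally at `x`: in suitable
local coordinates, `D` is the plane `z = 0` and `L` is the `z`-axis. -/
def TransverseAt (D L : Set X) (x : X) : Prop :=
  ∃ (U : Set X) (φ : ↥U ≃ₜ EuclideanSpace ℝ (Fin 3)), IsOpen U ∧ x ∈ U ∧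
    (φ '' {y : ↥U | (y : X) ∈ D}) = {v | v 2 = 0} ∧
    (φ '' {y : ↥U | (y : X) ∈ L}) = {v | v 0 = 0 ∧ v 1 = 0}

/-- `D` meets `L` transversally. -/
def MeetsTransversally (D L : Set X) : Prop := ∀ x ∈ D ∩ L, TransverseAt D L x

/-- `S` separates `A` from `B`: `A` and `B` are disjoint from `S` and no
connected subset of the complement of `S` meets both `A` and `B`. -/
def Separates (S A B : Set X) : Prop :=
  Disjoint A S ∧ Disjoint B S ∧
  ∀ P : Set X, IsPreconnected P → Disjoint P S →
    (P ∩ A).Nonempty → (P ∩ B).Nonempty → False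

/-- Two disjoint embedded tori `A` and `B` are parallel: the compact region they
cobound is homeomorphic to `A × [0,1]`. -/
def ParallelTori (A B : Set X) : Prop :=
  ∃ R : Set X, IsCompact R ∧ A ⊆ R ∧ B ⊆ R ∧ frontier R = A ∪ B ∧
    Nonempty (↥R ≃ₜ ↥A × unitInterval)

/-- A chamber: a subset together with a homeomorphism to `B² × [0,1]`. -/
structure Chamber (X : Type) [TopologicalSpace X] where
  carrier : Set X
  homeo : ↥carrier ≃ₜ ↥Disc2 × unitInterval

namespace Chamber

variable (C : Chamber X)

/-- The top `C_t = B² × {1}` of the chamber. -/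
def top : Set X := Subtype.val '' (C.homeo ⁻¹' {p | p.2 = 1})

/-- The bottom `C_b = B² × {0}` of the chamber. -/
def bot : Set X := Subtype.val '' (C.homeo ⁻¹' {p | p.2 = 0})

/-- The boundary `∂C = (∂B² × [0,1]) ∪ (B² × {0,1})` of the chamber. -/
def bdry : Set X :=
  Subtype.val '' (C.homeo ⁻¹' {p | ‖(p.1 : ℂ)‖ = 1 ∨ p.2 = 0 ∨ p.2 = 1})

/-- The side annulus `∂C − (C_t ∪ C_b)`. -/
def sideAnnulus : Set X := C.bdry \ (C.top ∪ C.bot)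

end Chamber

/-- An interior meridional disc of a chamber `C`: an embedded disc
`M ⊆ C − (C_t ∪ C_b)` with `M ∩ ∂C = ∂M` and `∂M` essential
(non null-homotopic) in the annulus `∂C − (C_t ∪ C_b)`. -/
structure InteriorMeridionalDisc (C : Chamber X) where
  carrier : Set X
  subset : carrier ⊆ C.carrier \ (C.top ∪ C.bot)
  homeo : ↥carrier ≃ₜ ↥Disc2
  bdry : Set X
  bdry_spec : bdry = Subtype.val '' (homeo ⁻¹' {p | ‖(p : ℂ)‖ = 1})
  inter_bdry : carrier ∩ C.bdry = bdry
  bdry_sub : bdry ⊆ C.sideAnnulus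
  essential : ¬ NullHomotopicIn bdry C.sideAnnulus

/-- The geometric index `N(L, C)` of a subset `L` of a chamber `C`: the minimum
over all interior meridional discs `M` of `C` of the number of points of `L ∩ M`. -/
def chamberIndex (L : Set X) (C : Chamber X) : ℕ∞ :=
  ⨅ M : InteriorMeridionalDisc C, (L ∩ M.carrier).encard

/-- A spanning arc in a chamber `C`: an embedded arc with one endpoint in the
bottom, the other endpoint in the top, and interior in the interior of `C`. -/
def IsSpanningArc (A : Set X) (C : Chamber X) : Prop :=
  A ⊆ C.carrier ∧ ∃ e : unitInterval ≃ₜ ↥A,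
    ((e 0 : ↥A) : X) ∈ C.bot ∧ ((e 1 : ↥A) : X) ∈ C.top ∧
    ∀ t : unitInterval, t ≠ 0 → t ≠ 1 → ((e t : ↥A) : X) ∈ C.carrier \ C.bdry

/-- An embedded arc in the chamber `C` with both endpoints in the set `F`
(e.g. `F = C.top`) and interior in the interior of `C`. -/
def IsArcWithEndpointsIn (A : Set X) (C : Chamber X) (F : Set X) : Prop :=
  A ⊆ C.carrier ∧ ∃ e : unitInterval ≃ₜ ↥A,
    ((e 0 : ↥A) : X) ∈ F ∧ ((e 1 : ↥A) : X) ∈ F ∧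
    ∀ t : unitInterval, t ≠ 0 → t ≠ 1 → ((e t : ↥A) : X) ∈ C.carrier \ C.bdry

/-- A link in a chamber `C`: a finite disjoint union of arcs with endpoints in
`C_t ∪ C_b` (meeting `∂C` only at their endpoints) and of simple closed curves
in `C − ∂C`. -/
def IsChamberLink (L : Set X) (C : Chamber X) : Prop :=
  ∃ (p q : ℕ) (a : Fin p → Set X) (s : Fin q → Set X),
    (∀ i, IsArcWithEndpointsIn (a i) C (C.top ∪ C.bot)) ∧
    (∀ j, IsSimpleClosedCurve (s j) ∧ s j ⊆ C.carrier \ C.bdry) ∧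
    (Pairwise fun i j => Disjoint (a i) (a j)) ∧
    (Pairwise fun i j => Disjoint (s i) (s j)) ∧
    (∀ i j, Disjoint (a i) (s j)) ∧
    L = (⋃ i, a i) ∪ ⋃ j, s j

/-- A clasp in a chamber `C`: a link `A ∪ B ∪ S` of geometric index 2 in `C`,
where `A` is an arc with both endpoints in `C_t`, `B` is an arc with both
endpoints in `C_b`, and `S` is a possibly empty union of simple closed curves
in `C − ∂C`. -/
def IsClasp (K : Set X) (C : Chamber X) : Prop :=
  ∃ A B S : Set X,
    IsArcWithEndpointsIn A C C.top ∧ IsArcWithEndpointsIn B C C.bot ∧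
    (∃ (q : ℕ) (s : Fin q → Set X), (∀ j, IsSimpleClosedCurve (s j) ∧
        s j ⊆ C.carrier \ C.bdry) ∧
      (Pairwise fun i j => Disjoint (s i) (s j)) ∧ S = ⋃ j, s j) ∧
    Disjoint A B ∧ Disjoint A S ∧ Disjoint B S ∧
    K = A ∪ B ∪ S ∧ chamberIndex K C = 2

/-- A system of `m` cyclically ordered pairwise disjoint meridional discs in a
solid torus `T`, cutting `T` into `m` chambers, the `i`-th chamber lying between
the consecutive discs `D_i` (its bottom) and `D_{i+1 mod m}` (its top). -/
structure ChamberSystem (T : SolidTorus X) (m : ℕ) where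
  disc : Fin m → MeridionalDisc T
  disc_disjoint : Pairwise fun i j => Disjoint (disc i).carrier (disc j).carrier
  chamber : Fin m → Chamber X
  chamber_sub : ∀ i, (chamber i).carrier ⊆ T.carrier
  bot_eq : ∀ i, (chamber i).bot = (disc i).carrier
  top_eq : ∀ i, (chamber i).top = (disc (finRotate m i)).carrier
  cover : (⋃ i, (chamber i).carrier) = T.carrier
  overlap : ∀ i j, i ≠ j →
    (chamber i).carrier ∩ (chamber j).carrier ⊆ ⋃ k, (disc k).carrier

/-- Each meridional disc of the system meets `L` transversally in exactly `n` points. -/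
def ChamberSystem.Transversal {T : SolidTorus X} {m : ℕ} (S : ChamberSystem T m)
    (L : Set X) (n : ℕ) : Prop :=
  ∀ i, MeetsTransversally (S.disc i).carrier L ∧
    (L ∩ (S.disc i).carrier).encard = n

/-- The winding degree of a self-map of the circle, via a lift along
`t ↦ exp (i t)`. -/
def CircleDegree (f : C(Circle, Circle)) (n : ℤ) : Prop :=
  ∃ F : C(ℝ, ℝ), (∀ t : ℝ, Circle.exp (F t) = f (Circle.exp t)) ∧
    F (2 * Real.pi) = F 0 + n * (2 * Real.pi)

/-- The algebraic index of a simple closed curve `J` in a solid torus `T` is `a`: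
`J ⊆ T` and some (hence, up to sign, any) parametrization of `J`, composed with
the projection of `T ≅ B² × S¹` to the `S¹` factor, has winding degree `±a`. -/
def HasAlgIndex (J : Set X) (T : SolidTorus X) (a : ℕ) : Prop :=
  ∃ (hJ : J ⊆ T.carrier) (e : Circle ≃ₜ ↥J) (n : ℤ),
    CircleDegree ⟨fun s => (T.homeo (Set.inclusion hJ (e s))).2,
      continuous_snd.comp (T.homeo.continuous.comp
        ((continuous_inclusion hJ).comp e.continuous))⟩ n ∧ a = n.natAbs

theorem exists_interpolation_weights (n : ℕ) {t₀ : ℝ} (ht₀ : 0 < t₀) :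
    ∃ (w t : ℕ → ℝ), (∀ i ∈ Finset.range (n + 1), 0 < t i ∧ t i < t₀) ∧
      ∀ p : Polynomial ℝ, p.natDegree ≤ n →
        p.eval 1 = ∑ i ∈ Finset.range (n + 1), w i * p.eval (t i) := by
  let t : ℕ → ℝ := fun i => t₀ / (i + 2)
  have hinj : Set.InjOn t (Finset.range (n + 1)) := by
    intro i _ j _ hij
    have hij' : t₀ / ((i : ℝ) + 2) = t₀ / (j + 2) := hij
    rw [div_eq_div_iff (by positivity) (by positivity)] at hij'
    have := mul_left_cancel₀ ht₀.ne' hij'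
    exact_mod_cast (by linarith : (i : ℝ) = j)
  refine ⟨fun i => (Lagrange.basis (Finset.range (n + 1)) t i).eval 1, t, fun i _ => ⟨?_, ?_⟩, ?_⟩
  · positivity
  · exact div_lt_self ht₀ (by have : (0 : ℝ) ≤ i := Nat.cast_nonneg i; linarith)
  · intro p hp
    have hdeg : p.degree < (Finset.range (n + 1)).card := by
      rw [Finset.card_range]
      exact lt_of_le_of_lt Polynomial.degree_le_natDegree (by exact_mod_cast Nat.lt_succ_of_le hp)
    conv_lhs => rw [Lagrange.eq_interpolate hinj hdeg, Lagrange.interpolate_apply,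
      Polynomial.eval_finsetSum]
    refine Finset.sum_congr rfl fun i _ => ?_
    simp [mul_comm]

section Brouwer

variable {E : Type*} [NormedAddCommGroup E]

theorem exists_polynomial_eval_eq_det_id_add_smul [NormedSpace ℝ E] [FiniteDimensional ℝ E]
    (A : E →L[ℝ] E) :
    ∃ p : Polynomial ℝ, p.natDegree ≤ Module.finrank ℝ E ∧
      ∀ t : ℝ, p.eval t = (ContinuousLinearMap.id ℝ E + t • A).det := by
  let b := Module.finBasis ℝ E
  let M := LinearMap.toMatrix b b (A : E →ₗ[ℝ] E)
  refine ⟨Matrix.det ((Polynomial.X : Polynomial ℝ) • M.map Polynomial.C +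
    (1 : Matrix _ _ ℝ).map Polynomial.C), ?_, fun t => ?_⟩
  · simpa using Polynomial.natDegree_det_X_add_C_le M 1
  · have h1 : (ContinuousLinearMap.id ℝ E + t • A).det =
        LinearMap.det ((ContinuousLinearMap.id ℝ E + t • A : E →L[ℝ] E) : E →ₗ[ℝ] E) := rfl
    rw [h1, ← LinearMap.det_toMatrix b, ← Polynomial.coe_evalRingHom, RingHom.map_det]
    congr 1
    ext i j
    by_cases hij : i = j <;>
      simp [M, LinearMap.toMatrix_apply, hij, eq_comm] <;>
      ring

/-- The displacement field of a map fixing the unit sphere, cut off outside the unit ball, is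
Lipschitz. -/
theorem lipschitz_cutoff_displacement [NormedSpace ℝ E] [FiniteDimensional ℝ E] {h : E → E}
    (hh : ContDiff ℝ 1 h)
    (h0 : ∀ x, ‖x‖ = 1 → h x = 0) :
    ∃ L : NNReal, LipschitzWith L (fun x => if ‖x‖ ≤ 1 then h x else 0) ∧
      ∀ x, ‖x‖ ≤ 1 → ‖fderiv ℝ h x‖ ≤ L := by
  obtain ⟨L, hL⟩ := (isCompact_closedBall (0 : E) 1).exists_bound_of_continuousOn
    (hh.continuous_fderiv one_ne_zero).continuousOn
  have hL' : ∀ x, ‖x‖ ≤ 1 → ‖fderiv ℝ h x‖ ≤ L := fun x hx => hL x (by simpa using hx)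
  have hL0 : 0 ≤ L := (norm_nonneg _).trans (hL' 0 (by simp))
  have hlip : ∀ x y, ‖x‖ ≤ 1 → ‖y‖ ≤ 1 → ‖h x - h y‖ ≤ L * ‖x - y‖ := fun x y hx hy =>
    (convex_closedBall (0 : E) 1).norm_image_sub_le_of_norm_fderiv_le
      (fun z _ => hh.differentiable one_ne_zero z) hL (by simpa using hy) (by simpa using hx)
  have hmix : ∀ x y, ‖x‖ ≤ 1 → 1 < ‖y‖ → ‖h x‖ ≤ 2 * L * ‖x - y‖ := by
    intro x y hx hy
    have hy0 : 0 < ‖y‖ := by linarith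
    set z := ‖y‖⁻¹ • y with hz
    have hz1 : ‖z‖ = 1 := by rw [hz, norm_smul, norm_inv, norm_norm, inv_mul_cancel₀ hy0.ne']
    have h1 := hlip x z hx hz1.le
    rw [h0 z hz1, sub_zero] at h1
    have h2 : ‖y - z‖ = ‖y‖ - 1 := by
      have : y - z = (1 - ‖y‖⁻¹) • y := by rw [hz, sub_smul, one_smul]
      rw [this, norm_smul, Real.norm_of_nonneg (by rw [sub_nonneg]; exact inv_le_one_of_one_le₀ hy.le)]
      field_simp
    have h3 : ‖x - z‖ ≤ ‖x - y‖ + ‖y - z‖ := norm_sub_le_norm_sub_add_norm_sub x y z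
    have h4 : ‖y‖ - ‖x‖ ≤ ‖x - y‖ := by rw [norm_sub_rev]; exact norm_sub_norm_le y x
    nlinarith [norm_nonneg (x - y)]
  refine ⟨⟨2 * L, by positivity⟩, LipschitzWith.of_dist_le_mul fun x y => ?_, fun x hx => ?_⟩
  · rw [dist_eq_norm, dist_eq_norm]
    change _ ≤ 2 * L * _
    by_cases hx : ‖x‖ ≤ 1 <;> by_cases hy : ‖y‖ ≤ 1
    · simp only [hx, hy, if_true]
      nlinarith [hlip x y hx hy, mul_nonneg hL0 (norm_nonneg (x - y))]
    · simpa [hx, hy] using hmix x y hx (not_le.1 hy)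
    · have := hmix y x hy (not_le.1 hx)
      simpa [hx, hy, norm_sub_rev] using this
    · simp only [hx, hy, if_false, sub_zero, norm_zero]
      positivity
  · exact (hL' x hx).trans (show L ≤ 2 * L by linarith)

open MeasureTheory in
theorem eventually_integral_det_id_add_smul_eq [NormedSpace ℝ E] [FiniteDimensional ℝ E]
    [MeasurableSpace E] [BorelSpace E]
    (μ : Measure E) [μ.IsAddHaarMeasure] {h : E → E} (hh : ContDiff ℝ 1 h)
    (h0 : ∀ x, ‖x‖ = 1 → h x = 0) :
    ∃ t₀ : ℝ, 0 < t₀ ∧ ∀ t, 0 < t → t < t₀ →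
      ∫ x in Metric.ball (0 : E) 1, (ContinuousLinearMap.id ℝ E + t • fderiv ℝ h x).det ∂μ =
        μ.real (Metric.ball (0 : E) 1) := by
  obtain ⟨L, hLk, hLd⟩ := lipschitz_cutoff_displacement hh h0
  set k : E → E := fun x => if ‖x‖ ≤ 1 then h x else 0 with hk
  have hpos : ∀ᶠ B : E →L[ℝ] E in 𝓝 (ContinuousLinearMap.id ℝ E), 0 < B.det := by
    have hc : Continuous fun B : E →L[ℝ] E => B.det := ContinuousLinearMap.continuous_det
    refine hc.continuousAt.eventually (lt_mem_nhds ?_)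
    simp [ContinuousLinearMap.det]
  obtain ⟨δ, hδ, hδpos⟩ := Metric.eventually_nhds_iff.1 hpos
  refine ⟨min δ 1 / (L + 1), by positivity, fun t ht htt => ?_⟩
  have htL : t * (L + 1) < min δ 1 := by rwa [lt_div_iff₀ (by positivity)] at htt
  have htL' : t * L < min δ 1 := lt_of_le_of_lt (by nlinarith) htL
  let g : E → E := fun x => x + t • k x
  have hg : ApproximatesLinearOn g (ContinuousLinearEquiv.refl ℝ E : E →L[ℝ] E) univ
      (t.toNNReal * L) := by
    intro x _ y _
    have : g x - g y - (ContinuousLinearEquiv.refl ℝ E : E →L[ℝ] E) (x - y) = t • (k x - k y) := by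
      simp only [g, ContinuousLinearEquiv.coe_refl, ContinuousLinearMap.id_apply, smul_sub]
      abel
    rw [this, norm_smul, Real.norm_of_nonneg ht.le]
    have := hLk.norm_sub_le x y
    calc t * ‖k x - k y‖ ≤ t * (L * ‖x - y‖) := by gcongr
      _ = _ := by simp [mul_assoc, ht.le]
  have hc : Subsingleton E ∨ (t.toNNReal * L : NNReal) <
      ‖((ContinuousLinearEquiv.refl ℝ E).symm : E →L[ℝ] E)‖₊⁻¹ := by
    rcases subsingleton_or_nontrivial E with hE | hE
    · exact Or.inl hE
    · right
      simp only [ContinuousLinearEquiv.refl_symm, ContinuousLinearEquiv.coe_refl]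
      rw [show ‖ContinuousLinearMap.id ℝ E‖₊ = 1 from NNReal.eq (by simp), inv_one]
      exact NNReal.coe_lt_coe.1 (by simpa [ht.le] using htL'.trans_le (min_le_right _ _))
  have hbij : Function.Bijective g := ⟨injOn_univ.1 (hg.injOn hc), hg.surjective hc⟩
  have hout : ∀ x, x ∈ (Metric.ball (0 : E) 1)ᶜ → g x = x := by
    intro x hx
    have hx1 : 1 ≤ ‖x‖ := by simpa using hx
    have : k x = 0 := by
      simp only [hk]
      split_ifs with hx2
      · exact h0 x (le_antisymm hx2 hx1)
      · rfl
    simp [g, this]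
  have himg : g '' Metric.ball (0 : E) 1 = Metric.ball (0 : E) 1 := by
    have h1 : g '' (Metric.ball (0 : E) 1)ᶜ = (Metric.ball (0 : E) 1)ᶜ := by
      rw [image_congr hout, image_id']
    rw [image_compl_eq hbij] at h1
    exact compl_injective h1
  have hder : ∀ x ∈ Metric.ball (0 : E) 1, HasFDerivWithinAt g
      (ContinuousLinearMap.id ℝ E + t • fderiv ℝ h x) (Metric.ball (0 : E) 1) x := by
    intro x hx
    have h1 : HasFDerivAt (fun x => x + t • h x)
        (ContinuousLinearMap.id ℝ E + t • fderiv ℝ h x) x :=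
      (hasFDerivAt_id x).add ((hh.differentiable one_ne_zero x).hasFDerivAt.const_smul t)
    refine (h1.hasFDerivWithinAt).congr (fun y hy => ?_) ?_
    · simp [g, hk, (mem_ball_zero_iff.1 hy).le]
    · simp [g, hk, (mem_ball_zero_iff.1 hx).le]
  have hvol := lintegral_abs_det_fderiv_eq_addHaar_image μ Metric.isOpen_ball.measurableSet hder
    hbij.1.injOn
  rw [himg] at hvol
  have hdpos : ∀ x ∈ Metric.ball (0 : E) 1,
      0 < (ContinuousLinearMap.id ℝ E + t • fderiv ℝ h x).det := by
    intro x hx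
    apply hδpos
    rw [dist_eq_norm, add_sub_cancel_left, norm_smul, Real.norm_of_nonneg ht.le]
    calc t * ‖fderiv ℝ h x‖ ≤ t * L := by
          gcongr
          exact hLd x (mem_ball_zero_iff.1 hx).le
      _ < δ := htL'.trans_le (min_le_left _ _)
  have hcont : Continuous fun x => (ContinuousLinearMap.id ℝ E + t • fderiv ℝ h x).det :=
    ContinuousLinearMap.continuous_det.comp
      (continuous_const.add ((hh.continuous_fderiv one_ne_zero).const_smul t))
  rw [integral_eq_lintegral_of_nonneg_ae
    ((ae_restrict_iff' Metric.isOpen_ball.measurableSet).2 (.of_forall fun x hx => (hdpos x hx).le))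
    hcont.aestronglyMeasurable, Measure.real, ← hvol]
  congr 1
  refine setLIntegral_congr_fun Metric.isOpen_ball.measurableSet fun x hx => ?_
  simp only [abs_of_pos (hdpos x hx)]

open MeasureTheory in
/-- There is no continuously differentiable retraction onto the unit sphere. -/
theorem not_contDiff_retraction_sphere [InnerProductSpace ℝ E] [FiniteDimensional ℝ E]
    [Nontrivial E] {f : E → E}
    (hf : ContDiff ℝ 1 f) (hf1 : ∀ x, ‖f x‖ = 1) (hfix : ∀ x, ‖x‖ = 1 → f x = x) : False := by
  borelize E
  let μ : Measure E := Measure.addHaar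
  let h : E → E := fun x => f x - x
  have hh : ContDiff ℝ 1 h := hf.sub contDiff_id
  obtain ⟨t₀, ht₀, hvol⟩ := eventually_integral_det_id_add_smul_eq μ hh
    (fun x hx => by simp [h, hfix x hx])
  obtain ⟨w, t, ht, hw⟩ := exists_interpolation_weights (Module.finrank ℝ E) ht₀
  have hsum : ∑ i ∈ Finset.range (Module.finrank ℝ E + 1), w i = 1 := by
    simpa using (hw 1 (by simp)).symm
  have hpt : ∀ x, ∑ i ∈ Finset.range (Module.finrank ℝ E + 1),
      w i * (ContinuousLinearMap.id ℝ E + t i • fderiv ℝ h x).det = 0 := by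
    intro x
    obtain ⟨p, hp, hpe⟩ := exists_polynomial_eval_eq_det_id_add_smul (fderiv ℝ h x)
    have h1 := hw p hp
    simp only [hpe, one_smul] at h1
    rw [← h1]
    have hfd := (hf.differentiable one_ne_zero x).hasFDerivAt
    have h2 : ContinuousLinearMap.id ℝ E + fderiv ℝ h x = fderiv ℝ f x := by
      have : fderiv ℝ h x = fderiv ℝ f x - ContinuousLinearMap.id ℝ E :=
        (hfd.sub (hasFDerivAt_id x)).fderiv
      rw [this]; abel
    rw [h2]
    by_contra hdet
    have hsurj : Function.Surjective (fderiv ℝ f x) := by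
      have : LinearMap.det (fderiv ℝ f x : E →ₗ[ℝ] E) ≠ 0 := hdet
      exact (LinearMap.equivOfDetNeZero _ this).surjective
    obtain ⟨v, hv⟩ := hsurj (f x)
    have h3 : HasFDerivAt (fun y => ‖f y‖ ^ 2) (2 • (innerSL ℝ (f x)).comp (fderiv ℝ f x)) x :=
      hfd.norm_sq
    have h4 : (fun y => ‖f y‖ ^ 2) = fun _ => (1 : ℝ) := by ext y; simp [hf1]
    rw [h4] at h3
    have h5 := h3.unique (hasFDerivAt_const (1 : ℝ) x)
    have h6 := congrArg (fun T : E →L[ℝ] ℝ => T v) h5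
    simp [hv, hf1] at h6
  have h_integrable : ∀ i ∈ Finset.range (Module.finrank ℝ E + 1), Integrable
      (fun x => w i * (ContinuousLinearMap.id ℝ E + t i • fderiv ℝ h x).det)
      (μ.restrict (Metric.ball (0 : E) 1)) := by
    intro i _
    have hcont : Continuous fun x => w i * (ContinuousLinearMap.id ℝ E + t i • fderiv ℝ h x).det :=
      continuous_const.mul (ContinuousLinearMap.continuous_det.comp
        (continuous_const.add ((hh.continuous_fderiv one_ne_zero).const_smul (t i))))
    exact (hcont.continuousOn.integrableOn_compact (isCompact_closedBall (0 : E) 1)).mono_set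
      Metric.ball_subset_closedBall
  have h1 := integral_finsetSum _ h_integrable
  simp only [hpt, integral_zero, integral_const_mul] at h1
  rw [Finset.sum_congr rfl fun i hi => by rw [hvol (t i) (ht i hi).1 (ht i hi).2],
    ← Finset.sum_mul, hsum, one_mul] at h1
  have h2 : 0 < μ.real (Metric.ball (0 : E) 1) :=
    ENNReal.toReal_pos (Metric.measure_ball_pos μ 0 one_pos).ne' measure_ball_lt_top.ne
  linarith

theorem exists_zero_of_eq_id_of_one_le_norm [InnerProductSpace ℝ E] [FiniteDimensional ℝ E]
    [Nontrivial E] {F : E → E}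
    (hF : Continuous F) (hid : ∀ x, 1 ≤ ‖x‖ → F x = x) : ∃ x, F x = 0 := by
  by_contra! hne
  have hopen : IsOpen {x : E | 1 < ‖x‖} := isOpen_lt continuous_const continuous_norm
  have hclosed : IsClosed {x : E | 2 ≤ ‖x‖} := isClosed_le continuous_const continuous_norm
  obtain ⟨g, hg, hgF, hgid, -⟩ := hF.exists_contDiff_approx_and_eqOn 1 hF.norm
    (fun x => norm_pos_iff.2 (hne x)) (S := {x : E | 2 ≤ ‖x‖}) (U := {x : E | 1 < ‖x‖}) hclosed
    (hopen.mem_nhdsSet.2 fun x hx => show 1 < ‖x‖ from lt_of_lt_of_le one_lt_two hx)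
    (contDiff_id.contDiffOn.congr fun x hx => hid x (le_of_lt hx))
  have hg0 : ∀ x, g x ≠ 0 := by
    intro x hx
    have := hgF x
    rw [hx, dist_zero_left] at this
    exact lt_irrefl _ this
  let G : E → E := fun x => g ((2 : ℝ) • x)
  have hG : ContDiff ℝ 1 G := hg.comp (contDiff_id.const_smul (2 : ℝ))
  refine not_contDiff_retraction_sphere (f := fun x => ‖G x‖⁻¹ • G x) ?_ ?_ ?_
  · exact ((hG.norm ℝ fun x => hg0 _).inv fun x => norm_ne_zero_iff.2 (hg0 _)).smul hG
  · intro x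
    rw [norm_smul, norm_inv, norm_norm, inv_mul_cancel₀ (norm_ne_zero_iff.2 (hg0 _))]
  · intro x hx
    have h2 : ‖(2 : ℝ) • x‖ = 2 := by simp [norm_smul, hx]
    have : G x = (2 : ℝ) • x := by
      change g _ = _
      rw [hgid (show 2 ≤ ‖(2 : ℝ) • x‖ from h2.ge), hid _ (by rw [h2]; norm_num)]
    simp only [this, h2, smul_smul]
    norm_num

end Brouwer

section Extension

variable {E : Type*} [NormedAddCommGroup E]

/-- The restriction of `f` to the unit sphere extends to a nowhere vanishing map on the closed
unit ball. -/
def ExtendsNonvanishing (f : E → E) : Prop :=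
  ∃ g : E → E, ContinuousOn g (Metric.closedBall 0 1) ∧
    (∀ x ∈ Metric.closedBall (0 : E) 1, g x ≠ 0) ∧ EqOn g f (Metric.sphere 0 1)

namespace ExtendsNonvanishing

theorem of_continuousOn {f : E → E} (hf : ContinuousOn f (Metric.closedBall 0 1))
    (h0 : ∀ x ∈ Metric.closedBall (0 : E) 1, f x ≠ 0) : ExtendsNonvanishing f :=
  ⟨f, hf, h0, fun _ _ => rfl⟩

theorem congr {f f' : E → E} (h : ExtendsNonvanishing f) (hff' : EqOn f f' (Metric.sphere 0 1)) :
    ExtendsNonvanishing f' :=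
  let ⟨g, hg, hg0, hgf⟩ := h
  ⟨g, hg, hg0, hgf.trans hff'⟩

theorem comp_left {f : E → E} (h : ExtendsNonvanishing f) {T : E → E} (hT : Continuous T)
    (hT0 : ∀ x, T x = 0 → x = 0) : ExtendsNonvanishing (T ∘ f) :=
  let ⟨g, hg, hg0, hgf⟩ := h
  ⟨T ∘ g, hT.comp_continuousOn hg, fun x hx hx0 => hg0 x hx (hT0 _ hx0),
    fun _ hx => congrArg T (hgf hx)⟩

variable [NormedSpace ℝ E]

theorem homotopy {H : ℝ → E → E} {f f' : E → E}
    (hH : ContinuousOn (fun p : ℝ × E => H p.1 p.2) (Icc 0 1 ×ˢ Metric.sphere 0 1))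
    (hne : ∀ s ∈ Icc (0 : ℝ) 1, ∀ x ∈ Metric.sphere (0 : E) 1, H s x ≠ 0)
    (h0 : EqOn (H 0) f (Metric.sphere 0 1)) (h1 : EqOn (H 1) f' (Metric.sphere 0 1))
    (h : ExtendsNonvanishing f) : ExtendsNonvanishing f' := by
  obtain ⟨g, hg, hg0, hgf⟩ := h
  have key : ∀ x : E, 1 / 2 ≤ ‖x‖ → ‖x‖ ≤ 1 →
      2 * ‖x‖ - 1 ∈ Icc (0 : ℝ) 1 ∧ ‖x‖⁻¹ • x ∈ Metric.sphere (0 : E) 1 := by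
    intro x hx hx'
    refine ⟨⟨by linarith, by linarith⟩, ?_⟩
    rw [mem_sphere_zero_iff_norm, norm_smul, norm_inv, norm_norm, inv_mul_cancel₀ (by linarith)]
  have hmem : ∀ x : E, ‖x‖ ≤ 1 / 2 → (2 : ℝ) • x ∈ Metric.closedBall (0 : E) 1 := by
    intro x hx
    rw [mem_closedBall_zero_iff, norm_smul]
    norm_num
    linarith
  let G : E → E := fun x => if ‖x‖ ≤ 1 / 2 then g ((2 : ℝ) • x)
    else H (2 * ‖x‖ - 1) (‖x‖⁻¹ • x)
  have hG2 : ∀ x : E, 1 / 2 ≤ ‖x‖ → G x = H (2 * ‖x‖ - 1) (‖x‖⁻¹ • x) := by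
    intro x hx
    rcases hx.eq_or_lt with hx | hx
    · have h2 : (2 : ℝ) • x ∈ Metric.sphere (0 : E) 1 := by
        rw [mem_sphere_zero_iff_norm, norm_smul, ← hx]; norm_num
      have : 2 * ‖x‖ - 1 = 0 := by rw [← hx]; norm_num
      simp only [G, hx.ge, if_true]
      rw [this, ← hx, hgf h2]
      norm_num
      exact (h0 h2).symm
    · simp only [G, not_le.2 hx, if_false]
  refine ⟨G, ?_, ?_, ?_⟩
  · have hA : ContinuousOn G {x : E | ‖x‖ ≤ 1 / 2} := by
      have : ContinuousOn (fun x : E => g ((2 : ℝ) • x)) {x : E | ‖x‖ ≤ 1 / 2} :=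
        hg.comp (by fun_prop) hmem
      refine this.congr fun x hx => ?_
      simp only [G, show ‖x‖ ≤ 1 / 2 from hx, if_true]
    have hB : ContinuousOn G {x : E | 1 / 2 ≤ ‖x‖ ∧ ‖x‖ ≤ 1} := by
      have : ContinuousOn (fun x : E => H (2 * ‖x‖ - 1) (‖x‖⁻¹ • x))
          {x : E | 1 / 2 ≤ ‖x‖ ∧ ‖x‖ ≤ 1} := by
        refine hH.comp (f := fun x : E => (2 * ‖x‖ - 1, ‖x‖⁻¹ • x)) ?_
          fun x hx => key x hx.1 hx.2
        have hinv : ContinuousOn (fun x : E => ‖x‖⁻¹) {x : E | 1 / 2 ≤ ‖x‖ ∧ ‖x‖ ≤ 1} :=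
          continuous_norm.continuousOn.inv₀ fun x hx => by
            have : (1 : ℝ) / 2 ≤ ‖x‖ := hx.1
            positivity
        exact (by fun_prop : Continuous fun x : E => 2 * ‖x‖ - 1).continuousOn.prodMk
          (hinv.smul continuousOn_id)
      exact this.congr fun x hx => hG2 x hx.1
    have hcA : IsClosed {x : E | ‖x‖ ≤ 1 / 2} := isClosed_le continuous_norm continuous_const
    have hcB : IsClosed {x : E | 1 / 2 ≤ ‖x‖ ∧ ‖x‖ ≤ 1} :=
      (isClosed_le continuous_const continuous_norm).inter
        (isClosed_le continuous_norm continuous_const)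
    refine (hA.union_of_isClosed hB hcA hcB).mono fun x hx => ?_
    rw [mem_closedBall_zero_iff] at hx
    rcases le_total ‖x‖ (1 / 2) with h | h
    · exact Or.inl h
    · exact Or.inr ⟨h, hx⟩
  · intro x hx
    rw [mem_closedBall_zero_iff] at hx
    rcases le_total ‖x‖ (1 / 2) with h | h
    · simp only [G, h, if_true]
      exact hg0 _ (hmem x h)
    · rw [hG2 x h]
      exact hne _ (key x h hx).1 _ (key x h hx).2
  · intro x hx
    have hx1 : ‖x‖ = 1 := by simpa using hx
    rw [hG2 x (by rw [hx1]; norm_num), hx1]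
    norm_num
    exact h1 hx

/-- `homotopy` for the straight-line homotopy. -/
theorem linear_homotopy {f f' : E → E} (hf : ContinuousOn f (Metric.sphere 0 1))
    (hf' : ContinuousOn f' (Metric.sphere 0 1))
    (hne : ∀ s ∈ Icc (0 : ℝ) 1, ∀ x ∈ Metric.sphere (0 : E) 1, (1 - s) • f x + s • f' x ≠ 0)
    (h : ExtendsNonvanishing f) : ExtendsNonvanishing f' := by
  refine h.homotopy (H := fun s x => (1 - s) • f x + s • f' x) ?_ hne ?_ ?_
  · have h1 : ContinuousOn (fun p : ℝ × E => f p.2) (Icc 0 1 ×ˢ Metric.sphere 0 1) :=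
      hf.comp continuousOn_snd fun p hp => hp.2
    have h2 : ContinuousOn (fun p : ℝ × E => f' p.2) (Icc 0 1 ×ˢ Metric.sphere 0 1) :=
      hf'.comp continuousOn_snd fun p hp => hp.2
    exact ((by fun_prop : Continuous fun p : ℝ × E => 1 - p.1).continuousOn.smul h1).add
      (continuousOn_fst.smul h2)
  · intro x _; simp
  · intro x _; simp

theorem not_id [FiniteDimensional ℝ E] [Nontrivial E] : ¬ ExtendsNonvanishing (id : E → E) := by
  rintro ⟨g, hg, hg0, hgid⟩
  let F : E → E := fun x => if ‖x‖ ≤ 1 then g x else x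
  have hF : Continuous F := by
    rw [← continuousOn_univ]
    have hA : ContinuousOn F (Metric.closedBall 0 1) := hg.congr fun x hx => by
      simp only [F, mem_closedBall_zero_iff.1 hx, if_true]
    have hFid : ∀ x : E, 1 ≤ ‖x‖ → F x = x := by
      intro x hx
      rcases hx.eq_or_lt with hx | hx
      · simp only [F, hx.ge, if_true]
        exact hgid (by simpa using hx.symm)
      · simp only [F, not_le.2 hx, if_false]
    have hB : ContinuousOn F {x : E | 1 ≤ ‖x‖} := continuousOn_id.congr hFid
    refine (hA.union_of_isClosed hB Metric.isClosed_closedBall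
      (isClosed_le continuous_const continuous_norm)).mono fun x _ => ?_
    rcases le_total ‖x‖ 1 with h | h
    · exact Or.inl (by simpa using h)
    · exact Or.inr h
  have hF0 : ∀ x, F x ≠ 0 := by
    intro x
    by_cases hx : ‖x‖ ≤ 1
    · simpa only [F, hx, if_true] using hg0 x (by simpa using hx)
    · simp only [F, hx, if_false]
      rintro rfl
      simp at hx
  let T := toEuclidean (E := E)
  obtain ⟨c, hc, hcT⟩ : ∃ c : ℝ, 0 < c ∧ ∀ x, ‖T x‖ ≤ c * ‖x‖ :=
    ⟨‖T.toContinuousLinearMap‖ + 1, add_pos_of_nonneg_of_pos (norm_nonneg _) one_pos, fun x =>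
      (T.toContinuousLinearMap.le_opNorm x).trans
        (mul_le_mul_of_nonneg_right (le_add_of_nonneg_right zero_le_one) (norm_nonneg _))⟩
  have : Nontrivial (EuclideanSpace ℝ (Fin (Module.finrank ℝ E))) := T.symm.toEquiv.nontrivial
  have h1c : (1 : ℝ) < c + 1 := by linarith
  obtain ⟨y, hy⟩ := exists_zero_of_eq_id_of_one_le_norm
    (F := fun y => (c + 1)⁻¹ • T (F (T.symm ((c + 1) • y))))
    (by fun_prop) (fun y hy => by
      have h2 : 1 < ‖T.symm ((c + 1) • y)‖ := by
        have h3 := hcT (T.symm ((c + 1) • y))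
        rw [T.apply_symm_apply, norm_smul, Real.norm_of_nonneg (by linarith)] at h3
        by_contra! h4
        nlinarith
      simp only [F, not_le.2 h2, if_false, T.apply_symm_apply]
      rw [smul_smul, inv_mul_cancel₀ (by linarith), one_smul])
  rw [smul_eq_zero] at hy
  rcases hy with hy | hy
  · rw [inv_eq_zero] at hy; linarith
  · exact hF0 _ (T.map_eq_zero_iff.1 hy)

end ExtendsNonvanishing

variable [NormedSpace ℝ E]

/-- The radial retraction onto the closed ball of radius `r`. -/
def ballRetract (r : ℝ) (x : E) : E := (r / max r ‖x‖) • x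

theorem continuous_ballRetract {r : ℝ} (hr : 0 < r) : Continuous (ballRetract r : E → E) := by
  have h : ∀ x : E, max r ‖x‖ ≠ 0 := fun x => (lt_max_of_lt_left hr).ne'
  unfold ballRetract
  fun_prop (disch := exact h _)

theorem norm_ballRetract_le {r : ℝ} (hr : 0 < r) (x : E) : ‖ballRetract r x‖ ≤ r := by
  have h : 0 < max r ‖x‖ := lt_max_of_lt_left hr
  rw [ballRetract, norm_smul, Real.norm_of_nonneg (by positivity), div_mul_eq_mul_div, div_le_iff₀ h]
  gcongr
  exact le_max_right _ _

theorem ballRetract_of_le {r : ℝ} (hr : 0 < r) {x : E} (hx : ‖x‖ ≤ r) : ballRetract r x = x := by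
  rw [ballRetract, max_eq_left hx, div_self hr.ne', one_smul]

theorem norm_ballRetract_of_ge {r : ℝ} (hr : 0 < r) {x : E} (hx : r ≤ ‖x‖) :
    ‖ballRetract r x‖ = r := by
  have h : 0 < ‖x‖ := hr.trans_le hx
  rw [ballRetract, max_eq_right hx, norm_smul, Real.norm_of_nonneg (by positivity),
    div_mul_cancel₀ _ h.ne']

theorem ballRetract_eq_zero {r : ℝ} (hr : 0 < r) {x : E} (hx : ballRetract r x = 0) : x = 0 := by
  rcases le_total ‖x‖ r with h | h
  · rwa [ballRetract_of_le hr h] at hx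
  · have := norm_ballRetract_of_ge hr h
    rw [hx, norm_zero] at this
    exact absurd this hr.ne

namespace ExtendsNonvanishing

/-- If `F` has a single zero `q` in the unit ball, and its restriction to the sphere extends to a
nowhere vanishing map, then so does `F ∘ K` for every map `K` of the sphere to the ball
avoiding `q`. -/
theorem comp_of_unique_zero {F K : E → E} {q : E} (hF : ContinuousOn F (Metric.closedBall 0 1))
    (hq : ‖q‖ < 1) (hF0 : ∀ x ∈ Metric.closedBall (0 : E) 1, F x = 0 → x = q)
    (hext : ExtendsNonvanishing F) (hK : ContinuousOn K (Metric.sphere 0 1))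
    (hKb : MapsTo K (Metric.sphere 0 1) (Metric.closedBall 0 1))
    (hKq : ∀ x ∈ Metric.sphere (0 : E) 1, K x ≠ q) : ExtendsNonvanishing (F ∘ K) := by
  obtain ⟨g, hg, hg0, hgF⟩ := hext
  have hret : ∀ x : E, ballRetract 1 x ∈ Metric.closedBall (0 : E) 1 := fun x => by
    simpa using norm_ballRetract_le one_pos x
  have hF' : Continuous fun x : E => F (ballRetract 1 x) :=
    hF.comp_continuous (continuous_ballRetract one_pos) hret
  have hg' : Continuous fun x : E => g (ballRetract 1 x) :=
    hg.comp_continuous (continuous_ballRetract one_pos) hret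
  have hF'0 : ∀ x : E, F (ballRetract 1 x) = 0 → x = q := by
    intro x hx
    have h1 := hF0 _ (hret x) hx
    rcases le_total ‖x‖ 1 with h | h
    · rwa [ballRetract_of_le one_pos h] at h1
    · have := norm_ballRetract_of_ge one_pos h
      rw [h1] at this
      exact absurd this hq.ne
  have hnorm : ContinuousOn (fun x => 3 / ‖K x - q‖) (Metric.sphere (0 : E) 1) :=
    continuousOn_const.div (hK.sub continuousOn_const).norm fun x hx =>
      norm_ne_zero_iff.2 (sub_ne_zero.2 (hKq x hx))
  have hpath : ∀ m : E → ℝ, ContinuousOn m (Metric.sphere 0 1) → ∀ m' : E → ℝ,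
      ContinuousOn m' (Metric.sphere 0 1) → ContinuousOn (fun p : ℝ × E =>
        q + ((1 - p.1) * m p.2 + p.1 * m' p.2) • (K p.2 - q)) (Icc 0 1 ×ˢ Metric.sphere 0 1) := by
    intro m hm m' hm'
    have h1 : ContinuousOn (fun p : ℝ × E => K p.2) (Icc 0 1 ×ˢ Metric.sphere 0 1) :=
      hK.comp continuousOn_snd fun p hp => hp.2
    have h2 : ContinuousOn (fun p : ℝ × E => m p.2) (Icc 0 1 ×ˢ Metric.sphere 0 1) :=
      hm.comp continuousOn_snd fun p hp => hp.2
    have h3 : ContinuousOn (fun p : ℝ × E => m' p.2) (Icc 0 1 ×ˢ Metric.sphere 0 1) :=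
      hm'.comp continuousOn_snd fun p hp => hp.2
    exact continuousOn_const.add ((((continuousOn_const.sub continuousOn_fst).mul h2).add
      (continuousOn_fst.mul h3)).smul (h1.sub continuousOn_const))
  have hfar : ∀ x ∈ Metric.sphere (0 : E) 1, 1 ≤ ‖q + (3 / ‖K x - q‖) • (K x - q)‖ := by
    intro x hx
    have h0 : 0 < ‖K x - q‖ := norm_pos_iff.2 (sub_ne_zero.2 (hKq x hx))
    have h1 : ‖(3 / ‖K x - q‖) • (K x - q)‖ = 3 := by
      rw [norm_smul, Real.norm_of_nonneg (by positivity), div_mul_cancel₀ _ h0.ne']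
    have h2 := norm_sub_le (q + (3 / ‖K x - q‖) • (K x - q)) q
    rw [add_sub_cancel_left, h1] at h2
    linarith
  have hstart : ExtendsNonvanishing fun x : E => g (ballRetract 1 q) :=
    of_continuousOn continuousOn_const fun x _ => hg0 _ (hret q)
  have hmid : ExtendsNonvanishing
      fun x => F (ballRetract 1 (q + (3 / ‖K x - q‖) • (K x - q))) := by
    refine hstart.homotopy (H := fun s x =>
      g (ballRetract 1 (q + ((1 - s) * 0 + s * (3 / ‖K x - q‖)) • (K x - q)))) ?_ ?_ ?_ ?_
    · exact hg'.comp_continuousOn (hpath (fun _ => 0) continuousOn_const _ hnorm)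
    · exact fun s _ x _ => hg0 _ (hret _)
    · intro x _; simp
    · intro x hx
      simp only [sub_self, zero_mul, one_mul, zero_add]
      exact hgF (by simpa using norm_ballRetract_of_ge one_pos (hfar x hx))
  refine hmid.homotopy (H := fun s x =>
      F (ballRetract 1 (q + ((1 - s) * (3 / ‖K x - q‖) + s * 1) • (K x - q)))) ?_ ?_ ?_ ?_
  · exact hF'.comp_continuousOn (hpath _ hnorm (fun _ => 1) continuousOn_const)
  · intro s hs x hx h0
    have h1 := hF'0 _ h0
    have hn : 0 < ‖K x - q‖ := norm_pos_iff.2 (sub_ne_zero.2 (hKq x hx))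
    rw [add_eq_left, smul_eq_zero, sub_eq_zero] at h1
    rcases h1 with h1 | h1
    · have h2 : 0 < 3 / ‖K x - q‖ := by positivity
      rcases hs.2.eq_or_lt with h3 | h3
      · rw [h3] at h1; norm_num at h1
      · nlinarith [hs.1, mul_pos (sub_pos.2 h3) h2]
    · exact hKq x hx h1
  · intro x _; simp
  · intro x hx
    simp only [sub_self, zero_mul, one_mul, zero_add, one_smul, add_sub_cancel, Function.comp]
    rw [ballRetract_of_le one_pos (by simpa using hKb hx)]

/-- Let `θ` be injective on a ball. If `θ ∘ p - θ ∘ p'` is a linear isomorphism on the sphere, then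
`p - p'` is essential. -/
theorem not_sub_of_injOn [FiniteDimensional ℝ E] [Nontrivial E] {θ p p' : E → E} {y : E} {r : ℝ}
    (hr : 0 < r) (hθ : ContinuousOn θ (Metric.closedBall y r))
    (hinj : InjOn θ (Metric.closedBall y r))
    (hp : ContinuousOn p (Metric.closedBall 0 1)) (hp' : ContinuousOn p' (Metric.closedBall 0 1))
    (hpy : MapsTo p (Metric.closedBall 0 1) (Metric.closedBall y (r / 2)))
    (hpy' : MapsTo p' (Metric.closedBall 0 1) (Metric.closedBall y (r / 2)))
    (L : E ≃L[ℝ] E) (hL : ∀ u ∈ Metric.sphere (0 : E) 1, θ (p u) - θ (p' u) = L u) :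
    ¬ ExtendsNonvanishing fun u => p u - p' u := by
  rintro ⟨g, hg, hg0, hgp⟩
  let m : E → E := fun u => (1 / 2 : ℝ) • (p u + p' u)
  let v : E → E := fun u => (1 / 2 : ℝ) • ballRetract r (g u)
  have hm : ContinuousOn m (Metric.closedBall 0 1) := (hp.add hp').const_smul _
  have hv : ContinuousOn v (Metric.closedBall 0 1) :=
    ((continuous_ballRetract hr).comp_continuousOn hg).const_smul _
  have hmy : ∀ u ∈ Metric.closedBall (0 : E) 1, ‖m u - y‖ ≤ r / 2 := by
    intro u hu
    have := (convex_closedBall y (r / 2)) (hpy hu) (hpy' hu) (a := 1 / 2) (b := 1 / 2)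
      (by norm_num) (by norm_num) (by norm_num)
    rwa [← smul_add, mem_closedBall_iff_norm] at this
  have hvr : ∀ u, ‖v u‖ ≤ r / 2 := by
    intro u
    have := norm_ballRetract_le hr (g u)
    rw [norm_smul]
    norm_num
    linarith
  have hplus : MapsTo (fun u => m u + v u) (Metric.closedBall 0 1) (Metric.closedBall y r) := by
    intro u hu
    rw [mem_closedBall_iff_norm, add_sub_right_comm]
    linarith [norm_add_le (m u - y) (v u), hmy u hu, hvr u]
  have hminus : MapsTo (fun u => m u - v u) (Metric.closedBall 0 1) (Metric.closedBall y r) := by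
    intro u hu
    rw [mem_closedBall_iff_norm, sub_right_comm]
    linarith [norm_sub_le (m u - y) (v u), hmy u hu, hvr u]
  have key : ExtendsNonvanishing (L : E → E) := by
    refine ⟨fun u => θ (m u + v u) - θ (m u - v u), ?_, ?_, ?_⟩
    · exact (hθ.comp (hm.add hv) hplus).sub (hθ.comp (hm.sub hv) hminus)
    · intro u hu h0
      have h1 := hinj (hplus hu) (hminus hu) (sub_eq_zero.1 h0)
      have h2 : (2 : ℝ) • v u = 0 := by
        rw [show (2 : ℝ) • v u = (m u + v u) - (m u - v u) by module]
        exact sub_eq_zero.2 h1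
      rw [smul_smul] at h2
      norm_num at h2
      exact hg0 u hu (ballRetract_eq_zero hr h2)
    · intro u hu
      have hu' := Metric.sphere_subset_closedBall hu
      have h1 : ‖p u - p' u‖ ≤ r := by
        have := dist_triangle_right (p u) (p' u) y
        rw [← dist_eq_norm]
        linarith [Metric.mem_closedBall.1 (hpy hu'), Metric.mem_closedBall.1 (hpy' hu')]
      have h2 : v u = (1 / 2 : ℝ) • (p u - p' u) := by
        simp only [v, hgp hu, ballRetract_of_le hr h1]
      simp only [← hL u hu, h2, m]
      congr 2 <;> module
  exact not_id ((key.comp_left L.symm.continuous fun x hx => by simpa using hx).congr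
    fun u _ => by simp)

end ExtendsNonvanishing

end Extension

section Winding

/-- Every self-map of the circle is homotopic to a power map. -/
theorem exists_zpow_mul_exp (f : C(Circle, Circle)) :
    ∃ (n : ℤ) (h : C(Circle, ℝ)), ∀ z, f z = z ^ n * Circle.exp (h z) := by
  obtain ⟨x₀, hx₀⟩ := Circle.exp_surjective (f (Circle.exp 0))
  obtain ⟨F, ⟨-, hF⟩, -⟩ := Circle.isCoveringMap_exp.existsUnique_continuousMap_lifts
    (f.comp Circle.exp) 0 x₀ hx₀
  replace hF : ∀ t, Circle.exp (F t) = f (Circle.exp t) := fun t => congrFun hF t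
  have hexp : ∀ t : ℝ, Circle.exp (F (t + 2 * Real.pi)) = Circle.exp (F t) := fun t => by
    rw [hF, hF, Circle.exp_add, Circle.exp_two_pi, mul_one]
  have hconst : ∀ t, F (t + 2 * Real.pi) - F t = F (0 + 2 * Real.pi) - F 0 := fun t =>
    Circle.isCoveringMap_exp.const_of_comp (g := fun t => F (t + 2 * Real.pi) - F t)
      (by fun_prop) (fun a a' => by rw [Circle.exp_sub, Circle.exp_sub, hexp, hexp]; simp) t 0
  obtain ⟨n, hn⟩ := Circle.exp_eq_exp.1 (hexp 0)
  have hper : ∀ t, F (t + 2 * Real.pi) = F t + n * (2 * Real.pi) := fun t => by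
    linarith [hconst t]
  have hq : IsQuotientMap Circle.exp :=
    Circle.isCoveringMap_exp.isQuotientMap Circle.exp_surjective
  have hzmul : ∀ (k : ℤ) (t : ℝ), F (t + k * (2 * Real.pi)) = F t + n * (k * (2 * Real.pi)) := by
    intro k t
    induction k using Int.induction_on with
    | zero => simp
    | succ k ih =>
      have := hper (t + k * (2 * Real.pi))
      push_cast at ih ⊢
      rw [add_one_mul, ← add_assoc, this, ih]
      ring
    | pred k ih =>
      have := hper (t + (-(k : ℝ) - 1) * (2 * Real.pi))
      push_cast at ih ⊢
      rw [show t + (-(k : ℝ) - 1) * (2 * Real.pi) + 2 * Real.pi = t + -k * (2 * Real.pi) by ring,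
        ih] at this
      linarith
  let P : C(ℝ, ℝ) := ⟨fun t => F t - n * t, by fun_prop⟩
  have hP : Function.FactorsThrough P Circle.exp := by
    intro a b hab
    obtain ⟨k, hk⟩ := Circle.exp_eq_exp.1 hab
    simp only [P, ContinuousMap.coe_mk, hk, hzmul]
    ring
  refine ⟨n, hq.lift P hP, fun z => ?_⟩
  obtain ⟨t, rfl⟩ := Circle.exp_surjective z
  have hl : hq.lift P hP (Circle.exp t) = P t := DFunLike.congr_fun (hq.lift_comp P hP) t
  rw [← hF, hl, ← Circle.exp_zsmul, ← Circle.exp_add]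
  simp [P]

/-- An embedded closed curve in an annulus winds at most once around. -/
theorem lt_two_of_injective {n : ℤ} {h y : C(Circle, ℝ)}
    (hinj : Function.Injective fun z : Circle => (z ^ n * Circle.exp (h z), y z)) : n < 2 := by
  by_contra! hn
  have hpi := Real.pi_pos
  let x : ℝ → ℝ := fun t => n * t + h (Circle.exp t)
  have hx : ∀ t, Circle.exp (x t) = Circle.exp t ^ n * Circle.exp (h (Circle.exp t)) := fun t => by
    rw [← Circle.exp_zsmul, ← Circle.exp_add]
    simp [x]
  let G : C(ℝ × ℝ, ℂ) := ⟨fun p => ⟨x (p.1 + p.2) - x p.1 - 2 * Real.pi,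
    y (Circle.exp (p.1 + p.2)) - y (Circle.exp p.1)⟩, by
      simp only [Complex.mk_eq_add_mul_I, x]
      fun_prop⟩
  have hG0 : ∀ p, G p ∈ ({0}ᶜ : Set ℂ) := by
    rintro ⟨s, τ⟩ h0
    have hre : x (s + τ) - x s - 2 * Real.pi = 0 := congrArg Complex.re h0
    have him : y (Circle.exp (s + τ)) - y (Circle.exp s) = 0 := congrArg Complex.im h0
    have h1 : Circle.exp (s + τ) = Circle.exp s := by
      refine hinj (Prod.ext ?_ (by simpa [sub_eq_zero] using him))
      simp only [← hx]
      rw [show x (s + τ) = x s + 2 * Real.pi by linarith, Circle.exp_add_two_pi]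
    obtain ⟨k, hk⟩ := Circle.exp_eq_exp.1 h1
    have h2 : ((n * k : ℤ) : ℝ) = (1 : ℤ) := by
      have : (n : ℝ) * τ = 2 * Real.pi := by
        simp only [x, h1] at hre
        linarith
      rw [show τ = k * (2 * Real.pi) by linarith] at this
      push_cast
      nlinarith
    have h3 := Int.eq_one_or_neg_one_of_mul_eq_one (Int.cast_injective h2)
    omega
  obtain ⟨Λ, ⟨-, hΛ⟩, -⟩ := Complex.isCoveringMapOn_exp.existsUnique_continuousMap_lifts G
    (a₀ := 0) (Complex.exp_log (hG0 0)) hG0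
  replace hΛ : ∀ p, Complex.exp (Λ p) = G p := fun p => congrFun hΛ p
  have hre : ∀ p, Real.exp (Λ p).re * Real.cos (Λ p).im = x (p.1 + p.2) - x p.1 - 2 * Real.pi :=
    fun p => by rw [← Complex.exp_re, hΛ]; rfl
  have him : ∀ p, Real.exp (Λ p).re * Real.sin (Λ p).im =
      y (Circle.exp (p.1 + p.2)) - y (Circle.exp p.1) :=
    fun p => by rw [← Complex.exp_im, hΛ]; rfl
  have hcircle : ∀ t t' : ℝ, Real.cos t = Real.cos t' → Real.sin t = Real.sin t' →
      Circle.exp t = Circle.exp t' := fun t t' hc hs => Circle.ext (by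
    rw [Circle.coe_exp, Circle.coe_exp, Complex.exp_mul_I, Complex.exp_mul_I]
    simp only [← Complex.ofReal_cos, ← Complex.ofReal_sin, hc, hs])
  have hstart : ∀ s, Circle.exp (Λ (s, 0)).im = Circle.exp Real.pi := by
    intro s
    have h1 := hre (s, 0)
    have h2 := him (s, 0)
    simp only [add_zero, sub_self, zero_sub, mul_eq_zero, Real.exp_ne_zero, false_or] at h1 h2
    have h3 := Real.sin_sq_add_cos_sq (Λ (s, 0)).im
    rw [h2] at h3
    have h4 : Real.cos (Λ (s, 0)).im < 0 := by
      by_contra! h4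
      nlinarith [mul_nonneg (Real.exp_pos (Λ (s, 0)).re).le h4]
    exact hcircle _ _ (by rw [Real.cos_pi]; nlinarith) (by rw [h2, Real.sin_pi])
  have hend : ∀ s, Circle.exp (Λ (s, 2 * Real.pi)).im = Circle.exp 0 := by
    intro s
    have h1 := hre (s, 2 * Real.pi)
    have h2 := him (s, 2 * Real.pi)
    simp only [x, Circle.exp_add_two_pi, sub_self, mul_eq_zero, Real.exp_ne_zero, false_or] at h1 h2
    have h3 := Real.sin_sq_add_cos_sq (Λ (s, 2 * Real.pi)).im
    rw [h2] at h3
    have hn' : (2 : ℝ) ≤ n := by exact_mod_cast hn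
    have h4 : 0 < Real.cos (Λ (s, 2 * Real.pi)).im := by
      by_contra! h4
      nlinarith [mul_nonneg_of_nonpos_of_nonpos
        (neg_nonpos.2 (Real.exp_pos (Λ (s, 2 * Real.pi)).re).le) h4]
    exact hcircle _ _ (by rw [Real.cos_zero]; nlinarith) (by rw [h2, Real.sin_zero])
  have hstart' : ∀ s, (Λ (s, 0)).im = (Λ (0, 0)).im := fun s =>
    Circle.isCoveringMap_exp.const_of_comp (g := fun s => (Λ (s, 0)).im) (by fun_prop)
      (fun a a' => by rw [hstart, hstart]) s 0
  have hend' : ∀ s, (Λ (s, 2 * Real.pi)).im = (Λ (0, 2 * Real.pi)).im := fun s =>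
    Circle.isCoveringMap_exp.const_of_comp (g := fun s => (Λ (s, 2 * Real.pi)).im) (by fun_prop)
      (fun a a' => by rw [hend, hend]) s 0
  obtain ⟨a, ha⟩ := Circle.exp_eq_exp.1 (hstart 0)
  obtain ⟨b, hb⟩ := Circle.exp_eq_exp.1 (hend 0)
  obtain ⟨z₁, -, hz₁⟩ := isCompact_univ.exists_isMaxOn univ_nonempty y.continuous.continuousOn
  obtain ⟨z₂, -, hz₂⟩ := isCompact_univ.exists_isMinOn univ_nonempty y.continuous.continuousOn
  obtain ⟨s₁, rfl⟩ := Circle.exp_surjective z₁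
  obtain ⟨s₂, rfl⟩ := Circle.exp_surjective z₂
  rcases le_or_gt b a with hab | hab
  · have hab' : (b : ℝ) ≤ a := by exact_mod_cast hab
    obtain ⟨τ, -, hτ⟩ := intermediate_value_Icc' (by linarith : (0 : ℝ) ≤ 2 * Real.pi)
      (f := fun τ => (Λ (s₁, τ)).im) (by fun_prop)
      (show Real.pi / 2 + a * (2 * Real.pi) ∈ _ by
        rw [hstart', hend', ha, hb]
        constructor <;> nlinarith)
    have h1 := him (s₁, τ)
    simp only at hτ
    rw [hτ, Real.sin_add_int_mul_two_pi, Real.sin_pi_div_two, mul_one] at h1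
    have h2 := hz₁ (mem_univ (Circle.exp (s₁ + τ)))
    simp only [mem_ofPred_eq] at h2
    linarith [Real.exp_pos (Λ (s₁, τ)).re]
  · have hab' : (a : ℝ) + 1 ≤ b := by exact_mod_cast hab
    obtain ⟨τ, -, hτ⟩ := intermediate_value_Icc (by linarith : (0 : ℝ) ≤ 2 * Real.pi)
      (f := fun τ => (Λ (s₂, τ)).im) (by fun_prop)
      (show -(Real.pi / 2) + (a + 1 : ℤ) * (2 * Real.pi) ∈ _ by
        rw [hstart', hend', ha, hb]
        push_cast
        constructor <;> nlinarith)
    have h1 := him (s₂, τ)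
    simp only at hτ
    rw [hτ, Real.sin_add_int_mul_two_pi, Real.sin_neg, Real.sin_pi_div_two] at h1
    have h2 := hz₂ (mem_univ (Circle.exp (s₂ + τ)))
    simp only [mem_ofPred_eq] at h2
    linarith [Real.exp_pos (Λ (s₂, τ)).re]

theorem natAbs_lt_two_of_injective {n : ℤ} {h y : C(Circle, ℝ)}
    (hinj : Function.Injective fun z : Circle => (z ^ n * Circle.exp (h z), y z)) :
    n.natAbs < 2 := by
  have h1 := lt_two_of_injective hinj
  have h2 := lt_two_of_injective (n := -n) (h := ⟨fun z => h z⁻¹, by fun_prop⟩)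
    (y := ⟨fun z => y z⁻¹, by fun_prop⟩) (by
      simpa [Function.comp_def] using hinj.comp inv_injective)
  omega

end Winding

section Separation

theorem mem_sphere_prod_iff {p : ℂ × ℝ} : p ∈ Metric.sphere (0 : ℂ × ℝ) 1 ↔
    ‖p.1‖ = 1 ∧ |p.2| ≤ 1 ∨ ‖p.1‖ ≤ 1 ∧ |p.2| = 1 := by
  rw [mem_sphere_zero_iff_norm, Prod.norm_def, Real.norm_eq_abs]
  constructor
  · intro h
    rcases max_choice ‖p.1‖ |p.2| with h' | h'
    · exact Or.inl ⟨h'.symm.trans h, h ▸ le_max_right _ _⟩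
    · exact Or.inr ⟨h ▸ le_max_left _ _, h'.symm.trans h⟩
  · rintro (⟨h, h'⟩ | ⟨h, h'⟩)
    · rw [h]; exact max_eq_left h'
    · rw [h']; exact max_eq_right h

theorem mem_closedBall_prod_iff {p : ℂ × ℝ} : p ∈ Metric.closedBall (0 : ℂ × ℝ) 1 ↔
    ‖p.1‖ ≤ 1 ∧ |p.2| ≤ 1 := by
  rw [mem_closedBall_zero_iff, Prod.norm_def, Real.norm_eq_abs, max_le_iff]

/-- A disc in a solid cylinder whose boundary winds once around the side meets every path from the
bottom to the top. -/
theorem exists_disc_eq_path {μ : ℂ → ℂ × ℝ} (hμ : Continuous μ)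
    (hμm : ∀ d ∈ Metric.closedBall (0 : ℂ) 1, (μ d).2 ∈ Ioo (0 : ℝ) 1) (h : C(Circle, ℝ))
    (hbd : ∀ z : Circle, (μ z).1 = z * Circle.exp (h z)) {p : ℝ → ℂ × ℝ} (hp : Continuous p)
    (hp1 : ∀ t, ‖(p t).1‖ ≤ 1) (hbot : (p (-1)).2 ≤ 0) (htop : 1 ≤ (p 1).2) :
    ∃ d ∈ Metric.closedBall (0 : ℂ) 1, ∃ t ∈ Icc (-1 : ℝ) 1, μ d = p t := by
  by_contra! hne
  have hcirc : IsClosedEmbedding fun z : Circle => (z : ℂ) :=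
    (by fun_prop : Continuous fun z : Circle => (z : ℂ)).isClosedEmbedding Circle.coe_injective
  obtain ⟨k, hk⟩ := ContinuousMap.exists_extension hcirc h
  have hk' : ∀ z : Circle, k z = h z := fun z => DFunLike.congr_fun hk z
  have hbd' : ∀ d : ℂ, ‖d‖ = 1 → (μ d).1 = d * Circle.exp (k d) := by
    intro d hd
    obtain ⟨z, rfl⟩ : ∃ z : Circle, (z : ℂ) = d := ⟨⟨d, mem_sphere_zero_iff_norm.2 hd⟩, rfl⟩
    rw [hk', hbd]
  have h0 : ExtendsNonvanishing fun u : ℂ × ℝ => μ u.1 - p u.2 :=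
    .of_continuousOn (by fun_prop) fun u hu => by
      rw [mem_closedBall_prod_iff] at hu
      exact sub_ne_zero.2 (hne _ (by simpa using hu.1) _ (abs_le.1 hu.2))
  have h1 : ExtendsNonvanishing fun u : ℂ × ℝ => ((u.1 * Circle.exp (k u.1), -u.2) : ℂ × ℝ) := by
    refine h0.linear_homotopy (by fun_prop) (by fun_prop) ?_
    rintro s ⟨hs0, hs1⟩ ⟨d, t⟩ hu h0
    have hz : (1 - s) * ((μ d).2 - (p t).2) + s * -t = 0 := congrArg Prod.snd h0
    rcases mem_sphere_prod_iff.1 hu with ⟨hd, ht⟩ | ⟨hd, ht⟩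
    · have hxy : ((1 - s : ℝ) : ℂ) * ((μ d).1 - (p t).1) + (s : ℝ) * (d * Circle.exp (k d)) = 0 := by
        simpa using congrArg Prod.fst h0
      rcases hs0.eq_or_lt with hs | hs
      · subst hs
        simp only at h0
        refine hne d (by simpa using hd.le) t (abs_le.1 ht) (sub_eq_zero.1 ?_)
        simpa using h0
      · rw [hbd' d hd] at hxy
        have h2 : d * Circle.exp (k d) = ((1 - s : ℝ) : ℂ) * (p t).1 := by
          push_cast at hxy ⊢
          linear_combination hxy
        have h3 := congrArg norm h2
        rw [norm_mul, norm_mul, hd, Circle.norm_coe, Complex.norm_real,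
          Real.norm_of_nonneg (by linarith)] at h3
        nlinarith [hp1 t, norm_nonneg (p t).1]
    · have hd' := hμm d (by simpa using hd)
      rcases (abs_eq zero_le_one).1 ht with ht | ht
      · simp only at ht
        subst ht
        rcases hs0.eq_or_lt with hs | hs
        · subst hs; linarith [hd'.2]
        · nlinarith [hd'.2]
      · simp only at ht
        subst ht
        rcases hs0.eq_or_lt with hs | hs
        · subst hs; linarith [hd'.1]
        · nlinarith [hd'.1]
  have h2 : ExtendsNonvanishing fun u : ℂ × ℝ => ((u.1, -u.2) : ℂ × ℝ) := by
    refine h1.homotopy (H := fun s u => ((u.1 * Circle.exp ((1 - s) * k u.1), -u.2) : ℂ × ℝ))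
      (by fun_prop) ?_ (fun u _ => by simp) (fun u _ => by simp)
    intro s _ u hu h0
    rw [Prod.mk_eq_zero, mul_eq_zero, or_iff_left (Circle.coe_ne_zero _), neg_eq_zero] at h0
    rcases mem_sphere_prod_iff.1 hu with ⟨hd, -⟩ | ⟨-, ht⟩
    · rw [h0.1] at hd; simp at hd
    · rw [h0.2] at ht; simp at ht
  refine ExtendsNonvanishing.not_id (E := ℂ × ℝ) ((h2.comp_left
    (T := fun u : ℂ × ℝ => ((u.1, -u.2) : ℂ × ℝ)) (by fun_prop) ?_).congr fun u _ => by simp)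
  rintro ⟨d, t⟩ h0
  simpa using h0

end Separation

section Partition

/-- A closed subset of a closed convex set which meets every path from `T` to `V` is the intersection
of two closed sets covering the convex set, one containing `T` and the other containing `V`. -/
theorem exists_isClosed_partition {E : Type*} [NormedAddCommGroup E] [NormedSpace ℝ E]
    {W S T V : Set E} (hW : Convex ℝ W) (hWc : IsClosed W) (hS : IsClosed S) (hSW : S ⊆ W)
    (hT : T ⊆ W \ S) (hV : V ⊆ W)
    (hTV : ∀ x ∈ T, ∀ y ∈ V, ¬ JoinedIn (W \ S) x y) :
    ∃ P N : Set E, IsClosed P ∧ IsClosed N ∧ P ∪ N = W ∧ P ∩ N = S ∧ T ⊆ P ∧ V ⊆ N := by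
  let P₀ : Set E := {y | ∃ x ∈ T, JoinedIn (W \ S) x y}
  have hP₀ : P₀ ⊆ W \ S := fun y ⟨x, _, hxy⟩ => hxy.target_mem
  have hstep : ∀ x ∈ W, x ∉ S → ∃ ε > 0, ∀ y ∈ W, dist y x < ε → (x ∈ P₀ ↔ y ∈ P₀) := by
    intro x hx hxS
    obtain ⟨ε, hε, hball⟩ := Metric.isOpen_iff.1 hS.isOpen_compl x hxS
    refine ⟨ε, hε, fun y hy hyx => ?_⟩
    have hxy : JoinedIn (W \ S) x y := by
      refine JoinedIn.of_segment_subset fun z hz => ⟨hW.segment_subset hx hy hz, hball ?_⟩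
      exact (convex_ball x ε).segment_subset (Metric.mem_ball_self hε) hyx hz
    exact ⟨fun ⟨a, ha, hax⟩ => ⟨a, ha, hax.trans hxy⟩,
      fun ⟨a, ha, hay⟩ => ⟨a, ha, hay.trans hxy.symm⟩⟩
  refine ⟨P₀ ∪ S, W \ P₀, ?_, ?_, ?_, ?_, ?_, ?_⟩
  · rw [← closure_subset_iff_isClosed, closure_union, hS.closure_eq]
    rintro x (hx | hx)
    · by_cases hxS : x ∈ S
      · exact Or.inr hxS
      have hxW : x ∈ W := hWc.closure_subset_iff.2 (fun y hy => (hP₀ hy).1) hx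
      obtain ⟨ε, hε, hiff⟩ := hstep x hxW hxS
      obtain ⟨y, hy, hxy⟩ := Metric.mem_closure_iff.1 hx ε hε
      exact Or.inl ((hiff y (hP₀ hy).1 (by rwa [dist_comm])).2 hy)
    · exact Or.inr hx
  · rw [← closure_subset_iff_isClosed]
    intro x hx
    have hxW : x ∈ W := hWc.closure_subset_iff.2 sdiff_subset hx
    refine ⟨hxW, fun hxP => ?_⟩
    obtain ⟨ε, hε, hiff⟩ := hstep x hxW (hP₀ hxP).2
    obtain ⟨y, hy, hxy⟩ := Metric.mem_closure_iff.1 hx ε hε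
    exact hy.2 ((hiff y hy.1 (by rwa [dist_comm])).1 hxP)
  · ext x
    constructor
    · rintro ((hx | hx) | hx)
      exacts [(hP₀ hx).1, hSW hx, hx.1]
    · intro hx
      by_cases hxP : x ∈ P₀
      exacts [Or.inl (Or.inl hxP), Or.inr ⟨hx, hxP⟩]
  · ext x
    constructor
    · rintro ⟨hx | hx, hx'⟩
      exacts [absurd hx hx'.2, hx]
    · exact fun hx => ⟨Or.inr hx, hSW hx, fun hxP => (hP₀ hxP).2 hx⟩
  · exact fun x hx => Or.inl ⟨x, hx, JoinedIn.refl (hT hx)⟩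
  · exact fun y hy => ⟨hV hy, fun ⟨x, hx, hxy⟩ => hTV x hx y hy hxy⟩

/-- A connected set avoiding `P ∩ N` which meets `P` lies in `P`. -/
theorem IsPreconnected.subset_of_isClosed_partition {E : Type*} [TopologicalSpace E]
    {P N Z : Set E} (hZ : IsPreconnected Z) (hP : IsClosed P) (hN : IsClosed N)
    (hZsub : Z ⊆ P ∪ N) (hdisj : Disjoint Z (P ∩ N)) (hmeet : (Z ∩ P).Nonempty) : Z ⊆ P := by
  intro z hz
  by_contra hzP
  obtain ⟨y, hyZ, hy⟩ := isPreconnected_closed_iff.1 hZ P N hP hN hZsub hmeet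
    ⟨z, hz, (hZsub hz).resolve_left hzP⟩
  exact disjoint_left.1 hdisj hyZ hy

/-- An arc which meets `P ∩ N` at most once and has its endpoints in `P` lies in `P`. -/
theorem forall_mem_of_isClosed_partition {E : Type*} [TopologicalSpace E] {P N : Set E}
    (hP : IsClosed P) (hN : IsClosed N) {e : unitInterval → E} (he : Continuous e)
    (hsub : ∀ t, e t ∈ P ∪ N) (h0 : e 0 ∈ P) (h1 : e 1 ∈ P)
    (honce : {t | e t ∈ P ∩ N}.Subsingleton) (t : unitInterval) : e t ∈ P := by
  by_cases ht : e t ∈ P ∩ N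
  · exact ht.1
  have key : ∀ J : Set unitInterval, IsPreconnected J → t ∈ J → (∀ s ∈ J, e s ∉ P ∩ N) →
      (∃ s ∈ J, e s ∈ P) → e t ∈ P := by
    rintro J hJ htJ havoid ⟨s, hs, hsP⟩
    refine (hJ.image e he.continuousOn).subset_of_isClosed_partition hP hN ?_ ?_
      ⟨e s, mem_image_of_mem e hs, hsP⟩ (mem_image_of_mem e htJ)
    · rintro _ ⟨s, -, rfl⟩
      exact hsub s
    · rw [disjoint_left]
      rintro _ ⟨s, hs, rfl⟩
      exact havoid s hs
  by_cases hleft : ∀ s ∈ Iic t, e s ∉ P ∩ N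
  · exact key (Iic t) ordConnected_Iic.isPreconnected self_mem_Iic hleft
      ⟨0, unitInterval.nonneg t, h0⟩
  · push Not at hleft
    obtain ⟨s, hst, hs⟩ := hleft
    refine key (Ici t) ordConnected_Ici.isPreconnected self_mem_Ici (fun s' hs' hs'm => ?_)
      ⟨1, unitInterval.le_one t, h1⟩
    have : s = t := le_antisymm hst ((honce hs hs'm) ▸ hs')
    exact ht (this ▸ hs)

end Partition

section Linking

/-- If `P ∩ N` is a disc, then `P ∪ N` retracts onto `P`. -/
theorem exists_retraction {P N : Set (ℂ × ℝ)} (hP : IsClosed P) (hN : IsClosed N)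
    (φ : ↥(P ∩ N) ≃ₜ ↥Disc2) :
    ∃ R : ℂ × ℝ → ℂ × ℝ, ContinuousOn R (P ∪ N) ∧ (∀ x ∈ P, R x = x) ∧ ∀ x ∈ N, R x ∈ P ∩ N := by
  classical
  have : TietzeExtension.{0, 0} ↥Disc2 := inferInstance
  have : TietzeExtension.{0, 0} ↥(P ∩ N) := .of_homeo φ
  obtain ⟨r, hr⟩ := (ContinuousMap.id ↥(P ∩ N)).exists_restrict_eq (hP.inter hN)
  have hr' : ∀ x (hx : x ∈ P ∩ N), r x = ⟨x, hx⟩ := fun x hx =>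
    DFunLike.congr_fun hr (⟨x, hx⟩ : ↥(P ∩ N))
  have hRP : ∀ x ∈ P, (if x ∈ P then x else r x : ℂ × ℝ) = x := fun x hx => if_pos hx
  have hRN : ∀ x ∈ N, (if x ∈ P then x else r x : ℂ × ℝ) = r x := fun x hx => by
    split_ifs with hxP
    · rw [hr' x ⟨hxP, hx⟩]
    · rfl
  refine ⟨fun x => if x ∈ P then x else r x, ?_, hRP, fun x hx => ?_⟩
  · exact (continuousOn_id.congr hRP).union_of_isClosed
      ((continuous_subtype_val.comp r.continuous).continuousOn.congr hRN) hP hN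
  · simp only [hRN x hx]
    exact (r x).2

/-- A path extended by vertical half-lines pointing down, and centred at `0`. -/
def extendDown (b : ℝ → ℂ × ℝ) (t : ℝ) : ℂ × ℝ := b (t + 1 / 2) - (0, max (|t| - 1 / 2) 0)

theorem extendDown_of_le {b : ℝ → ℂ × ℝ} {t : ℝ} (ht : |t| ≤ 1 / 2) :
    extendDown b t = b (t + 1 / 2) := by
  rw [extendDown, max_eq_right (by linarith)]
  simp

theorem extendDown_snd_neg {b : ℝ → ℂ × ℝ} (hb : ∀ t ∉ Ioo (0 : ℝ) 1, (b t).2 = 0) {t : ℝ}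
    (ht : 1 / 2 < |t|) : (extendDown b t).2 < 0 := by
  rw [extendDown, Prod.snd_sub, hb _ (fun h => ?_), max_eq_left (by linarith)]
  · simp only
    linarith
  · exact ht.not_gt (abs_lt.2 ⟨by linarith [h.1], by linarith [h.2]⟩)

theorem Continuous.extendDown {b : ℝ → ℂ × ℝ} (hb : Continuous b) : Continuous (extendDown b) := by
  unfold _root_.extendDown
  fun_prop

/-- Let `P ∪ N` be a convex set above the horizontal plane, with `P ∩ N` a disc. A closed curve
`j` in `P` and an arc `b` in `N` are unlinked if one of them is disjoint from `P ∩ N`. -/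
theorem extendsNonvanishing_of_partition {P N : Set (ℂ × ℝ)} (hP : IsClosed P) (hN : IsClosed N)
    (φ : ↥(P ∩ N) ≃ₜ ↥Disc2) (hconv : Convex ℝ (P ∪ N)) (hnonneg : ∀ x ∈ P ∪ N, 0 ≤ x.2)
    (hbot : ∀ x ∈ P ∪ N, x.2 = 0 → x ∈ N) {j : ℂ → ℂ × ℝ} (hj : Continuous j)
    (hjmem : ∀ d, j d ∈ P ∪ N) (hjP : ∀ d, ‖d‖ = 1 → j d ∈ P) {b : ℝ → ℂ × ℝ}
    (hb : Continuous b) (hbN : ∀ t, b t ∈ N) (hb0 : ∀ t ∉ Ioo (0 : ℝ) 1, (b t).2 = 0)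
    (hcase : (∀ t, b t ∉ P) ∨ ∀ d, ‖d‖ = 1 → j d ∉ N) :
    ExtendsNonvanishing fun u : ℂ × ℝ => j u.1 - extendDown b u.2 := by
  have hne : ∀ {x : ℂ × ℝ} {b' : ℝ → ℂ × ℝ}, x ∈ P ∪ N → (∀ t ∉ Ioo (0 : ℝ) 1, (b' t).2 = 0) →
      ∀ {t : ℝ}, (|t| ≤ 1 / 2 → x ≠ b' (t + 1 / 2)) → x - extendDown b' t ≠ 0 := by
    intro x b' hx hb' t ht
    rw [sub_ne_zero]
    rcases le_or_gt |t| (1 / 2) with h | h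
    · rw [extendDown_of_le h]
      exact ht h
    · exact fun hx' => absurd (hnonneg x hx) (not_le.2 (hx' ▸ extendDown_snd_neg hb' h))
  rcases hcase with hcase | hcase
  · obtain ⟨R, hR, hRP, hRN⟩ := exists_retraction hP hN φ
    have hRmem : ∀ x ∈ P ∪ N, R x ∈ P := by
      rintro x (hx | hx)
      · rwa [hRP x hx]
      · exact (hRN x hx).1
    have hRj : Continuous fun d => R (j d) := hR.comp_continuous hj hjmem
    have h0 : ∀ u : ℂ × ℝ, R (j u.1) - extendDown b u.2 ≠ 0 := fun u =>
      hne (Or.inl (hRmem _ (hjmem u.1))) hb0 fun _ h => hcase _ (h ▸ hRmem _ (hjmem u.1))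
    have hβ := hb.extendDown
    have hRjβ : Continuous fun u : ℂ × ℝ => R (j u.1) - extendDown b u.2 :=
      (hRj.comp continuous_fst).sub (hβ.comp continuous_snd)
    refine (ExtendsNonvanishing.of_continuousOn hRjβ.continuousOn fun u _ => h0 u).linear_homotopy
      hRjβ.continuousOn (by fun_prop) ?_
    rintro s ⟨hs0, hs1⟩ ⟨d, t⟩ hu
    rcases mem_sphere_prod_iff.1 hu with ⟨hd, -⟩ | ⟨-, ht⟩
    · have := h0 (d, t)
      simp only [hRP _ (hjP d hd)] at this ⊢
      rwa [← add_smul, sub_add_cancel, one_smul]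
    · intro h
      have h1 : (1 - s) * ((R (j d)).2 - (extendDown b t).2) +
        s * ((j d).2 - (extendDown b t).2) = 0 := congrArg Prod.snd h
      have h2 := extendDown_snd_neg hb0 (t := t) (by simp only at ht; rw [ht]; norm_num)
      have h3 := hnonneg _ (hjmem d)
      have h4 := hnonneg _ (Or.inl (hRmem _ (hjmem d)))
      nlinarith
  · obtain ⟨R, hR, hRN, hRP⟩ := exists_retraction hN hP
      ((Homeomorph.setCongr (inter_comm N P)).trans φ)
    rw [union_comm] at hR
    have hRmem : ∀ x ∈ P ∪ N, R x ∈ N := by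
      rintro x (hx | hx)
      · exact (hRP x hx).1
      · rwa [hRN x hx]
    let c : ℝ → ℝ → ℂ × ℝ := fun s t => (1 - s) • b t + s • b 0
    have hcmem : ∀ s ∈ Icc (0 : ℝ) 1, ∀ t, c s t ∈ P ∪ N := fun s hs t =>
      hconv (Or.inr (hbN t)) (Or.inr (hbN 0)) (by linarith [hs.2]) hs.1 (by ring)
    have hc0 : ∀ s ∈ Icc (0 : ℝ) 1, ∀ t ∉ Ioo (0 : ℝ) 1, (R (c s t)).2 = 0 := by
      intro s hs t ht
      have h1 : (c s t).2 = 0 := by simp [c, hb0 t ht, hb0 0 (by simp)]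
      rw [hRN _ (hbot _ (hcmem s hs t) h1), h1]
    have hRc : ContinuousOn (fun p : ℝ × ℝ => R (c p.1 p.2)) (Icc 0 1 ×ˢ univ) :=
      hR.comp (by fun_prop) fun p hp => hcmem p.1 hp.1 p.2
    have hb00 : (b 0).2 = 0 := hb0 0 (by simp)
    have hkey : ∀ s ∈ Icc (0 : ℝ) 1, ∀ u ∈ Metric.sphere (0 : ℂ × ℝ) 1,
        j u.1 - extendDown (fun t => R (c s t)) u.2 ≠ 0 := by
      rintro s hs ⟨d, t⟩ hu
      refine hne (hjmem d) (hc0 s hs) fun ht hjd => ?_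
      rcases mem_sphere_prod_iff.1 hu with ⟨hd, -⟩ | ⟨-, ht'⟩
      · exact hcase d hd (hjd ▸ hRmem _ (hcmem s hs _))
      · simp only at ht'
        rw [ht'] at ht
        norm_num at ht
    have hRc1 : ∀ t, R (c 1 t) = b 0 := fun t => by simp [c, hRN _ (hbN 0)]
    have hRc0 : ∀ t, R (c 0 t) = b t := fun t => by simp [c, hRN _ (hbN t)]
    have hβ : Continuous (extendDown fun _ => b 0) := continuous_const.extendDown
    have hlow : ExtendsNonvanishing fun u : ℂ × ℝ => j u.1 - extendDown (fun _ => b 0) u.2 := by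
      have hstart : ExtendsNonvanishing
          fun u : ℂ × ℝ => j u.1 - extendDown (fun _ => b 0) u.2 + (0, 1) := by
        refine .of_continuousOn (by fun_prop) fun u _ h => ?_
        have h1 : (j u.1).2 - ((b 0).2 - max (|u.2| - 1 / 2) 0) + 1 = 0 := congrArg Prod.snd h
        linarith [hnonneg _ (hjmem u.1), le_max_right (|u.2| - 1 / 2) 0]
      refine hstart.linear_homotopy (by fun_prop) (by fun_prop) ?_
      rintro s ⟨hs0, hs1⟩ ⟨d, t⟩ hu h
      have h1 : (1 - s) * ((j d).2 - ((b 0).2 - max (|t| - 1 / 2) 0) + 1) +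
        s * ((j d).2 - ((b 0).2 - max (|t| - 1 / 2) 0)) = 0 := congrArg Prod.snd h
      have h2 : s = 1 := by
        linarith [hnonneg _ (hjmem d), le_max_right (|t| - 1 / 2) 0]
      subst h2
      have h3 := hkey 1 ⟨zero_le_one, le_rfl⟩ (d, t) hu
      simp only [hRc1] at h3
      exact h3 (by simpa using h)
    refine hlow.homotopy (H := fun s u => j u.1 - extendDown (fun t => R (c (1 - s) t)) u.2)
      ?_ (fun s hs => hkey (1 - s) ⟨by linarith [hs.2], by linarith [hs.1]⟩) ?_ ?_
    · refine ContinuousOn.sub (by fun_prop) (ContinuousOn.sub ?_ (by fun_prop))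
      exact hRc.comp (f := fun p : ℝ × (ℂ × ℝ) => (1 - p.1, p.2.2 + 1 / 2)) (by fun_prop)
        fun p hp => ⟨⟨by linarith [hp.1.2], by linarith [hp.1.1]⟩, mem_univ _⟩
    · intro u _
      simp only [sub_zero, hRc1]
    · intro u _
      simp only [sub_self, hRc0]

end Linking

section Local

/-- A map of a ball with a single zero is essential on the boundary sphere if, in suitable local
coordinates near the zero, it is the difference of the inclusions of two complementary subspaces. -/
theorem not_extendsNonvanishing_of_local {E : Type*} [NormedAddCommGroup E] [NormedSpace ℝ E]
    [FiniteDimensional ℝ E] [Nontrivial E] {F K p p' θ : E → E} {q y : E} {r : ℝ}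
    (hF : ContinuousOn F (Metric.closedBall 0 1)) (hq : ‖q‖ < 1)
    (hF0 : ∀ x ∈ Metric.closedBall (0 : E) 1, F x = 0 → x = q) (hK : Continuous K)
    (hKq : ∀ u, K u = q ↔ u = 0) (hp : Continuous p) (hp' : Continuous p') (hp0 : p 0 = y)
    (hp0' : p' 0 = y) (hFK : ∀ u, F (K u) = p u - p' u) (hr : 0 < r)
    (hθ : ContinuousOn θ (Metric.closedBall y r)) (hinj : InjOn θ (Metric.closedBall y r))
    (L : E ≃L[ℝ] E) (hL : ∀ u, p u ∈ Metric.closedBall y r → p' u ∈ Metric.closedBall y r →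
      θ (p u) - θ (p' u) = L u) : ¬ ExtendsNonvanishing F := by
  intro hext
  have hr2 : 0 < r / 2 := by positivity
  obtain ⟨ε, hε, hball⟩ : ∃ ε > 0, ∀ u ∈ Metric.closedBall (0 : E) ε,
      K u ∈ Metric.closedBall 0 1 ∧ p u ∈ Metric.closedBall y (r / 2) ∧
        p' u ∈ Metric.closedBall y (r / 2) := by
    refine Metric.nhds_basis_closedBall.mem_iff.1 (Filter.Eventually.and ?_ (.and ?_ ?_))
    · refine hK.continuousAt.eventually_mem (Metric.closedBall_mem_nhds_of_mem ?_)
      rw [(hKq 0).2 rfl]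
      simpa using hq
    · exact hp.continuousAt.eventually_mem (hp0 ▸ Metric.closedBall_mem_nhds _ hr2)
    · exact hp'.continuousAt.eventually_mem (hp0' ▸ Metric.closedBall_mem_nhds _ hr2)
  have hmem : ∀ u ∈ Metric.closedBall (0 : E) 1, ε • u ∈ Metric.closedBall (0 : E) ε := by
    intro u hu
    rw [mem_closedBall_zero_iff] at hu ⊢
    rw [norm_smul, Real.norm_of_nonneg hε.le]
    nlinarith
  have hsph := Metric.sphere_subset_closedBall (x := (0 : E)) (ε := 1)
  have h1 := hext.comp_of_unique_zero (K := fun u => K (ε • u)) hF hq hF0 (by fun_prop)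
    (fun u hu => (hball _ (hmem u (hsph hu))).1) (fun u hu h => by
      rw [hKq, smul_eq_zero, or_iff_right hε.ne'] at h
      simp [h] at hu)
  refine ExtendsNonvanishing.not_sub_of_injOn (p := fun u => p (ε • u)) (p' := fun u => p' (ε • u))
    hr hθ hinj (by fun_prop) (by fun_prop) (fun u hu => (hball _ (hmem u hu)).2.1)
    (fun u hu => (hball _ (hmem u hu)).2.2)
    ((ContinuousLinearEquiv.smulLeft (Units.mk0 ε hε.ne')).trans L) ?_ (h1.congr fun u _ => hFK _)
  intro u hu
  have hle : Metric.closedBall y (r / 2) ⊆ Metric.closedBall y r :=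
    Metric.closedBall_subset_closedBall (by linarith)
  have h2 := hball _ (hmem u (hsph hu))
  rw [hL _ (hle h2.2.1) (hle h2.2.2)]
  rfl

end Local

section Coordinates

/-- The solid cylinder `B² × [0,1]`. -/
def cylinder : Set (ℂ × ℝ) := Disc2 ×ˢ Icc 0 1

theorem convex_cylinder : Convex ℝ cylinder := (convex_closedBall 0 1).prod (convex_Icc 0 1)

theorem isClosed_cylinder : IsClosed cylinder := Metric.isClosed_closedBall.prod isClosed_Icc

/-- The radial projection to the closed unit disc. -/
def discProj (d : ℂ) : ↥Disc2 :=
  ⟨ballRetract 1 d, by simpa using norm_ballRetract_le one_pos d⟩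

theorem continuous_discProj : Continuous discProj :=
  (continuous_ballRetract one_pos).subtype_mk _

theorem discProj_coe (d : ↥Disc2) : discProj d = d :=
  Subtype.ext (ballRetract_of_le one_pos (mem_closedBall_zero_iff.1 d.2))

namespace Chamber

variable (C : Chamber X)

/-- The coordinates of a point of a chamber in `ℂ × ℝ`. -/
def coord (x : ↥C.carrier) : ℂ × ℝ := ((C.homeo x).1, (C.homeo x).2)

/-- The point of the chamber with given coordinates. -/
def point (z : ℂ × ℝ) : ↥C.carrier :=
  C.homeo.symm (discProj z.1, projIcc 0 1 zero_le_one z.2)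

theorem continuous_coord : Continuous C.coord := by
  have := C.homeo.continuous
  unfold coord
  fun_prop

theorem continuous_point : Continuous C.point :=
  C.homeo.symm.continuous.comp ((continuous_discProj.comp continuous_fst).prodMk
    (continuous_projIcc.comp continuous_snd))

theorem coord_mem (x : ↥C.carrier) : C.coord x ∈ cylinder := ⟨(C.homeo x).1.2, (C.homeo x).2.2⟩

theorem point_coord (x : ↥C.carrier) : C.point (C.coord x) = x := by
  simp only [point, coord, discProj_coe, projIcc_val]
  exact C.homeo.symm_apply_apply x

theorem coord_point {z : ℂ × ℝ} (hz : z ∈ cylinder) : C.coord (C.point z) = z := by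
  simp only [point, coord, Homeomorph.apply_symm_apply]
  exact Prod.ext (congrArg Subtype.val (discProj_coe ⟨z.1, hz.1⟩))
    (congrArg Subtype.val (projIcc_of_mem zero_le_one hz.2))

theorem coord_injective : Function.Injective C.coord :=
  Function.LeftInverse.injective C.point_coord

theorem mem_image_preimage_iff {x : ↥C.carrier} {Q : Set (↥Disc2 × unitInterval)} :
    (x : X) ∈ Subtype.val '' (C.homeo ⁻¹' Q) ↔ C.homeo x ∈ Q := by
  rw [Subtype.val_injective.mem_set_image, mem_preimage]

theorem mem_top_iff {x : ↥C.carrier} : (x : X) ∈ C.top ↔ (C.coord x).2 = 1 :=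
  C.mem_image_preimage_iff.trans Subtype.ext_iff

theorem mem_bot_iff {x : ↥C.carrier} : (x : X) ∈ C.bot ↔ (C.coord x).2 = 0 :=
  C.mem_image_preimage_iff.trans Subtype.ext_iff

theorem mem_bdry_iff {x : ↥C.carrier} : (x : X) ∈ C.bdry ↔
    ‖(C.coord x).1‖ = 1 ∨ (C.coord x).2 = 0 ∨ (C.coord x).2 = 1 :=
  C.mem_image_preimage_iff.trans (or_congr Iff.rfl (or_congr Subtype.ext_iff Subtype.ext_iff))

theorem mem_sideAnnulus_iff {x : ↥C.carrier} : (x : X) ∈ C.sideAnnulus ↔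
    ‖(C.coord x).1‖ = 1 ∧ (C.coord x).2 ∈ Ioo (0 : ℝ) 1 := by
  have := (C.coord_mem x).2
  rw [sideAnnulus, mem_sdiff, mem_union, C.mem_top_iff, C.mem_bot_iff, C.mem_bdry_iff]
  constructor
  · rintro ⟨h, h'⟩
    push Not at h'
    exact ⟨by tauto, lt_of_le_of_ne this.1 (Ne.symm h'.2), lt_of_le_of_ne this.2 h'.1⟩
  · rintro ⟨h, h'⟩
    exact ⟨Or.inl h, not_or.2 ⟨h'.2.ne, h'.1.ne'⟩⟩

end Chamber

end Coordinates

namespace InteriorMeridionalDisc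

variable {C : Chamber X} (M : InteriorMeridionalDisc C)

/-- The coordinates of the points of a meridional disc. -/
def coord (m : ↥M.carrier) : ℂ × ℝ := C.coord ⟨m, (M.subset m.2).1⟩

theorem continuous_coord : Continuous M.coord :=
  C.continuous_coord.comp (continuous_subtype_val.subtype_mk _)

theorem coord_injective : Function.Injective M.coord := fun _ _ h =>
  Subtype.ext (Subtype.mk.inj (C.coord_injective h))

theorem coord_snd_mem (m : ↥M.carrier) : (M.coord m).2 ∈ Ioo (0 : ℝ) 1 := by
  have h1 := (M.subset m.2).2
  have h2 := (C.coord_mem ⟨m, (M.subset m.2).1⟩).2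
  rw [mem_union, not_or] at h1
  exact ⟨lt_of_le_of_ne h2.1 fun h => h1.2 (C.mem_bot_iff (x := ⟨m, (M.subset m.2).1⟩).2 h.symm),
    lt_of_le_of_ne h2.2 fun h => h1.1 (C.mem_top_iff (x := ⟨m, (M.subset m.2).1⟩).2 h)⟩

theorem mem_bdry_iff {m : ↥M.carrier} : (m : X) ∈ M.bdry ↔ ‖(M.homeo m : ℂ)‖ = 1 := by
  rw [M.bdry_spec, Subtype.val_injective.mem_set_image]
  rfl

theorem norm_coord_fst {m : ↥M.carrier} (hm : ‖(M.homeo m : ℂ)‖ = 1) : ‖(M.coord m).1‖ = 1 :=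
  (C.mem_sideAnnulus_iff (x := ⟨m, (M.subset m.2).1⟩)).1 (M.bdry_sub (M.mem_bdry_iff.2 hm)) |>.1

theorem bdry_subset_carrier : M.bdry ⊆ M.carrier := M.inter_bdry ▸ inter_subset_left

/-- If the angular coordinate lifts along the boundary of the disc, then this boundary is
null-homotopic. -/
theorem nullHomotopicIn_of_eq_exp (h : C(Circle, ℝ))
    (hh : ∀ (m : ↥M.carrier) (z : Circle), (M.homeo m : ℂ) = z → (M.coord m).1 = Circle.exp (h z)) :
    NullHomotopicIn M.bdry C.sideAnnulus := by
  let incl : ↥M.bdry → ↥M.carrier := inclusion M.bdry_subset_carrier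
  have hincl : Continuous incl := continuous_inclusion _
  let ζ : ↥M.bdry → Circle := fun x =>
    ⟨M.homeo (incl x), mem_sphere_zero_iff_norm.2 (M.mem_bdry_iff.1 x.2)⟩
  have hζ : Continuous ζ :=
    ((continuous_subtype_val.comp M.homeo.continuous).comp hincl).subtype_mk _
  let G : unitInterval × ↥M.bdry → ℂ × ℝ := fun p =>
    (Circle.exp ((1 - p.1) * h (ζ p.2)), (1 - p.1) * (M.coord (incl p.2)).2 + p.1 * (1 / 2))
  have hcoord := M.continuous_coord
  have hG : Continuous G := by fun_prop
  have hG2 : ∀ p, (G p).2 ∈ Ioo (0 : ℝ) 1 := fun p =>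
    (convex_Ioo 0 1) (M.coord_snd_mem _) (show (1 / 2 : ℝ) ∈ Ioo (0 : ℝ) 1 by norm_num)
      (by linarith [p.1.2.2]) p.1.2.1 (by ring)
  have hG1 : ∀ p, ‖(G p).1‖ = 1 := fun p => Circle.norm_coe _
  have hGmem : ∀ p, G p ∈ cylinder := fun p =>
    ⟨by simpa using (hG1 p).le, Ioo_subset_Icc_self (hG2 p)⟩
  have hGside : ∀ p, (C.point (G p) : X) ∈ C.sideAnnulus := fun p => by
    rw [C.mem_sideAnnulus_iff, C.coord_point (hGmem p)]
    exact ⟨hG1 p, hG2 p⟩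
  have h1 : ((1, 1 / 2) : ℂ × ℝ) ∈ cylinder := by
    refine ⟨?_, ?_⟩ <;> norm_num
  refine ⟨M.bdry_sub, ⟨C.point (1, 1 / 2), ?_⟩, ⟨⟨⟨fun p => ⟨C.point (G p), hGside p⟩, ?_⟩, ?_, ?_⟩⟩⟩
  · rw [C.mem_sideAnnulus_iff, C.coord_point h1]
    norm_num
  · exact (continuous_subtype_val.comp (C.continuous_point.comp hG)).subtype_mk _
  · intro x
    refine Subtype.ext ?_
    have hx : G (0, x) = M.coord (incl x) := by
      refine Prod.ext ?_ ?_
      · rw [hh (incl x) (ζ x) rfl]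
        simp [G]
      · simp [G]
    simp only [hx]
    exact congrArg Subtype.val (C.point_coord _)
  · intro x
    refine Subtype.ext ?_
    simp [G]

/-- A meridional disc has a parametrization whose boundary winds once around the side of the
chamber. -/
theorem exists_parametrization : ∃ (μ : ℂ → ℂ × ℝ) (h : C(Circle, ℝ)), Continuous μ ∧
    (∀ d, μ d ∈ range M.coord) ∧ ∀ z : Circle, (μ z).1 = z * Circle.exp (h z) := by
  let μ : ℂ → ℂ × ℝ := fun d => M.coord (M.homeo.symm (discProj d))
  have hμ : Continuous μ :=
    M.continuous_coord.comp (M.homeo.symm.continuous.comp continuous_discProj)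
  have hdisc : ∀ z : Circle, (z : ℂ) ∈ Disc2 := fun z =>
    mem_closedBall_zero_iff.2 (Circle.norm_coe z).le
  have hproj : ∀ z : Circle, (discProj z : ℂ) = z := fun z =>
    congrArg Subtype.val (discProj_coe ⟨z, hdisc z⟩)
  have hnorm : ∀ z : Circle, ‖(μ z).1‖ = 1 := fun z => M.norm_coord_fst (by
    rw [Homeomorph.apply_symm_apply, hproj, Circle.norm_coe])
  obtain ⟨n, h, hnh⟩ := exists_zpow_mul_exp
    ⟨fun z => ⟨(μ z).1, mem_sphere_zero_iff_norm.2 (hnorm z)⟩, by fun_prop⟩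
  have hnh' : ∀ z : Circle, (μ z).1 = ((z ^ n * Circle.exp (h z) : Circle) : ℂ) := fun z =>
    congrArg Subtype.val (hnh z)
  have hn := natAbs_lt_two_of_injective (n := n) (h := h) (y := ⟨fun z => (μ z).2, by fun_prop⟩) (by
    intro z z' hzz'
    simp only [ContinuousMap.coe_mk, Prod.mk.injEq] at hzz'
    have h1 : μ z = μ z' := Prod.ext (by rw [hnh', hnh', hzz'.1]) hzz'.2
    have h2 := M.homeo.symm.injective (M.coord_injective h1)
    exact Circle.coe_injective (by rw [← hproj z, h2, hproj]))
  obtain rfl | rfl | rfl : n = 0 ∨ n = 1 ∨ n = -1 := by omega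
  · refine absurd (M.nullHomotopicIn_of_eq_exp h fun m z hmz => ?_) M.essential
    have h1 : μ z = M.coord m := by
      simp only [μ, ← hmz, discProj_coe, Homeomorph.symm_apply_apply]
    rw [← h1, hnh', zpow_zero, one_mul]
  · exact ⟨μ, h, hμ, fun d => mem_range_self _, fun z => by rw [hnh', zpow_one, Circle.coe_mul]⟩
  · refine ⟨fun d => μ (starRingEnd ℂ d), ⟨fun z => h z⁻¹, by fun_prop⟩, by fun_prop,
      fun d => mem_range_self _, fun z => ?_⟩
    change (μ (starRingEnd ℂ (z : ℂ))).1 = z * Circle.exp (h z⁻¹)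
    rw [← Circle.coe_inv_eq_conj, hnh']
    simp

theorem isClosed_range_coord : IsClosed (range M.coord) := by
  have : CompactSpace ↥M.carrier := M.homeo.symm.compactSpace
  exact (isCompact_range M.continuous_coord).isClosed

/-- A meridional disc cuts the chamber into a part containing the top and a part containing the
bottom. -/
theorem exists_partition : ∃ P N : Set (ℂ × ℝ), IsClosed P ∧ IsClosed N ∧ P ∪ N = cylinder ∧
    P ∩ N = range M.coord ∧ (∀ z ∈ cylinder, z.2 = 1 → z ∈ P) ∧
    ∀ z ∈ cylinder, z.2 = 0 → z ∈ N := by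
  obtain ⟨μ, h, hμ, hμM, hbd⟩ := M.exists_parametrization
  have hM : ∀ z ∈ range M.coord, z.2 ∈ Ioo (0 : ℝ) 1 := by
    rintro _ ⟨m, rfl⟩
    exact M.coord_snd_mem m
  obtain ⟨P, N, hP, hN, hPN, hPN', hT, hV⟩ := exists_isClosed_partition convex_cylinder
    isClosed_cylinder M.isClosed_range_coord (range_subset_iff.2 fun m => C.coord_mem _)
    (T := {z ∈ cylinder | z.2 = 1}) (V := {z ∈ cylinder | z.2 = 0})
    (fun z hz => ⟨hz.1, fun hzM => (hM z hzM).2.ne hz.2⟩) (fun z hz => hz.1) (by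
      rintro x hx y hy ⟨γ, hγ⟩
      obtain ⟨d, -, t, -, hdt⟩ := exists_disc_eq_path hμ (fun d _ => hM _ (hμM d)) h hbd
        (p := fun t => γ.extend ((1 - t) / 2)) (by fun_prop)
        (fun t => by
          obtain ⟨s, hs⟩ : γ.extend ((1 - t) / 2) ∈ range γ := by
            rw [← γ.extend_range]; exact mem_range_self _
          simpa [← hs] using (hγ s).1.1)
        (by norm_num; exact hy.2.le) (by norm_num; exact hx.2.ge)
      obtain ⟨s, hs⟩ : γ.extend ((1 - t) / 2) ∈ range γ := by
        rw [← γ.extend_range]; exact mem_range_self _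
      exact (hγ s).2 (hs ▸ hdt ▸ hμM d))
  exact ⟨P, N, hP, hN, hPN, hPN', fun z hz h1 => hT ⟨hz, h1⟩, fun z hz h0 => hV ⟨hz, h0⟩⟩

/-- The image of a meridional disc in coordinates is a disc. -/
def homeoRange : ↥(range M.coord) ≃ₜ ↥Disc2 :=
  haveI : CompactSpace ↥M.carrier := M.homeo.symm.compactSpace
  (M.continuous_coord.isClosedEmbedding M.coord_injective).isEmbedding.toHomeomorph.symm.trans
    M.homeo

end InteriorMeridionalDisc

section Chart

/-- Euclidean three-space as a product of the complex plane and a line. -/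
def euclideanHomeoProd : EuclideanSpace ℝ (Fin 3) ≃ₜ ℂ × ℝ where
  toFun v := (⟨v 0, v 1⟩, v 2)
  invFun p := !₂[p.1.re, p.1.im, p.2]
  left_inv v := by
    ext i
    fin_cases i <;> rfl
  right_inv p := rfl
  continuous_toFun := by
    have : (fun v : EuclideanSpace ℝ (Fin 3) => ((⟨v 0, v 1⟩, v 2) : ℂ × ℝ)) =
        fun v => (Complex.equivRealProdCLM.symm (v 0, v 1), v 2) := rfl
    rw [this]
    fun_prop
  continuous_invFun := by
    refine (PiLp.continuous_toLp 2 _).comp (continuous_pi fun i => ?_)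
    fin_cases i
    · exact Complex.continuous_re.comp continuous_fst
    · exact Complex.continuous_im.comp continuous_fst
    · exact continuous_snd

theorem TransverseAt.exists_chart {D L : Set X} {x : X} (h : TransverseAt D L x) (hxD : x ∈ D)
    (hxL : x ∈ L) : ∃ (U : Set X) (φ : ↥U ≃ₜ ℂ × ℝ), IsOpen U ∧
      (φ.symm 0 : X) = x ∧ (∀ d, (φ.symm (d, 0) : X) ∈ D) ∧ ∀ w, (φ.symm (0, w) : X) ∈ L := by
  obtain ⟨U, φ, hU, hxU, hD, hL⟩ := h
  have hDsymm : ∀ v : EuclideanSpace ℝ (Fin 3), v 2 = 0 → (φ.symm v : X) ∈ D := by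
    intro v hv
    obtain ⟨y, hy, rfl⟩ : v ∈ φ '' {y : ↥U | (y : X) ∈ D} := hD ▸ hv
    simpa using hy
  have hLsymm : ∀ v : EuclideanSpace ℝ (Fin 3), v 0 = 0 ∧ v 1 = 0 → (φ.symm v : X) ∈ L := by
    intro v hv
    obtain ⟨y, hy, rfl⟩ : v ∈ φ '' {y : ↥U | (y : X) ∈ L} := hL ▸ hv
    simpa using hy
  have h2 : φ ⟨x, hxU⟩ ∈ {v : EuclideanSpace ℝ (Fin 3) | v 2 = 0} := hD ▸ mem_image_of_mem φ hxD
  have h01 : φ ⟨x, hxU⟩ ∈ {v : EuclideanSpace ℝ (Fin 3) | v 0 = 0 ∧ v 1 = 0} :=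
    hL ▸ mem_image_of_mem φ hxL
  have hx : (φ.trans euclideanHomeoProd) ⟨x, hxU⟩ = 0 :=
    Prod.ext (Complex.ext h01.1 h01.2) h2
  refine ⟨U, φ.trans euclideanHomeoProd, hU, ?_, fun d => hDsymm _ rfl, fun w => hLsymm _ ⟨rfl, rfl⟩⟩
  rw [← hx, Homeomorph.symm_apply_apply]

theorem Continuous.mem_Ioo_of_injective {f : ℝ → ℝ} {a b : ℝ} (hf : Continuous f)
    (hinj : Function.Injective f) (hmem : ∀ t, f t ∈ Icc a b) (t : ℝ) : f t ∈ Ioo a b := by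
  rcases hf.strictMono_of_inj hinj with h | h
  · exact ⟨(hmem (t - 1)).1.trans_lt (h (by linarith)), (h (by linarith)).trans_le (hmem (t + 1)).2⟩
  · exact ⟨(hmem (t + 1)).1.trans_lt (h (by linarith)), (h (by linarith)).trans_le (hmem (t - 1)).2⟩

end Chart

namespace Chamber

variable (C : Chamber X) {B D : Set X}

/-- The coordinates along a disc in a chamber, extended radially to the plane. -/
def paramDisc (hD : D ⊆ C.carrier) (e : ↥D ≃ₜ ↥Disc2) (d : ℂ) : ℂ × ℝ :=
  C.coord (inclusion hD (e.symm (discProj d)))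

/-- The coordinates along an arc in a chamber, extended to be constant beyond the endpoints. -/
def paramArc (hB : B ⊆ C.carrier) (e : unitInterval ≃ₜ ↥B) (t : ℝ) : ℂ × ℝ :=
  C.coord (inclusion hB (e (projIcc 0 1 zero_le_one t)))

variable {C}

theorem continuous_paramDisc (hD : D ⊆ C.carrier) (e : ↥D ≃ₜ ↥Disc2) :
    Continuous (C.paramDisc hD e) :=
  C.continuous_coord.comp ((continuous_inclusion hD).comp
    (e.symm.continuous.comp continuous_discProj))

theorem continuous_paramArc (hB : B ⊆ C.carrier) (e : unitInterval ≃ₜ ↥B) :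
    Continuous (C.paramArc hB e) :=
  C.continuous_coord.comp ((continuous_inclusion hB).comp (e.continuous.comp continuous_projIcc))

theorem paramDisc_apply (hD : D ⊆ C.carrier) (e : ↥D ≃ₜ ↥Disc2) (m : ↥D) :
    C.paramDisc hD e (e m) = C.coord (inclusion hD m) := by
  rw [paramDisc, discProj_coe, Homeomorph.symm_apply_apply]

theorem paramArc_symm_apply (hB : B ⊆ C.carrier) (e : unitInterval ≃ₜ ↥B) (m : ↥B) :
    C.paramArc hB e (e.symm m) = C.coord (inclusion hB m) := by
  rw [paramArc, projIcc_val, Homeomorph.apply_symm_apply]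

theorem paramArc_snd_of_notMem (hB : B ⊆ C.carrier) (e : unitInterval ≃ₜ ↥B)
    (h0 : (e 0 : X) ∈ C.bot) (h1 : (e 1 : X) ∈ C.bot) {t : ℝ} (ht : t ∉ Ioo (0 : ℝ) 1) :
    (C.paramArc hB e t).2 = 0 := by
  rcases le_or_gt t 0 with h | h
  · rw [paramArc, projIcc_of_le_left _ h]
    exact (C.mem_bot_iff (x := inclusion hB (e 0))).1 h0
  · have h : 1 ≤ t := not_lt.1 fun h' => ht ⟨h, h'⟩
    rw [paramArc, projIcc_of_right_le _ h]
    exact (C.mem_bot_iff (x := inclusion hB (e 1))).1 h1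

/-- The difference of an arc and a disc meeting it transversally in a single interior point has an
essential zero. -/
theorem not_extendsNonvanishing_paramDisc_sub (hB : B ⊆ C.carrier) (eB : unitInterval ≃ₜ ↥B)
    (h0 : (eB 0 : X) ∈ C.bot) (h1 : (eB 1 : X) ∈ C.bot)
    (h_interior : ∀ t : unitInterval, t ≠ 0 → t ≠ 1 → (eB t : X) ∈ C.carrier \ C.bdry)
    (hD : D ⊆ C.carrier) (eD : ↥D ≃ₜ ↥Disc2) {x : X} (hBD : B ∩ D = {x})
    (htrans : TransverseAt D B x) (hx : ∀ m : ↥D, ‖(eD m : ℂ)‖ = 1 → (m : X) ≠ x) :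
    ¬ ExtendsNonvanishing
      fun u : ℂ × ℝ => C.paramDisc hD eD u.1 - extendDown (C.paramArc hB eB) u.2 := by
  have hxBD : x ∈ B ∩ D := hBD ▸ mem_singleton x
  obtain ⟨U, φ, hU, hφx, hφD, hφB⟩ := htrans.exists_chart hxBD.2 hxBD.1
  have hφ := φ.symm.continuous
  let mD : ℂ → ↥D := fun d => ⟨φ.symm (d, 0), hφD d⟩
  let mB : ℝ → ↥B := fun w => ⟨φ.symm (0, w), hφB w⟩
  have hmD : Continuous mD := by fun_prop
  have hmB : Continuous mB := by fun_prop
  have hmD_inj : Function.Injective mD := fun d d' h => by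
    simpa using φ.symm.injective (Subtype.ext (Subtype.mk.inj h))
  have hmB_inj : Function.Injective mB := fun w w' h => by
    simpa using φ.symm.injective (Subtype.ext (Subtype.mk.inj h))
  have hmD0 : (mD 0 : X) = x := hφx
  have hmB0 : (mB 0 : X) = x := hφx
  let t : ℝ → ℝ := fun w => eB.symm (mB w)
  have htc : Continuous t := continuous_subtype_val.comp (eB.symm.continuous.comp hmB)
  have htinj : Function.Injective t :=
    Subtype.val_injective.comp (eB.symm.injective.comp hmB_inj)
  have htmem : ∀ w, t w ∈ Icc (0 : ℝ) 1 := fun w => (eB.symm (mB w)).2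
  have ht0 := htc.mem_Ioo_of_injective htinj htmem 0
  have hxint : x ∉ C.bdry := by
    have := (h_interior (eB.symm (mB 0)) (fun h => ht0.1.ne' (congrArg Subtype.val h))
      (fun h => ht0.2.ne (congrArg Subtype.val h))).2
    rwa [Homeomorph.apply_symm_apply, hmB0] at this
  let xC : ↥C.carrier := ⟨x, hB hxBD.1⟩
  have hyint : ‖(C.coord xC).1‖ < 1 ∧ (C.coord xC).2 ∈ Ioo (0 : ℝ) 1 := by
    have h := C.mem_bdry_iff (x := xC).not.1 hxint
    push Not at h
    have h' := C.coord_mem xC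
    exact ⟨lt_of_le_of_ne (mem_closedBall_zero_iff.1 h'.1) h.1,
      lt_of_le_of_ne h'.2.1 (Ne.symm h.2.1), lt_of_le_of_ne h'.2.2 h.2.2⟩
  -- A ball around the intersection point inside both the chamber and the chart.
  obtain ⟨r, hr, hball⟩ : ∃ r > 0, Metric.closedBall (C.coord xC) r ⊆
      {z | z ∈ cylinder ∧ (C.point z : X) ∈ U} := by
    refine Metric.nhds_basis_closedBall.mem_iff.1 (Filter.inter_mem ?_ ?_)
    · refine prod_mem_nhds (Metric.closedBall_mem_nhds_of_mem ?_) (Icc_mem_nhds hyint.2.1 hyint.2.2)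
      exact mem_ball_zero_iff.2 hyint.1
    · refine (continuous_subtype_val.comp C.continuous_point).continuousAt.preimage_mem_nhds ?_
      refine hU.mem_nhds ?_
      simp only [Function.comp_apply, C.point_coord, xC]
      exact hφx ▸ (φ.symm 0).2
  classical
  let θ : ℂ × ℝ → ℂ × ℝ := fun z => if h : (C.point z : X) ∈ U then φ ⟨_, h⟩ else 0
  have hθ : ∀ u (hu : (φ.symm u : X) ∈ C.carrier), θ (C.coord ⟨φ.symm u, hu⟩) = u := by
    intro u hu
    have h : (C.point (C.coord ⟨φ.symm u, hu⟩) : X) = φ.symm u := by rw [C.point_coord]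
    have h' : (C.point (C.coord ⟨φ.symm u, hu⟩) : X) ∈ U := by
      rw [h]
      exact (φ.symm u).2
    simp only [θ, dif_pos h']
    rw [show (⟨_, h'⟩ : ↥U) = φ.symm u from Subtype.ext h, Homeomorph.apply_symm_apply]
  have hK2 : ∀ w, |t w - 1 / 2| ≤ 1 / 2 := fun w =>
    abs_le.2 ⟨by linarith [(htmem w).1], by linarith [(htmem w).2]⟩
  refine not_extendsNonvanishing_of_local
    (q := ((eD (mD 0) : ℂ), t 0 - 1 / 2)) (K := fun u => ((eD (mD u.1) : ℂ), t u.2 - 1 / 2))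
    (p := fun u => C.coord (inclusion hD (mD u.1)))
    (p' := fun u => C.coord (inclusion hB (mB u.2))) (y := C.coord xC) (r := r) (θ := θ)
    (L := (ContinuousLinearEquiv.refl ℝ ℂ).prodCongr (ContinuousLinearEquiv.neg ℝ))
    ?_ ?_ ?_ ?_ ?_ ?_ ?_ ?_ ?_ ?_ hr ?_ ?_ ?_
  · exact (((continuous_paramDisc hD eD).comp continuous_fst).sub
      ((continuous_paramArc hB eB).extendDown.comp continuous_snd)).continuousOn
  · rw [Prod.norm_def, max_lt_iff]
    refine ⟨lt_of_le_of_ne (mem_closedBall_zero_iff.1 (eD (mD 0)).2) fun h => hx _ h hmD0, ?_⟩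
    rw [Real.norm_eq_abs]
    linarith [hK2 0]
  · rintro ⟨d, s⟩ hds hzero
    have hd : d ∈ Disc2 := by
      rw [mem_closedBall_prod_iff] at hds
      simpa using hds.1
    rw [sub_eq_zero] at hzero
    obtain ⟨m, hm⟩ : ∃ m : ↥D, (eD m : ℂ) = d := ⟨eD.symm ⟨d, hd⟩, by simp⟩
    have hs : |s| ≤ 1 / 2 := by
      by_contra! hs
      have h2 := extendDown_snd_neg (fun t ht => paramArc_snd_of_notMem hB eB h0 h1 ht) hs
      have h3 : 0 ≤ (C.paramDisc hD eD d).2 := (C.coord_mem _).2.1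
      rw [hzero] at h3
      exact h3.not_gt h2
    rw [extendDown_of_le hs] at hzero
    have hs' := abs_le.1 hs
    have hsI : s + 1 / 2 ∈ Icc (0 : ℝ) 1 := ⟨by linarith, by linarith⟩
    simp only at hzero
    rw [← hm, paramDisc_apply, paramArc, projIcc_of_mem _ hsI] at hzero
    have hmX : (m : X) = eB ⟨s + 1 / 2, hsI⟩ :=
      Subtype.mk.inj (C.coord_injective hzero)
    have hmx : (m : X) = x := by
      have : (m : X) ∈ B ∩ D := ⟨hmX ▸ (eB _).2, m.2⟩
      rwa [hBD] at this
    have hm0 : m = mD 0 := Subtype.ext (hmx.trans hmD0.symm)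
    have hs0 : eB.symm (mB 0) = ⟨s + 1 / 2, hsI⟩ := by
      rw [Homeomorph.symm_apply_eq]
      exact Subtype.ext (hmB0.trans (hmx.symm.trans hmX))
    refine Prod.ext ?_ ?_
    · rw [← hm, hm0]
    · change s = t 0 - 1 / 2
      rw [show t 0 = s + 1 / 2 from congrArg Subtype.val hs0]
      ring
  · have := eD.continuous
    fun_prop
  · rintro ⟨d, w⟩
    constructor
    · intro h
      rw [Prod.mk.injEq] at h
      exact Prod.ext (hmD_inj (eD.injective (Subtype.ext h.1))) (htinj (sub_left_injective h.2))
    · intro h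
      obtain ⟨rfl, rfl⟩ := Prod.mk.inj h
      rfl
  · exact C.continuous_coord.comp ((continuous_inclusion hD).comp (hmD.comp continuous_fst))
  · exact C.continuous_coord.comp ((continuous_inclusion hB).comp (hmB.comp continuous_snd))
  · exact congrArg C.coord (Subtype.ext hmD0)
  · exact congrArg C.coord (Subtype.ext hmB0)
  · intro u
    simp only [paramDisc_apply, extendDown_of_le (hK2 u.2), sub_add_cancel]
    exact congrArg _ (paramArc_symm_apply hB eB _)
  · rw [continuousOn_iff_continuous_domRestrict]
    have : (Metric.closedBall (C.coord xC) r).domRestrict θ =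
        fun z : ↥(Metric.closedBall (C.coord xC) r) => φ ⟨C.point z, (hball z.2).2⟩ := by
      ext1 z
      exact dif_pos (hball z.2).2
    rw [this]
    exact φ.continuous.comp ((continuous_subtype_val.comp
      (C.continuous_point.comp continuous_subtype_val)).subtype_mk _)
  · intro z hz z' hz' h
    simp only [θ, dif_pos (hball hz).2, dif_pos (hball hz').2] at h
    have h' := congrArg C.coord (Subtype.ext (Subtype.mk.inj (φ.injective h)))
    rwa [C.coord_point (hball hz).1, C.coord_point (hball hz').1] at h'
  · intro u _ _
    have e1 : θ (C.coord (inclusion hD (mD u.1))) = (u.1, 0) := hθ _ _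
    have e2 : θ (C.coord (inclusion hB (mB u.2))) = (0, u.2) := hθ _ _
    rw [e1, e2]
    simp

/-- Every interior meridional disc meets a pair of clasped arcs at least twice. -/
theorem two_le_encard_inter (M : InteriorMeridionalDisc C) {A α : Set X} (hA : A ⊆ C.carrier)
    (eA : unitInterval ≃ₜ ↥A) (hA0 : (eA 0 : X) ∈ C.top) (hA1 : (eA 1 : X) ∈ C.top)
    (hB : B ⊆ C.carrier) (eB : unitInterval ≃ₜ ↥B)
    (h0 : (eB 0 : X) ∈ C.bot) (h1 : (eB 1 : X) ∈ C.bot)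
    (h_interior : ∀ t : unitInterval, t ≠ 0 → t ≠ 1 → (eB t : X) ∈ C.carrier \ C.bdry)
    (hAB : Disjoint A B) (hD : D ⊆ C.carrier) (eD : ↥D ≃ₜ ↥Disc2) (hα : α ⊆ C.top)
    (hbdry : Subtype.val '' (eD ⁻¹' {p | ‖(p : ℂ)‖ = 1}) = A ∪ α)
    (htrans : MeetsTransversally D B) (hBD : (B ∩ D).encard = 1) :
    2 ≤ ((A ∪ B) ∩ M.carrier).encard := by
  by_contra! hlt
  have hsub : ((A ∪ B) ∩ M.carrier).Subsingleton :=
    encard_le_one_iff_subsingleton.1 (Order.le_of_lt_add_one hlt)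
  obtain ⟨P, N, hP, hN, hPN, hPN', hT, hV⟩ := M.exists_partition
  have hmemM : ∀ m : ↥C.carrier, C.coord m ∈ P → C.coord m ∈ N → (m : X) ∈ M.carrier := by
    intro m h h'
    obtain ⟨m', hm'⟩ : C.coord m ∈ range M.coord := hPN' ▸ ⟨h, h'⟩
    exact Subtype.mk.inj (C.coord_injective hm') ▸ m'.2
  have hcyl : ∀ m : ↥C.carrier, C.coord m ∈ P ∪ N := fun m => hPN ▸ C.coord_mem m
  have htop : ∀ m : ↥C.carrier, (m : X) ∈ C.top → C.coord m ∈ P := fun m hm =>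
    hT _ (C.coord_mem m) (C.mem_top_iff.1 hm)
  have hbot : ∀ m : ↥C.carrier, (m : X) ∈ C.bot → C.coord m ∈ N := fun m hm =>
    hV _ (C.coord_mem m) (C.mem_bot_iff.1 hm)
  have hAP : ∀ s, C.coord (inclusion hA (eA s)) ∈ P := by
    refine forall_mem_of_isClosed_partition hP hN
      (C.continuous_coord.comp ((continuous_inclusion hA).comp eA.continuous))
      (fun s => hcyl _) (htop _ hA0) (htop _ hA1) fun s hs s' hs' => eA.injective (Subtype.ext ?_)
    exact hsub ⟨Or.inl (eA s).2, hmemM _ hs.1 hs.2⟩ ⟨Or.inl (eA s').2, hmemM _ hs'.1 hs'.2⟩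
  have hBN : ∀ s, C.coord (inclusion hB (eB s)) ∈ N := by
    refine forall_mem_of_isClosed_partition hN hP
      (C.continuous_coord.comp ((continuous_inclusion hB).comp eB.continuous))
      (fun s => (hcyl _).symm) (hbot _ h0) (hbot _ h1)
      fun s hs s' hs' => eB.injective (Subtype.ext ?_)
    exact hsub ⟨Or.inr (eB s).2, hmemM _ hs.2 hs.1⟩ ⟨Or.inr (eB s').2, hmemM _ hs'.2 hs'.1⟩
  have hAP' : ∀ m : ↥C.carrier, (m : X) ∈ A → C.coord m ∈ P := fun m hm => by
    simpa [inclusion] using hAP (eA.symm ⟨m, hm⟩)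
  have hdisc : ∀ d : ℂ, ‖d‖ = 1 → ((eD.symm (discProj d) : ↥D) : X) ∈ A ∪ α := by
    intro d hd
    rw [← hbdry]
    refine mem_image_of_mem _ ?_
    rw [mem_preimage, Homeomorph.apply_symm_apply]
    change ‖(discProj d : ℂ)‖ = 1
    rw [discProj_coe ⟨d, mem_closedBall_zero_iff.2 hd.le⟩, hd]
  obtain ⟨x, hx⟩ := encard_eq_one.1 hBD
  have hxBD : x ∈ B ∩ D := hx ▸ mem_singleton x
  refine not_extendsNonvanishing_paramDisc_sub hB eB h0 h1 h_interior hD eD hx (htrans x hxBD.symm) ?_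
    (extendsNonvanishing_of_partition hP hN ((Homeomorph.setCongr hPN').trans M.homeoRange)
      (hPN ▸ convex_cylinder) (fun z hz => ?_) (fun z hz => hV z (hPN ▸ hz))
      (continuous_paramDisc hD eD) (fun d => hcyl _) (fun d hd => ?_) (continuous_paramArc hB eB)
      (fun t => hBN _) (fun t ht => paramArc_snd_of_notMem hB eB h0 h1 ht) ?_)
  · rintro m hm rfl
    have hmem : (m : X) ∈ A ∪ α := hbdry ▸ mem_image_of_mem _ hm
    rcases hmem with h | h
    · exact hAB.notMem_of_mem_left h hxBD.1
    · obtain ⟨s, hs⟩ := eB.surjective ⟨m, hxBD.1⟩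
      have hsm : (eB s : X) = m := congrArg Subtype.val hs
      have htop1 := (C.mem_top_iff (x := inclusion hB (eB s))).1 (by
        change (eB s : X) ∈ C.top
        rw [hsm]
        exact hα h)
      have hnot : (eB s : X) ∉ C.bot := fun h' => by
        have := (C.mem_bot_iff (x := inclusion hB (eB s))).1 h'
        linarith
      refine (h_interior s (fun h' => hnot (h' ▸ h0)) (fun h' => hnot (h' ▸ h1))).2 ?_
      exact (C.mem_bdry_iff (x := inclusion hB (eB s))).2 (Or.inr (Or.inr htop1))
  · rw [hPN] at hz
    exact hz.2.1
  · exact (hdisc d hd).elim (fun h => hAP' (inclusion hD _) h) fun h => htop _ (hα h)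
  · by_cases hBM : ∃ s, (eB s : X) ∈ M.carrier
    · obtain ⟨s, hs⟩ := hBM
      refine Or.inr fun d hd hdN => ?_
      rcases hdisc d hd with h | h
      · have hdM := hmemM (inclusion hD _) (hAP' _ h) hdN
        have := hsub ⟨Or.inl h, hdM⟩ ⟨Or.inr (eB s).2, hs⟩
        exact hAB.notMem_of_mem_left h (this ▸ (eB s).2)
      · have hdM := hmemM (inclusion hD _) (htop _ (hα h)) hdN
        exact (M.subset hdM).2 (Or.inl (hα h))
    · exact Or.inl fun t ht => hBM ⟨_, hmemM _ ht (hBN _)⟩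

end Chamber

/-- The clasp criterion (as in the Whitehead clasp): let `A` be an arc with both
endpoints `a₀, a₁` in `C_t`, `B` an arc with both endpoints in `C_b`, disjoint
from `A`, both meeting `∂C` only in their endpoints. Suppose there is an
embedded disc `D ⊆ C` with boundary `A ∪ α`, where `α` is an arc in `C_t`
joining `a₀` to `a₁`, and `B` meets `D` transversally in exactly one point.
Then every interior meridional disc of `C` meets `A ∪ B`; hence
`N(A ∪ B, C) ≥ 2`, and if some interior meridional disc meets `A ∪ B`
transversally in exactly `2` points then `N(A ∪ B, C) = 2`. -/
theorem clasp_criterion {X : Type} [TopologicalSpace X]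
    (C : Chamber X) (A B : Set X) (a0 a1 : X)
    (hAsub : A ⊆ C.carrier) (eA : unitInterval ≃ₜ ↥A)
    (hA0 : ((eA 0 : ↥A) : X) = a0) (hA1 : ((eA 1 : ↥A) : X) = a1)
    (ha0 : a0 ∈ C.top) (ha1 : a1 ∈ C.top)
    (hAint : ∀ t : unitInterval, t ≠ 0 → t ≠ 1 →
      ((eA t : ↥A) : X) ∈ C.carrier \ C.bdry)
    (hB : IsArcWithEndpointsIn B C C.bot)
    (hAB : Disjoint A B)
    (D : Set X) (hDsub : D ⊆ C.carrier) (eD : ↥D ≃ₜ ↥Disc2)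
    (α : Set X) (hαtop : α ⊆ C.top)
    (eα : unitInterval ≃ₜ ↥α)
    (hα0 : ((eα 0 : ↥α) : X) = a0) (hα1 : ((eα 1 : ↥α) : X) = a1)
    (hDbdry : Subtype.val '' (eD ⁻¹' {p | ‖(p : ℂ)‖ = 1}) = A ∪ α)
    (hBDtrans : MeetsTransversally D B) (hBD1 : (B ∩ D).encard = 1) :
    (∀ M : InteriorMeridionalDisc C, ((A ∪ B) ∩ M.carrier).Nonempty) ∧
    2 ≤ chamberIndex (A ∪ B) C ∧
    ((∃ M : InteriorMeridionalDisc C, MeetsTransversally M.carrier (A ∪ B) ∧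
        ((A ∪ B) ∩ M.carrier).encard = 2) → chamberIndex (A ∪ B) C = 2) := by
  obtain ⟨hBsub, eB, hB0, hB1, hBint⟩ := hB
  have key : ∀ M : InteriorMeridionalDisc C, 2 ≤ ((A ∪ B) ∩ M.carrier).encard := fun M =>
    C.two_le_encard_inter M hAsub eA (hA0 ▸ ha0) (hA1 ▸ ha1) hBsub eB hB0 hB1 hBint hAB hDsub eD
      hαtop hDbdry hBDtrans hBD1
  have hle : 2 ≤ chamberIndex (A ∪ B) C := le_iInf key
  refine ⟨fun M => encard_pos.1 (two_pos.trans_le (key M)), hle, ?_⟩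
  rintro ⟨M, -, hM⟩
  exact le_antisymm ((iInf_le _ M).trans hM.le) hle
end
end

section
/- Let L be a link in the interior of a solid torus T and let D₀, …, D_{m−1} be a cyclically ordered pairwise disjoint collection of meridional discs in T, each intersecting L transversally in exactly n points, with chambers Cᵢ bounded by consecutive discs. Assume N(L ∩ Cᵢ, Cᵢ) ≥ n for each i. Then any meridional disc K of T that is disjoint from ⋃ᵢ Dᵢ satisfies |L ∩ K| ≥ n. -/
open Set Topology unitInterval

noncomputable section

variable {X : Type} [TopologicalSpace X] {Y : Type} [TopologicalSpace Y]

/-- A property of maps that does not change between maps which are pointwise related by an open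
relation is a homotopy invariant. -/
theorem homotopy_invariant_of_open_relation {S Z : Type*} [TopologicalSpace S] [CompactSpace S]
    [TopologicalSpace Z] (P : (S → Z) → Prop) (R : Z → Z → Prop)
    (hR : IsOpen {p : Z × Z | R p.1 p.2})
    (hstep : ∀ g₀ g₁ : S → Z, Continuous g₀ → Continuous g₁ → (∀ s, R (g₀ s) (g₁ s)) →
      (P g₀ ↔ P g₁))
    (H : S × I → Z) (hH : Continuous H) (hrefl : ∀ q, R (H q) (H q)) :
    P (fun s => H (s, 0)) ↔ P (fun s => H (s, 1)) := by
  have hloc : IsLocallyConstant (fun t : I => P (fun s => H (s, t))) := by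
    rw [IsLocallyConstant.iff_eventually_eq]
    intro t₀
    have h1 : ∀ᶠ t in 𝓝 t₀, ∀ s ∈ (univ : Set S), R (H (s, t)) (H (s, t₀)) := by
      apply isCompact_univ.eventually_forall_of_forall_eventually
      intro s _
      have hc : Continuous fun q : I × S => (H (q.2, q.1), H (q.2, t₀)) := by fun_prop
      exact (hR.preimage hc).mem_nhds (hrefl (s, t₀))
    filter_upwards [h1] with t ht
    exact propext (hstep _ _ (by fun_prop) (by fun_prop) fun s => ht s (mem_univ s))
  exact (hloc.apply_eq_of_preconnectedSpace 0 1).to_iff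

/-! ### Continuous logarithms -/

/-- `e` has a continuous logarithm. -/
def HasContinuousLog {S : Type*} [TopologicalSpace S] (e : S → ℂ) : Prop :=
  ∃ l : S → ℂ, Continuous l ∧ ∀ s, Complex.exp (l s) = e s

theorem HasContinuousLog.of_norm_sub_lt {S : Type*} [TopologicalSpace S] {e₀ e₁ : S → ℂ}
    (h₀ : Continuous e₀) (h₁ : Continuous e₁)
    (h : ∀ s, ‖e₀ s - e₁ s‖ < ‖e₀ s‖ + ‖e₁ s‖) (hl : HasContinuousLog e₀) :
    HasContinuousLog e₁ := by
  obtain ⟨l, hl, hle⟩ := hl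
  have hne₀ : ∀ s, e₀ s ≠ 0 := fun s h0 => by
    have := h s
    simp [h0] at this
  have hne₁ : ∀ s, e₁ s ≠ 0 := fun s h0 => by
    have := h s
    simp [h0] at this
  have hslit : ∀ s, e₁ s / e₀ s ∈ Complex.slitPlane := by
    intro s
    rw [Complex.mem_slitPlane_iff_not_le_zero]
    intro hle0
    obtain ⟨hre, him⟩ := Complex.le_def.1 hle0
    simp only [Complex.zero_re, Complex.zero_im] at hre him
    set q := e₁ s / e₀ s with hq
    have he : e₁ s = (q.re : ℂ) * e₀ s := by
      have : (q.re : ℂ) = q := Complex.ext (by simp) (by simp [him])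
      rw [this, hq, div_mul_cancel₀ _ (hne₀ s)]
    have h3 := h s
    have h4 : e₀ s - (q.re : ℂ) * e₀ s = ((1 - q.re : ℝ) : ℂ) * e₀ s := by push_cast; ring
    rw [he, h4, norm_mul, norm_mul, Complex.norm_real, Complex.norm_real, Real.norm_eq_abs,
      Real.norm_eq_abs, abs_of_nonpos hre, abs_of_nonneg (by linarith)] at h3
    linarith
  refine ⟨fun s => l s + Complex.log (e₁ s / e₀ s),
    hl.add ((h₁.div h₀ hne₀).clog hslit), fun s => ?_⟩
  rw [Complex.exp_add, hle, Complex.exp_log (div_ne_zero (hne₁ s) (hne₀ s)),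
    mul_div_cancel₀ _ (hne₀ s)]

theorem hasContinuousLog_homotopy {S : Type*} [TopologicalSpace S] [CompactSpace S]
    (H : S × I → ℂ) (hH : Continuous H) (hne : ∀ q, H q ≠ 0) :
    HasContinuousLog (fun s => H (s, 0)) ↔ HasContinuousLog (fun s => H (s, 1)) := by
  refine homotopy_invariant_of_open_relation HasContinuousLog
    (fun x y => ‖x - y‖ < ‖x‖ + ‖y‖) (isOpen_lt (by fun_prop) (by fun_prop)) ?_ H hH ?_
  · intro g₀ g₁ h₀ h₁ h
    exact ⟨fun hl => hl.of_norm_sub_lt h₀ h₁ h, fun hl => hl.of_norm_sub_lt h₁ h₀ fun s => by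
      rw [norm_sub_rev, add_comm]; exact h s⟩
  · intro q
    have := norm_pos_iff.2 (hne q)
    simp only [sub_self, norm_zero]
    positivity

theorem hasContinuousLog_const {S : Type*} [TopologicalSpace S] {c : ℂ} (hc : c ≠ 0) :
    HasContinuousLog (fun _ : S => c) :=
  ⟨fun _ => Complex.log c, continuous_const, fun _ => Complex.exp_log hc⟩

theorem not_hasContinuousLog_of_odd {e : Circle → ℂ}
    (hodd : ∀ s, e (-s) = -e s) (hne : ∀ s, e s ≠ 0) : ¬ HasContinuousLog e := by
  rintro ⟨l, hl, hle⟩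
  have hexp : ∀ s, Complex.exp (l (-s) - l s) = -1 := by
    intro s
    rw [Complex.exp_sub, hle, hle, hodd, neg_div, div_self (hne s)]
  have hc : Continuous fun s : Circle => (l (-s) - l s).im :=
    Complex.continuous_im.comp ((hl.comp continuous_neg).sub hl)
  have hsign : (l (-1) - l 1).im = -(l (- -1) - l (-1)).im := by simp
  have hzero : ∃ s : Circle, (l (-s) - l s).im = 0 := by
    rcases le_total (l (-1) - l 1).im 0 with h | h
    · exact mem_range_of_exists_le_of_exists_ge hc ⟨1, h⟩ ⟨-1, by linarith⟩
    · exact mem_range_of_exists_le_of_exists_ge hc ⟨-1, by linarith⟩ ⟨1, h⟩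
  obtain ⟨s, hs⟩ := hzero
  have h1 := congrArg Complex.re (hexp s)
  rw [Complex.exp_re, hs, Real.cos_zero, mul_one, Complex.neg_re, Complex.one_re] at h1
  linarith [Real.exp_pos (l (-s) - l s).re]

/-! ### Spinors -/

/-- The Euclidean norm on `ℂ × ℝ`. -/
noncomputable def euclNorm (w : ℂ × ℝ) : ℝ := √(‖w.1‖ ^ 2 + w.2 ^ 2)

theorem continuous_euclNorm : Continuous euclNorm := by
  unfold euclNorm
  fun_prop

theorem euclNorm_pos {w : ℂ × ℝ} (hw : w ≠ 0) : 0 < euclNorm w := by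
  refine Real.sqrt_pos.2 ?_
  by_cases h : w.1 = 0
  · have h2 : w.2 ≠ 0 := fun h2 => hw (Prod.ext h h2)
    positivity
  · have := norm_pos_iff.2 h
    positivity

theorem euclNorm_neg (w : ℂ × ℝ) : euclNorm (-w) = euclNorm w := by
  simp [euclNorm]

theorem euclNorm_nonneg (w : ℂ × ℝ) : 0 ≤ euclNorm w := Real.sqrt_nonneg _

theorem euclNorm_sq (w : ℂ × ℝ) :
    ((euclNorm w : ℝ) : ℂ) ^ 2 = w.1 * (starRingEnd ℂ) w.1 + (w.2 : ℂ) ^ 2 := by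
  rw [Complex.mul_conj, Complex.normSq_eq_norm_sq, ← Complex.ofReal_pow, euclNorm,
    Real.sq_sqrt (by positivity)]
  push_cast
  ring

/-- The vector `(a, b)` of `ℂ²` is an eigenvector, for the eigenvalue `r`, of the Hermitian matrix
`[[t, conj z], [z, -t]]` attached to `w = (z, t)`. -/
def IsSpinorAt (w : ℂ × ℝ) (r : ℝ) (a b : ℂ) : Prop :=
  (w.2 : ℂ) * a + (starRingEnd ℂ) w.1 * b = r * a ∧ w.1 * a - (w.2 : ℂ) * b = r * b

theorem IsSpinorAt.sq_eq {w : ℂ × ℝ} {r : ℝ} {a b : ℂ} (h : IsSpinorAt w r a b)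
    (hab : a ≠ 0 ∨ b ≠ 0) : r ^ 2 = euclNorm w ^ 2 := by
  obtain ⟨h1, h2⟩ := h
  have e := euclNorm_sq w
  have ha : ((r : ℂ) ^ 2 - (euclNorm w : ℂ) ^ 2) * a = 0 := by
    rw [e]
    linear_combination (-(r : ℂ) - w.2) * h1 - (starRingEnd ℂ) w.1 * h2
  have hb : ((r : ℂ) ^ 2 - (euclNorm w : ℂ) ^ 2) * b = 0 := by
    rw [e]
    linear_combination (-w.1) * h1 + ((w.2 : ℂ) - r) * h2
  have hz : (r : ℂ) ^ 2 - (euclNorm w : ℂ) ^ 2 = 0 := by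
    rcases hab with h | h
    · exact (mul_eq_zero.1 ha).resolve_right h
    · exact (mul_eq_zero.1 hb).resolve_right h
  exact_mod_cast sub_eq_zero.1 hz

/-- `g` lifts to a continuous nowhere vanishing field of eigenvectors. -/
def HasSpinor {S : Type*} [TopologicalSpace S] (g : S → ℂ × ℝ) : Prop :=
  ∃ a b : S → ℂ, Continuous a ∧ Continuous b ∧ (∀ s, a s ≠ 0 ∨ b s ≠ 0) ∧
    ∀ s, IsSpinorAt (g s) (euclNorm (g s)) (a s) (b s)

theorem HasSpinor.of_euclNorm_sub_lt {S : Type*} [TopologicalSpace S] {g₀ g₁ : S → ℂ × ℝ}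
    (h₁ : Continuous g₁)
    (h : ∀ s, euclNorm (g₀ s - g₁ s) < euclNorm (g₀ s) + euclNorm (g₁ s))
    (hs : HasSpinor g₀) : HasSpinor g₁ := by
  obtain ⟨a, b, ha, hb, hne, hab⟩ := hs
  have hr : Continuous fun s => euclNorm (g₁ s) := continuous_euclNorm.comp h₁
  refine ⟨fun s => ((g₁ s).2 : ℂ) * a s + (starRingEnd ℂ) (g₁ s).1 * b s + euclNorm (g₁ s) * a s,
    fun s => (g₁ s).1 * a s - ((g₁ s).2 : ℂ) * b s + euclNorm (g₁ s) * b s,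
    by fun_prop, by fun_prop, ?_, ?_⟩
  · intro s
    by_contra hcon
    push Not at hcon
    obtain ⟨c1, c2⟩ := hcon
    obtain ⟨e1, e2⟩ := hab s
    have hsp : IsSpinorAt (g₀ s - g₁ s) (euclNorm (g₀ s) + euclNorm (g₁ s)) (a s) (b s) := by
      constructor
      · simp only [Prod.fst_sub, Prod.snd_sub, map_sub]
        push_cast
        linear_combination e1 - c1
      · simp only [Prod.fst_sub, Prod.snd_sub]
        push_cast
        linear_combination e2 - c2
    have := hsp.sq_eq (hne s)
    have h3 := h s
    have h4 := euclNorm_nonneg (g₀ s - g₁ s)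
    nlinarith
  · intro s
    have e := euclNorm_sq (g₁ s)
    constructor
    · linear_combination (-a s) * e
    · linear_combination (-b s) * e

theorem hasSpinor_iff_of_euclNorm_sub_lt {S : Type*} [TopologicalSpace S] {g₀ g₁ : S → ℂ × ℝ}
    (h₀ : Continuous g₀) (h₁ : Continuous g₁)
    (h : ∀ s, euclNorm (g₀ s - g₁ s) < euclNorm (g₀ s) + euclNorm (g₁ s)) :
    HasSpinor g₀ ↔ HasSpinor g₁ :=
  ⟨fun hl => hl.of_euclNorm_sub_lt h₁ h, fun hl => hl.of_euclNorm_sub_lt h₀ fun s => by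
    rw [← neg_sub, euclNorm_neg, add_comm]; exact h s⟩

theorem isOpen_euclNorm_sub_lt :
    IsOpen {p : (ℂ × ℝ) × (ℂ × ℝ) | euclNorm (p.1 - p.2) < euclNorm p.1 + euclNorm p.2} :=
  isOpen_lt (continuous_euclNorm.comp (by fun_prop))
    ((continuous_euclNorm.comp (by fun_prop)).add (continuous_euclNorm.comp (by fun_prop)))

theorem euclNorm_sub_self_lt {w : ℂ × ℝ} (hw : w ≠ 0) :
    euclNorm (w - w) < euclNorm w + euclNorm w := by
  have := euclNorm_pos hw
  have h0 : euclNorm 0 = 0 := by simp [euclNorm]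
  rw [sub_self, h0]
  positivity

theorem hasSpinor_homotopy {S : Type*} [TopologicalSpace S] [CompactSpace S]
    (H : S × I → ℂ × ℝ) (hH : Continuous H) (hne : ∀ q, H q ≠ 0) :
    HasSpinor (fun s => H (s, 0)) ↔ HasSpinor (fun s => H (s, 1)) :=
  homotopy_invariant_of_open_relation HasSpinor
    (fun x y => euclNorm (x - y) < euclNorm x + euclNorm y) isOpen_euclNorm_sub_lt
    (fun _ _ h₀ h₁ h => hasSpinor_iff_of_euclNorm_sub_lt h₀ h₁ h) H hH
    fun q => euclNorm_sub_self_lt (hne q)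

theorem hasSpinor_const {S : Type*} [TopologicalSpace S] {w : ℂ × ℝ} (hw : w ≠ 0) :
    HasSpinor (fun _ : S => w) := by
  have e := euclNorm_sq w
  have hpos := euclNorm_pos hw
  by_cases h : w.2 + euclNorm w = 0
  · refine ⟨fun _ => (starRingEnd ℂ) w.1, fun _ => ((euclNorm w - w.2 : ℝ) : ℂ), continuous_const,
      continuous_const, fun _ => Or.inr ?_, fun _ => ⟨?_, ?_⟩⟩
    · exact Complex.ofReal_ne_zero.2 (by linarith : (0 : ℝ) < euclNorm w - w.2).ne'
    · push_cast
      ring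
    · push_cast
      linear_combination -e
  · refine ⟨fun _ => ((w.2 + euclNorm w : ℝ) : ℂ), fun _ => w.1, continuous_const,
      continuous_const, fun _ => Or.inl (Complex.ofReal_ne_zero.2 h), fun _ => ⟨?_, ?_⟩⟩
    · push_cast
      linear_combination -e
    · push_cast
      ring

/-- Eigenvectors for opposite nonzero eigenvalues are linearly independent. -/
theorem IsSpinorAt.det_ne_zero {w : ℂ × ℝ} {r : ℝ} {a b a' b' : ℂ} (hr : r ≠ 0)
    (h : IsSpinorAt w r a b) (h' : IsSpinorAt w (-r) a' b') (hab : a ≠ 0 ∨ b ≠ 0)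
    (hab' : a' ≠ 0 ∨ b' ≠ 0) : a' * b - a * b' ≠ 0 := by
  intro hdet
  obtain ⟨h1, h2⟩ := h
  obtain ⟨h3, h4⟩ := h'
  push_cast at h3 h4
  have hr' : (r : ℂ) ≠ 0 := by exact_mod_cast hr
  have key : ∀ x y : ℂ, (r : ℂ) * (x * y) = 0 → x = 0 ∨ y = 0 := fun x y hxy =>
    mul_eq_zero.1 ((mul_eq_zero.1 hxy).resolve_left hr')
  have k1 := key a a' (by
    linear_combination (-a' / 2) * h1 + (a / 2) * h3 + ((starRingEnd ℂ) w.1 / 2) * hdet)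
  have k2 := key b b' (by linear_combination (-b' / 2) * h2 + (b / 2) * h4 - (w.1 / 2) * hdet)
  have k3 := key a b' (by linear_combination (-b' / 2) * h1 + (b / 2) * h3 - ((w.2 + r) / 2) * hdet)
  have k4 := key b a' (by linear_combination (-b' / 2) * h1 + (b / 2) * h3 + ((r - w.2) / 2) * hdet)
  tauto

theorem not_hasSpinor_of_odd {g : Metric.sphere (0 : ℂ × ℝ) 1 → ℂ × ℝ}
    (hodd : ∀ s, g (-s) = -g s) (hne : ∀ s, g s ≠ 0) : ¬ HasSpinor g := by
  rintro ⟨a, b, ha, hb, hab, hsp⟩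
  set d : Metric.sphere (0 : ℂ × ℝ) 1 → ℂ := fun s => a (-s) * b s - a s * b (-s) with hd
  have hdc : Continuous d := by fun_prop
  have hdne : ∀ s, d s ≠ 0 := by
    intro s
    have h := hsp (-s)
    rw [hodd, euclNorm_neg] at h
    refine (hsp s).det_ne_zero (euclNorm_pos (hne s)).ne' ⟨?_, ?_⟩ (hab s) (hab (-s))
    · have := h.1
      simp only [Prod.fst_neg, Prod.snd_neg, map_neg] at this
      push_cast at this ⊢
      linear_combination -this
    · have := h.2
      simp only [Prod.fst_neg, Prod.snd_neg] at this
      push_cast at this ⊢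
      linear_combination -this
  have hdodd : ∀ s, d (-s) = -d s := fun s => by simp [hd]
  have hne0 : ∀ (s : Circle) (t : I), (((t : ℝ) : ℂ) * (s : ℂ), (1 - (t : ℝ))) ≠ (0 : ℂ × ℝ) := by
    intro s t h
    rw [Prod.mk_eq_zero] at h
    have : (t : ℝ) = 1 := by linarith [h.2]
    simp [this] at h
  let ψ : Circle × I → ℂ × ℝ := fun q => (((q.2 : ℝ) : ℂ) * (q.1 : ℂ), 1 - (q.2 : ℝ))
  have hψ : Continuous ψ := by fun_prop
  have hψ0 : ∀ q, ‖ψ q‖ ≠ 0 := fun q => norm_ne_zero_iff.2 (hne0 q.1 q.2)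
  let φ : Circle × I → Metric.sphere (0 : ℂ × ℝ) 1 := fun q => ⟨‖ψ q‖⁻¹ • ψ q, by
    rw [mem_sphere_zero_iff_norm, norm_smul, norm_inv, norm_norm, inv_mul_cancel₀ (hψ0 q)]⟩
  have hφ : Continuous φ := Continuous.subtype_mk ((hψ.norm.inv₀ hψ0).smul hψ) _
  have h := hasContinuousLog_homotopy (fun q => d (φ q)) (hdc.comp hφ) fun q => hdne _
  have h0 : (fun s => d (φ (s, 0))) = fun _ : Circle => d (φ (1, 0)) := by
    funext s
    simp [φ, ψ]
  rw [h0] at h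
  refine not_hasContinuousLog_of_odd (e := fun s => d (φ (s, 1))) (fun s => ?_) (fun s => hdne _)
    (h.1 (hasContinuousLog_const (hdne _)))
  rw [← hdodd]
  congr 1
  ext1
  simp [φ, ψ]

/-! ### Invariance of domain in dimension three -/

theorem image_closedBall_mem_nhds {f : ℂ × ℝ → ℂ × ℝ}
    (hf : ContinuousOn f (Metric.closedBall 0 1)) (hinj : InjOn f (Metric.closedBall 0 1)) :
    f '' Metric.closedBall 0 1 ∈ 𝓝 (f 0) := by
  by_contra hcon
  have hfreq : ∃ᶠ p in 𝓝 (f 0), p ∉ f '' Metric.closedBall 0 1 := fun h =>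
    hcon (by filter_upwards [h] with p hp using not_not.1 hp)
  have hmem : ∀ (s : Metric.sphere (0 : ℂ × ℝ) 1) (c : ℝ), |c| ≤ 1 →
      c • (s : ℂ × ℝ) ∈ Metric.closedBall (0 : ℂ × ℝ) 1 := by
    intro s c hc
    have := mem_sphere_zero_iff_norm.1 s.2
    rw [mem_closedBall_zero_iff, norm_smul, this, mul_one]
    exact hc
  have hs0 : ∀ s : Metric.sphere (0 : ℂ × ℝ) 1, (s : ℂ × ℝ) ≠ 0 := fun s h => by
    simpa [h] using mem_sphere_zero_iff_norm.1 s.2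
  have hfs : Continuous fun s : Metric.sphere (0 : ℂ × ℝ) 1 => f s :=
    hf.comp_continuous continuous_subtype_val fun s => Metric.sphere_subset_closedBall s.2
  have hne : ∀ s : Metric.sphere (0 : ℂ × ℝ) 1, f s - f 0 ≠ 0 := fun s h =>
    hs0 s (hinj (Metric.sphere_subset_closedBall s.2) (by simp) (sub_eq_zero.1 h))
  have hev : ∀ᶠ p in 𝓝 (f 0), ∀ s ∈ (univ : Set (Metric.sphere (0 : ℂ × ℝ) 1)),
      euclNorm ((f s - f 0) - (f s - p)) < euclNorm (f s - f 0) + euclNorm (f s - p) := by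
    apply isCompact_univ.eventually_forall_of_forall_eventually
    intro s _
    have hc : Continuous fun q : (ℂ × ℝ) × Metric.sphere (0 : ℂ × ℝ) 1 =>
        (f q.2 - f 0, f q.2 - q.1) :=
      ((hfs.comp continuous_snd).sub continuous_const).prodMk
        ((hfs.comp continuous_snd).sub continuous_fst)
    exact (isOpen_euclNorm_sub_lt.preimage hc).mem_nhds (euclNorm_sub_self_lt (hne s))
  obtain ⟨p, hp, hclose⟩ := (hfreq.and_eventually hev).exists
  have hcont : ∀ c : I → ℝ, Continuous c → (∀ t, |c t| ≤ 1) →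
      Continuous fun q : Metric.sphere (0 : ℂ × ℝ) 1 × I => f (c q.2 • (q.1 : ℂ × ℝ)) :=
    fun c hc hle => hf.comp_continuous
      ((hc.comp continuous_snd).smul (continuous_subtype_val.comp continuous_fst))
      fun q => hmem q.1 _ (hle q.2)
  have hspinor : HasSpinor fun s : Metric.sphere (0 : ℂ × ℝ) 1 => f s - f 0 := by
    refine (hasSpinor_iff_of_euclNorm_sub_lt
      (g₀ := fun s : Metric.sphere (0 : ℂ × ℝ) 1 => f s - f 0) (g₁ := fun s => f s - p) (hfs.sub continuous_const)
      (hfs.sub continuous_const) fun s => hclose s (mem_univ s)).2 ?_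
    have hle : ∀ t : I, |(t : ℝ)| ≤ 1 := fun t => by rw [abs_of_nonneg t.2.1]; exact t.2.2
    have h := hasSpinor_homotopy
      (fun q : Metric.sphere (0 : ℂ × ℝ) 1 × I => f ((q.2 : ℝ) • (q.1 : ℂ × ℝ)) - p)
      ((hcont (fun t => t) continuous_subtype_val hle).sub continuous_const)
      fun q hq => hp ⟨_, hmem q.1 _ (hle q.2), sub_eq_zero.1 hq⟩
    simp only [Icc.coe_zero, zero_smul, Icc.coe_one, one_smul] at h
    exact h.1 (hasSpinor_const fun h0 => hp ⟨0, by simp, sub_eq_zero.1 h0⟩)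
  have hle1 : ∀ t : I, |(1 + (t : ℝ))⁻¹| ≤ 1 := fun t => by
    have := t.2.1
    rw [abs_of_nonneg (by positivity)]
    exact inv_le_one_of_one_le₀ (by linarith)
  have hle2 : ∀ t : I, |(-((t : ℝ) * (1 + (t : ℝ))⁻¹))| ≤ 1 := fun t => by
    have h0 := t.2.1
    rw [abs_neg, abs_of_nonneg (by positivity), ← div_eq_mul_inv]
    exact (div_le_one (by positivity)).2 (by linarith)
  have hcinv : Continuous fun t : I => (1 + (t : ℝ))⁻¹ :=
    Continuous.inv₀ (by fun_prop) fun t => by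
      have := t.2.1
      positivity
  have hne' : ∀ q : Metric.sphere (0 : ℂ × ℝ) 1 × I, f ((1 + (q.2 : ℝ))⁻¹ • (q.1 : ℂ × ℝ)) -
      f ((-((q.2 : ℝ) * (1 + (q.2 : ℝ))⁻¹)) • (q.1 : ℂ × ℝ)) ≠ 0 := by
    intro q hq
    have h0 := q.2.2.1
    have e := hinj (hmem q.1 _ (hle1 q.2)) (hmem q.1 _ (hle2 q.2)) (sub_eq_zero.1 hq)
    have e2 := smul_left_injective ℝ (hs0 q.1) e
    have : (0 : ℝ) < (1 + (q.2 : ℝ))⁻¹ := by positivity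
    have : (0 : ℝ) ≤ (q.2 : ℝ) * (1 + (q.2 : ℝ))⁻¹ := by positivity
    linarith
  have h := hasSpinor_homotopy _ ((hcont _ hcinv hle1).sub
    (hcont (fun t => -((t : ℝ) * (1 + (t : ℝ))⁻¹)) (by fun_prop) hle2)) hne'
  simp only [Pi.sub_apply, Icc.coe_zero, add_zero, inv_one, one_smul, zero_mul, neg_zero,
    zero_smul] at h
  refine not_hasSpinor_of_odd (fun s => ?_) (fun s => hne' (s, 1)) (h.1 hspinor)
  simp

/-- Invariance of domain in dimension three. -/
theorem image_mem_nhds_of_injOn {f : ℂ × ℝ → ℂ × ℝ} {W : Set (ℂ × ℝ)} {a : ℂ × ℝ} (hW : W ∈ 𝓝 a)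
    (hf : ContinuousOn f W) (hinj : InjOn f W) : f '' W ∈ 𝓝 (f a) := by
  obtain ⟨r, hr, hball⟩ := Metric.nhds_basis_closedBall.mem_iff.1 hW
  have hmaps : MapsTo (fun x : ℂ × ℝ => a + r • x) (Metric.closedBall 0 1) W := by
    intro x hx
    refine hball ?_
    rw [mem_closedBall_zero_iff] at hx
    rw [mem_closedBall_iff_norm, add_sub_cancel_left, norm_smul, Real.norm_of_nonneg hr.le]
    exact mul_le_of_le_one_right hr.le hx
  have h := image_closedBall_mem_nhds (f := fun x => f (a + r • x))
    (hf.comp (by fun_prop) hmaps)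
    (hinj.comp ((add_right_injective a).comp (smul_right_injective _ hr.ne')).injOn hmaps)
  simp only [smul_zero, add_zero] at h
  refine Filter.mem_of_superset h ?_
  rintro _ ⟨x, hx, rfl⟩
  exact ⟨_, hmaps hx, rfl⟩

/-- Invariance of domain for maps into the three-manifold `ℂ × S¹`. -/
theorem image_mem_nhds_of_injOn_circle {f : ℂ × ℝ → ℂ × Circle} {W : Set (ℂ × ℝ)} {a : ℂ × ℝ}
    (hW : W ∈ 𝓝 a) (hf : ContinuousOn f W) (hinj : InjOn f W) : f '' W ∈ 𝓝 (f a) := by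
  let χ : ℂ × Circle → ℂ × ℝ := fun q => (q.1, Complex.arg ((q.2 / (f a).2 : Circle) : ℂ))
  have hχinj : Function.Injective χ := by
    intro p q hpq
    obtain ⟨h1, h2⟩ := Prod.mk.inj hpq
    exact Prod.ext h1 (div_left_injective (Circle.injective_arg h2))
  let O : Set (ℂ × Circle) := {q | ((q.2 / (f a).2 : Circle) : ℂ) ∈ Complex.slitPlane}
  have hdiv : Continuous fun q : ℂ × Circle => ((q.2 / (f a).2 : Circle) : ℂ) := by fun_prop
  have hO : IsOpen O := Complex.isOpen_slitPlane.preimage hdiv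
  have ha : f a ∈ O := by simp [O]
  have hχ : ContinuousOn χ O := fun q hq =>
    (continuous_fst.continuousAt.prodMk
      (ContinuousAt.comp (f := fun q : ℂ × Circle => ((q.2 / (f a).2 : Circle) : ℂ))
        (Complex.continuousAt_arg hq) hdiv.continuousAt)).continuousWithinAt
  have hfa : ContinuousAt f a := hf.continuousAt hW
  have hV : W ∩ f ⁻¹' O ∈ 𝓝 a := Filter.inter_mem hW (hfa (hO.mem_nhds ha))
  have h := image_mem_nhds_of_injOn (f := χ ∘ f) hV
    (hχ.comp (hf.mono inter_subset_left) fun x hx => hx.2)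
    (hχinj.injOn.comp (hinj.mono inter_subset_left) (mapsTo_univ _ _))
  refine Filter.mem_of_superset ((hχ.continuousAt (hO.mem_nhds ha)) h) ?_
  rintro q ⟨x, hx, hxq⟩
  exact ⟨x, hx.1, hχinj hxq⟩

theorem norm_fst_lt_one_of_mem_nhds {Z : Type*} [TopologicalSpace Z] {q : ℂ × Z}
    (h : {p : ℂ × Z | ‖p.1‖ ≤ 1} ∈ 𝓝 q) : ‖q.1‖ < 1 := by
  have h1 : {p : ℂ × Z | ‖p.1‖ ≤ 1} = Metric.closedBall (0 : ℂ) 1 ×ˢ univ := by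
    ext p
    simp
  rw [h1, ← Prod.mk.eta (p := q), prod_mem_nhds_iff, ← mem_interior_iff_mem_nhds,
    interior_closedBall _ one_ne_zero] at h
  simpa using h.1

/-! ### Embedded cylinders in `ℂ × S¹` -/

/-- The radial retraction of the plane onto the unit disc. -/
def discRetr (z : ℂ) : Disc2 :=
  ⟨((max 1 ‖z‖)⁻¹ : ℝ) • z, by
    rw [mem_closedBall_zero_iff, norm_smul, norm_inv, Real.norm_of_nonneg (by positivity)]
    exact inv_mul_le_one_of_le₀ (le_max_right _ _) (by positivity)⟩

theorem continuous_discRetr : Continuous discRetr := by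
  have h : Continuous fun z : ℂ => (max 1 ‖z‖)⁻¹ :=
    Continuous.inv₀ (by fun_prop) fun z => by positivity
  exact Continuous.subtype_mk (h.smul continuous_id) _

theorem coe_discRetr {z : ℂ} (hz : ‖z‖ ≤ 1) : (discRetr z : ℂ) = z := by
  simp [discRetr, max_eq_left hz]

theorem norm_disc_le (w : Disc2) : ‖(w : ℂ)‖ ≤ 1 := mem_closedBall_zero_iff.1 w.2

theorem discRetr_coe (w : Disc2) : discRetr w = w := Subtype.ext (coe_discRetr (norm_disc_le w))

theorem discRetr_injOn {z z' : ℂ} (hz : ‖z‖ ≤ 1) (hw : ‖z'‖ ≤ 1)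
    (h : discRetr z = discRetr z') : z = z' := by
  rw [← coe_discRetr hz, h, coe_discRetr hw]

/-- The retraction of `ℂ × ℝ` onto the standard cylinder. -/
def cylRetr (q : ℂ × ℝ) : Disc2 × I := (discRetr q.1, projIcc 0 1 zero_le_one q.2)

theorem continuous_cylRetr : Continuous cylRetr :=
  (continuous_discRetr.comp continuous_fst).prodMk (continuous_projIcc.comp continuous_snd)

theorem cylRetr_coe (p : Disc2 × I) : cylRetr ((p.1 : ℂ), (p.2 : ℝ)) = p :=
  Prod.ext (discRetr_coe _) (projIcc_val zero_le_one _)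

theorem injOn_projIcc_unit : InjOn (projIcc (0 : ℝ) 1 zero_le_one) (Icc 0 1) := by
  intro s hs t ht h
  rw [projIcc_of_mem _ hs, projIcc_of_mem _ ht] at h
  exact congrArg Subtype.val h

theorem injOn_cylRetr : InjOn cylRetr {q | ‖q.1‖ ≤ 1 ∧ q.2 ∈ Icc (0 : ℝ) 1} := by
  intro p hp q hq h
  obtain ⟨h1, h2⟩ := Prod.mk.inj h
  exact Prod.ext (discRetr_injOn hp.1 hq.1 h1) (injOn_projIcc_unit hp.2 hq.2 h2)

theorem cylinder_mem_nhds {q : ℂ × ℝ} (h1 : ‖q.1‖ < 1) (h2 : q.2 ∈ Ioo (0 : ℝ) 1) :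
    {q : ℂ × ℝ | ‖q.1‖ ≤ 1 ∧ q.2 ∈ Icc (0 : ℝ) 1} ∈ 𝓝 q := by
  have h3 : ∀ᶠ p : ℂ × ℝ in 𝓝 q, ‖p.1‖ < 1 :=
    (isOpen_lt (by fun_prop) continuous_const).mem_nhds h1
  have h4 : ∀ᶠ p : ℂ × ℝ in 𝓝 q, p.2 ∈ Ioo (0 : ℝ) 1 :=
    (isOpen_Ioo.preimage continuous_snd).mem_nhds h2
  filter_upwards [h3, h4] with p h3 h4
  exact ⟨h3.le, Ioo_subset_Icc_self h4⟩

theorem continuousOn_invFun_of_isEmbedding {A B : Type*} [TopologicalSpace A] [TopologicalSpace B]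
    [Nonempty A] {κ : A → B} (hκ : IsEmbedding κ) :
    ContinuousOn (Function.invFun κ) (range κ) := by
  rw [hκ.isInducing.continuousOn_iff]
  exact continuousOn_id.congr fun y hy => Function.invFun_eq hy

instance : Nonempty Disc2 := ⟨⟨0, by simp⟩⟩

theorem norm_fst_lt_one_of_interior {κ : Disc2 × I → ℂ × Circle} (hκ : IsEmbedding κ)
    (hle : ∀ p, ‖(κ p).1‖ ≤ 1) {p : Disc2 × I} (h1 : ‖(p.1 : ℂ)‖ < 1)
    (h2 : (p.2 : ℝ) ∈ Ioo (0 : ℝ) 1) : ‖(κ p).1‖ < 1 := by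
  have h := image_mem_nhds_of_injOn_circle (f := κ ∘ cylRetr)
    (cylinder_mem_nhds (q := ((p.1 : ℂ), (p.2 : ℝ))) h1 h2)
    (hκ.continuous.comp continuous_cylRetr).continuousOn
    (hκ.injective.injOn.comp injOn_cylRetr (mapsTo_univ _ _))
  rw [Function.comp_apply, cylRetr_coe] at h
  refine norm_fst_lt_one_of_mem_nhds (Filter.mem_of_superset h ?_)
  rintro _ ⟨q, -, rfl⟩
  exact hle _

theorem norm_lt_one_of_range_mem_nhds {κ : Disc2 × I → ℂ × Circle} (hκ : IsEmbedding κ)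
    {p : Disc2 × I} (h : range κ ∈ 𝓝 (κ p)) : ‖(p.1 : ℂ)‖ < 1 := by
  let χ : ℂ × ℝ → ℂ × Circle := fun q => (q.1, (κ p).2 * Circle.exp q.2)
  have hχ : Continuous χ := by fun_prop
  have hχ0 : χ ((κ p).1, 0) = κ p := by simp [χ]
  let W : Set (ℂ × ℝ) := {q | q.2 ∈ Ioo (-Real.pi) Real.pi} ∩ χ ⁻¹' range κ
  have hW : W ∈ 𝓝 ((κ p).1, (0 : ℝ)) := by
    refine Filter.inter_mem ((isOpen_Ioo.preimage continuous_snd).mem_nhds ?_)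
      (hχ.continuousAt (by rwa [hχ0]))
    simp [Real.pi_pos]
  let f : ℂ × ℝ → ℂ × ℝ := fun q =>
    (((Function.invFun κ (χ q)).1 : ℂ), ((Function.invFun κ (χ q)).2 : ℝ))
  have hf : ContinuousOn f W := by
    have hinv : ContinuousOn (fun q => Function.invFun κ (χ q)) W :=
      (continuousOn_invFun_of_isEmbedding hκ).comp hχ.continuousOn fun q hq => hq.2
    have hc : Continuous fun p : Disc2 × I => (((p.1 : ℂ), (p.2 : ℝ)) : ℂ × ℝ) := by fun_prop
    exact hc.comp_continuousOn hinv
  have hinj : InjOn f W := by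
    intro q hq q' hq' hqq
    obtain ⟨h1, h2⟩ := Prod.mk.inj hqq
    have h3 : Function.invFun κ (χ q) = Function.invFun κ (χ q') :=
      Prod.ext (Subtype.ext h1) (Subtype.ext h2)
    have h4 : χ q = χ q' := by
      rw [← Function.invFun_eq hq.2, h3, Function.invFun_eq hq'.2]
    obtain ⟨h5, h6⟩ := Prod.mk.inj h4
    refine Prod.ext h5 ?_
    have h7 := congrArg (fun u : Circle => Complex.arg u) (mul_left_cancel h6)
    rwa [Circle.arg_exp hq.1.1 hq.1.2.le, Circle.arg_exp hq'.1.1 hq'.1.2.le] at h7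
  have hnhds := image_mem_nhds_of_injOn hW hf hinj
  have hfp : f ((κ p).1, 0) = ((p.1 : ℂ), (p.2 : ℝ)) := by
    simp only [f, hχ0, Function.leftInverse_invFun hκ.injective p]
  rw [hfp] at hnhds
  refine norm_fst_lt_one_of_mem_nhds (q := ((p.1 : ℂ), (p.2 : ℝ)))
    (Filter.mem_of_superset hnhds ?_)
  rintro _ ⟨q, -, rfl⟩
  exact norm_disc_le _

/-- A self-embedding of the disc maps the open disc into itself. -/
theorem norm_lt_one_of_disc_embedding {φ : Disc2 → Disc2} (hφ : Continuous φ)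
    (hinj : Function.Injective φ) {w : Disc2} (hw : ‖(w : ℂ)‖ < 1) : ‖(φ w : ℂ)‖ < 1 := by
  have h := image_mem_nhds_of_injOn (a := ((w : ℂ), (0 : ℝ))) (W := {q | ‖q.1‖ < 1})
    (f := fun q => ((φ (discRetr q.1) : ℂ), q.2))
    ((isOpen_lt (by fun_prop) continuous_const).mem_nhds hw)
    ((continuous_subtype_val.comp (hφ.comp (continuous_discRetr.comp continuous_fst))).prodMk
      continuous_snd).continuousOn (by
      intro q hq q' hq' hqq
      obtain ⟨h1, h2⟩ := Prod.mk.inj hqq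
      exact Prod.ext (discRetr_injOn (le_of_lt hq) (le_of_lt hq') (hinj (Subtype.ext h1))) h2)
  simp only [discRetr_coe] at h
  refine norm_fst_lt_one_of_mem_nhds (q := ((φ w : ℂ), (0 : ℝ))) (Filter.mem_of_superset h ?_)
  rintro _ ⟨q, -, rfl⟩
  exact norm_disc_le _

/-- Two cylinders stacked along a common face cover a neighbourhood of the interior of this
face. -/
theorem range_union_range_mem_nhds {κ₁ κ₂ : Disc2 × I → ℂ × Circle} (h₁ : IsEmbedding κ₁)
    (h₂ : IsEmbedding κ₂) (hface : ∀ w, ∃ w', κ₂ (w', 1) = κ₁ (w, 0)) {O : Set (ℂ × Circle)}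
    (hO : IsOpen O) (hover : range κ₁ ∩ range κ₂ ∩ O ⊆ range fun w => κ₁ (w, 0)) {w : Disc2}
    (hw : ‖(w : ℂ)‖ < 1) (hwO : κ₁ (w, 0) ∈ O) : range κ₁ ∪ range κ₂ ∈ 𝓝 (κ₁ (w, 0)) := by
  choose ψ hψ using hface
  have hψc : Continuous ψ := by
    have : Continuous fun w => ((ψ w, 1) : Disc2 × I) := by
      rw [h₂.continuous_iff]
      have : κ₂ ∘ (fun w => ((ψ w, 1) : Disc2 × I)) = fun w => κ₁ (w, 0) := funext hψ
      rw [this]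
      exact h₁.continuous.comp (by fun_prop)
    exact continuous_fst.comp this
  have hψi : Function.Injective ψ := fun a b hab => by
    have := hψ a
    rw [hab, hψ b] at this
    exact (Prod.mk.inj (h₁.injective this)).1.symm
  let G : ℂ × ℝ → ℂ × Circle := fun q =>
    if 0 ≤ q.2 then κ₁ (discRetr q.1, projIcc 0 1 zero_le_one q.2)
    else κ₂ (ψ (discRetr q.1), projIcc 0 1 zero_le_one (1 + q.2))
  have hG : Continuous G := by
    refine Continuous.if_le ?_ ?_ continuous_const continuous_snd ?_
    · exact h₁.continuous.comp ((continuous_discRetr.comp continuous_fst).prodMk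
        (continuous_projIcc.comp continuous_snd))
    · exact h₂.continuous.comp ((hψc.comp (continuous_discRetr.comp continuous_fst)).prodMk
        (continuous_projIcc.comp (continuous_const.add continuous_snd)))
    · intro q hq
      rw [← hq, add_zero, projIcc_left, projIcc_right]
      exact (hψ _).symm
  have hG0 : G ((w : ℂ), 0) = κ₁ (w, 0) := by
    simp only [G, le_refl, if_true, discRetr_coe, projIcc_left]
    rfl
  let W : Set (ℂ × ℝ) := {q | ‖q.1‖ < 1} ∩ {q | q.2 ∈ Ioo (-1 : ℝ) 1} ∩ G ⁻¹' O
  have hW : W ∈ 𝓝 ((w : ℂ), (0 : ℝ)) := by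
    refine Filter.inter_mem (Filter.inter_mem
      ((isOpen_lt (by fun_prop) continuous_const).mem_nhds hw)
      ((isOpen_Ioo.preimage continuous_snd).mem_nhds (by simp))) ?_
    exact hG.continuousAt (hO.mem_nhds (by rwa [hG0]))
  have hmixed : ∀ q ∈ W, ∀ q' ∈ W, 0 ≤ q.2 → q'.2 < 0 → G q ≠ G q' := by
    intro q hq q' hq' hpos hneg heq
    have e1 : G q = κ₁ (discRetr q.1, projIcc 0 1 zero_le_one q.2) := if_pos hpos
    have e2 : G q' = κ₂ (ψ (discRetr q'.1), projIcc 0 1 zero_le_one (1 + q'.2)) :=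
      if_neg (not_le.2 hneg)
    obtain ⟨v, hv⟩ := hover ⟨⟨⟨_, e1.symm⟩, ⟨_, (heq.trans e2).symm⟩⟩, hq.2⟩
    rw [e1, e2, ← h₁.injective (hv.trans e1), ← hψ] at heq
    have h3 := (Prod.mk.inj (h₂.injective heq)).2
    have h4 := congrArg Subtype.val h3
    rw [projIcc_of_mem _ ⟨by linarith [hq'.1.2.1], by linarith⟩] at h4
    simp only [Icc.coe_one] at h4
    linarith
  have hinj : InjOn G W := by
    intro q hq q' hq' heq
    rcases le_or_gt 0 q.2 with h | h <;> rcases le_or_gt 0 q'.2 with h' | h'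
    · simp only [G, if_pos h, if_pos h'] at heq
      obtain ⟨a1, a2⟩ := Prod.mk.inj (h₁.injective heq)
      exact Prod.ext (discRetr_injOn (le_of_lt hq.1.1) (le_of_lt hq'.1.1) a1)
        (injOn_projIcc_unit ⟨h, hq.1.2.2.le⟩ ⟨h', hq'.1.2.2.le⟩ a2)
    · exact absurd heq (hmixed q hq q' hq' h h')
    · exact absurd heq.symm (hmixed q' hq' q hq h' h)
    · simp only [G, if_neg (not_le.2 h), if_neg (not_le.2 h')] at heq
      obtain ⟨a1, a2⟩ := Prod.mk.inj (h₂.injective heq)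
      have a3 := injOn_projIcc_unit ⟨by linarith [hq.1.2.1], by linarith⟩
        ⟨by linarith [hq'.1.2.1], by linarith⟩ a2
      exact Prod.ext (discRetr_injOn (le_of_lt hq.1.1) (le_of_lt hq'.1.1) (hψi a1)) (by linarith)
  have h := image_mem_nhds_of_injOn_circle hW hG.continuousOn hinj
  rw [hG0] at h
  refine Filter.mem_of_superset h ?_
  rintro _ ⟨q, -, rfl⟩
  by_cases hq : 0 ≤ q.2
  · exact Or.inl ⟨_, (if_pos hq).symm⟩
  · exact Or.inr ⟨_, (if_neg hq).symm⟩

/-- No nonempty relatively open subset of a cylinder is contained in a face of a cylinder. -/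
theorem exists_notMem_face {κ κ₁ : Disc2 × I → ℂ × Circle} (h : IsEmbedding κ)
    (h₁ : IsEmbedding κ₁) {p : Disc2 × I} {V : Set (ℂ × Circle)} (hV : V ∈ 𝓝 (κ p)) :
    ∃ q, κ q ∈ V ∧ κ q ∉ range fun w => κ₁ (w, 0) := by
  by_contra! hcon
  let α : ℝ → ℂ × ℝ := fun s => (((1 - s : ℝ) : ℂ) * (p.1 : ℂ), (1 - s) * (p.2 : ℝ) + s / 2)
  have hα : Continuous α := by fun_prop
  have hα0 : α 0 = ((p.1 : ℂ), (p.2 : ℝ)) := by simp [α]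
  have hev : ∀ᶠ s in 𝓝[>] (0 : ℝ), κ (cylRetr (α s)) ∈ interior V := by
    have hc : Continuous fun s => κ (cylRetr (α s)) :=
      h.continuous.comp (continuous_cylRetr.comp hα)
    refine (hc.continuousAt.eventually_mem ?_).filter_mono nhdsWithin_le_nhds
    rw [hα0, cylRetr_coe]
    exact isOpen_interior.mem_nhds (mem_interior_iff_mem_nhds.2 hV)
  have hev2 : ∀ᶠ s in 𝓝[>] (0 : ℝ), s ∈ Ioo (0 : ℝ) 1 := Ioo_mem_nhdsGT one_pos
  obtain ⟨s, hs, hs1⟩ := (hev.and hev2).exists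
  have hn1 : ‖(α s).1‖ < 1 := by
    simp only [α, norm_mul, Complex.norm_real, Real.norm_eq_abs]
    rw [abs_of_pos (by linarith [hs1.2])]
    have := norm_disc_le p.1
    have := norm_nonneg (p.1 : ℂ)
    nlinarith [hs1.1, hs1.2]
  have hn2 : (α s).2 ∈ Ioo (0 : ℝ) 1 := by
    have h0 := p.2.2.1
    have h1 := p.2.2.2
    constructor
    · simp only [α]
      nlinarith [hs1.1, hs1.2]
    · simp only [α]
      nlinarith [hs1.1, hs1.2]
  have hκc : Continuous fun q => κ (cylRetr q) := h.continuous.comp continuous_cylRetr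
  let W : Set (ℂ × ℝ) := {q | ‖q.1‖ ≤ 1 ∧ q.2 ∈ Icc (0 : ℝ) 1} ∩
    (fun q => κ (cylRetr q)) ⁻¹' interior V
  have hW : W ∈ 𝓝 (α s) := Filter.inter_mem (cylinder_mem_nhds hn1 hn2)
    (hκc.continuousAt (isOpen_interior.mem_nhds hs))
  have hface : ∀ q ∈ W, ∃ w, κ₁ (w, 0) = κ (cylRetr q) := fun q hq =>
    hcon _ (interior_subset hq.2)
  let f : ℂ × ℝ → ℂ × ℝ := fun q => (((Function.invFun κ₁ (κ (cylRetr q))).1 : ℂ), 0)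
  have hf : ContinuousOn f W := by
    have hinv : ContinuousOn (fun q => Function.invFun κ₁ (κ (cylRetr q))) W :=
      (continuousOn_invFun_of_isEmbedding h₁).comp hκc.continuousOn fun q hq => by
        obtain ⟨w, hw⟩ := hface q hq
        exact ⟨_, hw⟩
    have hc : Continuous fun p : Disc2 × I => (((p.1 : ℂ), 0) : ℂ × ℝ) := by fun_prop
    exact hc.comp_continuousOn hinv
  have hinj : InjOn f W := by
    intro q hq q' hq' hqq
    obtain ⟨w, hw⟩ := hface q hq
    obtain ⟨w', hw'⟩ := hface q' hq'
    have h3 := (Prod.mk.inj hqq).1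
    rw [← hw, ← hw', Function.leftInverse_invFun h₁.injective,
      Function.leftInverse_invFun h₁.injective] at h3
    rw [show w = w' from Subtype.ext h3, hw'] at hw
    exact (injOn_cylRetr hq'.1 hq.1 (h.injective hw)).symm
  have hnhds := image_mem_nhds_of_injOn hW hf hinj
  have hsub : f '' W ⊆ univ ×ˢ {0} := by
    rintro _ ⟨q, -, rfl⟩
    exact ⟨mem_univ _, rfl⟩
  have hz := (prod_mem_nhds_iff.1 (Filter.mem_of_superset hnhds hsub)).2
  have := mem_interior_iff_mem_nhds.2 hz
  simp [interior_singleton] at this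

/-! ### Solid tori and chambers in coordinates -/

instance : CompactSpace Disc2 := isCompact_iff_compactSpace.1 (isCompact_closedBall 0 1)

namespace SolidTorus

/-- The coordinates in `ℂ × S¹` of a point of a solid torus. -/
def coord (T : SolidTorus X) (x : T.carrier) : ℂ × Circle := ((T.homeo x).1, (T.homeo x).2)

theorem isEmbedding_coord (T : SolidTorus X) : IsEmbedding T.coord :=
  (IsEmbedding.subtypeVal.prodMap IsEmbedding.id).comp T.homeo.isEmbedding

theorem norm_coord_le (T : SolidTorus X) (x : T.carrier) : ‖(T.coord x).1‖ ≤ 1 := norm_disc_le _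

theorem exists_coord_eq (T : SolidTorus X) {q : ℂ × Circle} (hq : ‖q.1‖ ≤ 1) :
    ∃ x, T.coord x = q :=
  ⟨T.homeo.symm (⟨q.1, mem_closedBall_zero_iff.2 hq⟩, q.2), by simp [coord]⟩

theorem coe_mem_bdry_iff (T : SolidTorus X) {x : T.carrier} :
    (x : X) ∈ T.bdry ↔ ‖(T.coord x).1‖ = 1 :=
  Subtype.val_injective.mem_set_image

theorem bdry_subset (T : SolidTorus X) : T.bdry ⊆ T.carrier := Subtype.coe_image_subset _ _

end SolidTorus

/-- The boundary of a meridional disc is essential in the boundary torus. -/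
theorem MeridionalDisc.not_nullHomotopicIn {T : SolidTorus X} (K : MeridionalDisc T) {A : Set X}
    (hA : A ⊆ T.bdry) : ¬ NullHomotopicIn K.bdry A := by
  rintro ⟨hsub, y, ⟨F⟩⟩
  obtain ⟨H, hinj, hmem, hzero, hone⟩ := K.isotopic_meridian
  let β : T.bdry → ℂ := fun x => (T.coord (Set.inclusion T.bdry_subset x)).1
  have hβ : Continuous β := continuous_fst.comp
    (T.isEmbedding_coord.continuous.comp (continuous_inclusion T.bdry_subset))
  have hβ1 : ∀ x, ‖β x‖ = 1 := fun x =>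
    T.coe_mem_bdry_iff (x := Set.inclusion T.bdry_subset x).1 x.2
  have hβ0 : ∀ x, β x ≠ 0 := fun x h => by simpa [h] using hβ1 x
  have hmemK : ∀ s, H (s, 0) ∈ K.bdry := fun s => hzero ▸ mem_range_self s
  have h1 := hasContinuousLog_homotopy
    (fun q : Circle × I => β (Set.inclusion hA (F (q.2, ⟨H (q.1, 0), hmemK q.1⟩))))
    (hβ.comp ((continuous_inclusion hA).comp (F.continuous.comp (by fun_prop))))
    fun q => hβ0 _
  have h2 := hasContinuousLog_homotopy (fun q : Circle × I => β ⟨H q, hmem q.1 q.2⟩)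
    (hβ.comp (by fun_prop)) fun q => hβ0 _
  have h3 : HasContinuousLog fun s : Circle => β ⟨H (s, 0), hmem s 0⟩ := by
    have e0 : ∀ s : Circle, Set.inclusion hA (F (0, ⟨H (s, 0), hmemK s⟩)) =
        ⟨H (s, 0), hmem s 0⟩ := fun s => by
      rw [F.apply_zero]
      rfl
    have e1 : ∀ s : Circle, F (1, ⟨H (s, 0), hmemK s⟩) = y := fun s => by
      rw [F.apply_one]
      rfl
    simp only [e0, e1] at h1
    exact h1.2 (hasContinuousLog_const (hβ0 _))
  obtain ⟨l, hl, hle⟩ := h2.1 h3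
  have hmer : ∀ s, ∃ x : T.carrier, (x : X) = H (s, 1) ∧ (T.coord x).2 = 1 := fun s => by
    have : H (s, 1) ∈ T.meridianCurve := hone ▸ mem_range_self s
    obtain ⟨x, hx, hxs⟩ := this
    exact ⟨x, hxs, hx.2⟩
  let e : Circle → Circle := fun s => ⟨β ⟨H (s, 1), hmem s 1⟩, mem_sphere_zero_iff_norm.2 (hβ1 _)⟩
  have he : Continuous e := Continuous.subtype_mk (hβ.comp (by fun_prop)) _
  have hebij : Function.Bijective e := by
    constructor
    · intro s s' hss
      obtain ⟨x, hx, hx2⟩ := hmer s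
      obtain ⟨x', hx', hx2'⟩ := hmer s'
      have hb : β ⟨H (s, 1), hmem s 1⟩ = β ⟨H (s', 1), hmem s' 1⟩ :=
        congrArg (fun u : Circle => (u : ℂ)) hss
      have e1 : Set.inclusion T.bdry_subset ⟨H (s, 1), hmem s 1⟩ = x := Subtype.ext hx.symm
      have e2 : Set.inclusion T.bdry_subset ⟨H (s', 1), hmem s' 1⟩ = x' := Subtype.ext hx'.symm
      simp only [β, e1, e2] at hb
      have hxx : x = x' := T.isEmbedding_coord.injective (Prod.ext hb (hx2.trans hx2'.symm))
      exact hinj 1 (hx.symm.trans ((congrArg Subtype.val hxx).trans hx'))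
    · intro u
      obtain ⟨x, hx⟩ := T.exists_coord_eq (q := ((u : ℂ), 1)) (Circle.norm_coe u).le
      have hxm : (x : X) ∈ T.meridianCurve := by
        refine ⟨x, ⟨?_, congrArg Prod.snd hx⟩, rfl⟩
        exact (congrArg (fun q : ℂ × Circle => ‖q.1‖) hx).trans (Circle.norm_coe u)
      rw [← hone] at hxm
      obtain ⟨s, hs⟩ := hxm
      refine ⟨s, Subtype.ext ?_⟩
      have e1 : Set.inclusion T.bdry_subset ⟨H (s, 1), hmem s 1⟩ = x := Subtype.ext hs
      change (T.coord (Set.inclusion T.bdry_subset ⟨H (s, 1), hmem s 1⟩)).1 = u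
      rw [e1, hx]
  let E : Circle ≃ₜ Circle := he.homeoOfEquivCompactToT2 (f := Equiv.ofBijective e hebij)
  refine not_hasContinuousLog_of_odd (e := fun u : Circle => (u : ℂ)) (fun u => rfl)
    (fun u => u.coe_ne_zero) ⟨l ∘ E.symm, hl.comp E.symm.continuous, fun u => ?_⟩
  rw [Function.comp_apply, hle]
  exact congrArg Subtype.val (E.apply_symm_apply u)

namespace ChamberSystem

variable {T : SolidTorus X} {m : ℕ} (S : ChamberSystem T m)

/-- The point of `T` with coordinates `p` in the `i`-th chamber. -/
def pt (i : Fin m) (p : Disc2 × I) : T.carrier :=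
  Set.inclusion (S.chamber_sub i) ((S.chamber i).homeo.symm p)

/-- The embedding of the standard cylinder in `ℂ × S¹` given by the `i`-th chamber. -/
def cyl (i : Fin m) (p : Disc2 × I) : ℂ × Circle := T.coord (S.pt i p)

theorem isEmbedding_cyl (i : Fin m) : IsEmbedding (S.cyl i) :=
  T.isEmbedding_coord.comp
    ((IsEmbedding.inclusion (S.chamber_sub i)).comp (S.chamber i).homeo.symm.isEmbedding)

theorem pt_mem_image_iff (i : Fin m) (p : Disc2 × I) (B : Set (Disc2 × I)) :
    (S.pt i p : X) ∈ Subtype.val '' ((S.chamber i).homeo ⁻¹' B) ↔ p ∈ B := by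
  change (((S.chamber i).homeo.symm p : (S.chamber i).carrier) : X) ∈ _ ↔ _
  rw [Subtype.val_injective.mem_set_image, mem_preimage, Homeomorph.apply_symm_apply]

theorem pt_mem_disc_iff (i : Fin m) (p : Disc2 × I) :
    (S.pt i p : X) ∈ (S.disc i).carrier ↔ p.2 = 0 := by
  rw [← S.bot_eq]
  exact S.pt_mem_image_iff i p _

theorem pt_mem_disc_rotate_iff (i : Fin m) (p : Disc2 × I) :
    (S.pt i p : X) ∈ (S.disc (finRotate m i)).carrier ↔ p.2 = 1 := by
  rw [← S.top_eq]
  exact S.pt_mem_image_iff i p _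

theorem pt_mem_bdry_iff (i : Fin m) (p : Disc2 × I) :
    (S.pt i p : X) ∈ (S.chamber i).bdry ↔ ‖(p.1 : ℂ)‖ = 1 ∨ p.2 = 0 ∨ p.2 = 1 :=
  S.pt_mem_image_iff i p _

theorem pt_mem_chamber (i : Fin m) (p : Disc2 × I) : (S.pt i p : X) ∈ (S.chamber i).carrier :=
  ((S.chamber i).homeo.symm p).2

theorem exists_pt_eq {i : Fin m} {x : T.carrier} (hx : (x : X) ∈ (S.chamber i).carrier) :
    ∃ p, S.pt i p = x :=
  ⟨(S.chamber i).homeo ⟨x, hx⟩, Subtype.ext (by simp [pt])⟩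

theorem coord_mem_range_cyl_iff {i : Fin m} {x : T.carrier} :
    T.coord x ∈ range (S.cyl i) ↔ (x : X) ∈ (S.chamber i).carrier := by
  constructor
  · rintro ⟨p, hp⟩
    rw [← T.isEmbedding_coord.injective hp]
    exact S.pt_mem_chamber i p
  · intro hx
    obtain ⟨p, rfl⟩ := S.exists_pt_eq hx
    exact mem_range_self p

theorem disc_subset_chamber (k : Fin m) : (S.disc k).carrier ⊆ (S.chamber k).carrier := by
  rw [← S.bot_eq]
  exact Subtype.coe_image_subset _ _

theorem coord_mem_face_iff {k : Fin m} {x : T.carrier} :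
    T.coord x ∈ (range fun w => S.cyl k (w, 0)) ↔ (x : X) ∈ (S.disc k).carrier := by
  constructor
  · rintro ⟨w, hw⟩
    rw [← T.isEmbedding_coord.injective hw]
    exact (S.pt_mem_disc_iff k _).2 rfl
  · intro hx
    obtain ⟨⟨w, t⟩, rfl⟩ := S.exists_pt_eq (S.disc_subset_chamber k hx)
    obtain rfl : t = 0 := (S.pt_mem_disc_iff k _).1 hx
    exact ⟨w, rfl⟩

theorem finRotate_ne {T : SolidTorus X} {m : ℕ} (S : ChamberSystem T m) (k : Fin m) :
    finRotate m k ≠ k := by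
  intro h
  let w : Disc2 := Classical.arbitrary _
  have h0 := (S.pt_mem_disc_iff k (w, 0)).2 rfl
  have h1 := S.pt_mem_disc_rotate_iff k (w, 0)
  rw [h] at h1
  exact zero_ne_one (h1.1 h0)

theorem isClosed_range_cyl (i : Fin m) : IsClosed (range (S.cyl i)) :=
  (isCompact_range (S.isEmbedding_cyl i).continuous).isClosed

theorem isClosed_face (k : Fin m) : IsClosed (range fun w => S.cyl k (w, 0)) :=
  (isCompact_range ((S.isEmbedding_cyl k).continuous.comp (by fun_prop))).isClosed

/-- The complement of all discs of the system but the `k`-th one. -/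
def awayFromOthers (k : Fin m) : Set (ℂ × Circle) :=
  ⋂ l ∈ {l | l ≠ k}, (range fun w => S.cyl l (w, 0))ᶜ

theorem isOpen_awayFromOthers (k : Fin m) : IsOpen (S.awayFromOthers k) :=
  (toFinite _).isOpen_biInter fun l _ => (S.isClosed_face l).isOpen_compl

theorem coord_mem_awayFromOthers_iff {k : Fin m} {x : T.carrier} :
    T.coord x ∈ S.awayFromOthers k ↔ ∀ l, l ≠ k → (x : X) ∉ (S.disc l).carrier := by
  simp only [awayFromOthers, mem_iInter, mem_ofPred_eq, mem_compl_iff, S.coord_mem_face_iff]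

/-- A point of two distinct chambers which avoids all discs but the `k`-th one lies on the `k`-th
disc. -/
theorem mem_disc_of_mem_chamber {i j k : Fin m} (hij : i ≠ j) {x : T.carrier}
    (hi : (x : X) ∈ (S.chamber i).carrier) (hj : (x : X) ∈ (S.chamber j).carrier)
    (hO : T.coord x ∈ S.awayFromOthers k) : (x : X) ∈ (S.disc k).carrier := by
  obtain ⟨l, hl⟩ := mem_iUnion.1 (S.overlap i j hij ⟨hi, hj⟩)
  by_cases hlk : l = k
  · exact hlk ▸ hl
  · exact absurd hl (S.coord_mem_awayFromOthers_iff.1 hO l hlk)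

theorem norm_lt_one_of_pt_disc {k : Fin m} {w : Disc2} (h : ‖(S.cyl k (w, 0)).1‖ < 1) :
    ‖(w : ℂ)‖ < 1 := by
  have hmem : (S.pt k (w, 0) : X) ∈ (S.disc k).carrier := (S.pt_mem_disc_iff k _).2 rfl
  let v : Disc2 := (S.disc k).homeo ⟨S.pt k (w, 0), hmem⟩
  have hv : ‖(v : ℂ)‖ < 1 := by
    refine lt_of_le_of_ne (norm_disc_le v) fun hv => h.ne ?_
    have : (S.pt k (w, 0) : X) ∈ (S.disc k).bdry := by
      rw [(S.disc k).bdry_spec]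
      exact ⟨⟨_, hmem⟩, hv, rfl⟩
    rw [← (S.disc k).inter_bdry] at this
    exact T.coe_mem_bdry_iff.1 this.2
  let θ : Disc2 → Disc2 × I := fun v =>
    (S.chamber k).homeo (Set.inclusion (S.disc_subset_chamber k) ((S.disc k).homeo.symm v))
  have hθ : Continuous θ := (S.chamber k).homeo.continuous.comp
    ((continuous_inclusion (S.disc_subset_chamber k)).comp (S.disc k).homeo.symm.continuous)
  have hθi : Function.Injective θ := (S.chamber k).homeo.injective.comp
    ((Set.inclusion_injective (S.disc_subset_chamber k)).comp (S.disc k).homeo.symm.injective)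
  have hθ0 : ∀ v, (θ v).2 = 0 := by
    intro v
    rw [← S.pt_mem_disc_iff k]
    simp [θ, pt]
  have hθv : θ v = (w, 0) := by simp [θ, v, pt]
  have := norm_lt_one_of_disc_embedding (φ := fun v => (θ v).1) (continuous_fst.comp hθ)
    (fun a b hab => hθi (Prod.ext hab ((hθ0 a).trans (hθ0 b).symm))) hv
  simpa only [hθv] using this

/-- A disc of the system meets a chamber that is not adjacent to it in `∂T` only. -/
theorem norm_coord_eq_one_of_mem_disc {i j : Fin m} (hij : i ≠ j) (hik : i ≠ finRotate m j)
    {x : T.carrier} (hxD : (x : X) ∈ (S.disc (finRotate m j)).carrier)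
    (hxi : (x : X) ∈ (S.chamber i).carrier) : ‖(T.coord x).1‖ = 1 := by
  by_contra hne
  have hlt : ‖(T.coord x).1‖ < 1 := lt_of_le_of_ne (T.norm_coord_le x) hne
  set k := finRotate m j with hk
  obtain ⟨w, hw⟩ := S.coord_mem_face_iff.2 hxD
  have hO : T.coord x ∈ S.awayFromOthers k := S.coord_mem_awayFromOthers_iff.2 fun l hl hxl =>
    disjoint_left.1 (S.disc_disjoint hl) hxl hxD
  have hunion : range (S.cyl k) ∪ range (S.cyl j) ∈ 𝓝 (T.coord x) := by
    simp only at hw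
    rw [← hw] at hlt hO ⊢
    refine range_union_range_mem_nhds (S.isEmbedding_cyl k) (S.isEmbedding_cyl j) ?_
      (S.isOpen_awayFromOthers k) ?_ (S.norm_lt_one_of_pt_disc hlt) hO
    · intro w
      have hm : (S.pt k (w, 0) : X) ∈ (S.disc k).carrier := (S.pt_mem_disc_iff k _).2 rfl
      have hm' := hm
      rw [hk, ← S.top_eq] at hm'
      obtain ⟨⟨w', t⟩, hp⟩ := S.exists_pt_eq (i := j) (Subtype.coe_image_subset _ _ hm')
      rw [← hp, hk, S.pt_mem_disc_rotate_iff] at hm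
      simp only at hm
      subst hm
      exact ⟨w', congrArg T.coord hp⟩
    · rintro _ ⟨⟨⟨p, rfl⟩, hpj⟩, hpO⟩
      exact S.coord_mem_face_iff.2 (S.mem_disc_of_mem_chamber (S.finRotate_ne j)
        (S.pt_mem_chamber k p) (S.coord_mem_range_cyl_iff.1 hpj) hpO)
  obtain ⟨p, rfl⟩ := S.exists_pt_eq hxi
  obtain ⟨q, ⟨hq, hqO⟩, hqD⟩ := exists_notMem_face (S.isEmbedding_cyl i) (S.isEmbedding_cyl k)
    (Filter.inter_mem hunion ((S.isOpen_awayFromOthers k).mem_nhds hO))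
  refine hqD (S.coord_mem_face_iff.2 ?_)
  rcases hq with hq | hq
  · exact S.mem_disc_of_mem_chamber hik (S.pt_mem_chamber i q) (S.coord_mem_range_cyl_iff.1 hq) hqO
  · exact S.mem_disc_of_mem_chamber hij (S.pt_mem_chamber i q) (S.coord_mem_range_cyl_iff.1 hq) hqO

theorem sideAnnulus_subset (i : Fin m) : (S.chamber i).sideAnnulus ⊆ T.bdry := by
  rintro x ⟨hx, hxn⟩
  have hxC : x ∈ (S.chamber i).carrier := Subtype.coe_image_subset _ _ hx
  obtain ⟨x, rfl⟩ : ∃ x' : T.carrier, (x' : X) = x := ⟨⟨x, S.chamber_sub i hxC⟩, rfl⟩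
  rw [S.top_eq, S.bot_eq, mem_union, not_or] at hxn
  rw [T.coe_mem_bdry_iff]
  by_cases hD : ∃ k, (x : X) ∈ (S.disc k).carrier
  · obtain ⟨k, hk⟩ := hD
    obtain ⟨j, rfl⟩ := (finRotate m).surjective k
    refine S.norm_coord_eq_one_of_mem_disc ?_ ?_ hk hxC
    · rintro rfl
      exact hxn.1 hk
    · intro h
      exact hxn.2 (h ▸ hk)
  · by_contra hne
    have hlt : ‖(T.coord x).1‖ < 1 := lt_of_le_of_ne (T.norm_coord_le x) hne
    have hopen : IsOpen ({q : ℂ × Circle | ‖q.1‖ < 1} ∩ ⋂ j ∈ {j | j ≠ i}, (range (S.cyl j))ᶜ) :=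
      (isOpen_lt (by fun_prop) continuous_const).inter
        ((toFinite _).isOpen_biInter fun j _ => (S.isClosed_range_cyl j).isOpen_compl)
    have hnhds : range (S.cyl i) ∈ 𝓝 (T.coord x) := by
      refine Filter.mem_of_superset (hopen.mem_nhds ⟨hlt, mem_iInter₂.2 fun j hj hxj => ?_⟩) ?_
      · exact hD (mem_iUnion.1 (S.overlap j i hj ⟨S.coord_mem_range_cyl_iff.1 hxj, hxC⟩))
      · rintro q ⟨hq, hqj⟩
        obtain ⟨z, rfl⟩ := T.exists_coord_eq (le_of_lt hq)
        obtain ⟨j, hj⟩ := mem_iUnion.1 (S.cover.symm.subset z.2)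
        by_cases hji : j = i
        · exact S.coord_mem_range_cyl_iff.2 (hji ▸ hj)
        · exact absurd (S.coord_mem_range_cyl_iff.2 hj) (mem_iInter₂.1 hqj j hji)
    obtain ⟨p, rfl⟩ := S.exists_pt_eq hxC
    rw [S.pt_mem_disc_iff, S.pt_mem_disc_rotate_iff] at hxn
    rw [S.pt_mem_bdry_iff] at hx
    have := norm_lt_one_of_range_mem_nhds (S.isEmbedding_cyl i) hnhds
    rcases hx with h | h | h
    · exact this.ne h
    · exact hxn.2 h
    · exact hxn.1 h

theorem chamber_inter_bdry_subset (i : Fin m) :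
    (S.chamber i).carrier ∩ T.bdry ⊆ (S.chamber i).bdry := by
  rintro x ⟨hxC, hxT⟩
  obtain ⟨x, rfl⟩ : ∃ x' : T.carrier, (x' : X) = x := ⟨⟨x, S.chamber_sub i hxC⟩, rfl⟩
  obtain ⟨p, rfl⟩ := S.exists_pt_eq hxC
  rw [S.pt_mem_bdry_iff]
  by_contra! hcon
  obtain ⟨h1, h2, h3⟩ := hcon
  refine (norm_fst_lt_one_of_interior (S.isEmbedding_cyl i) (fun _ => T.norm_coord_le _)
    (lt_of_le_of_ne (norm_disc_le p.1) h1) ⟨?_, ?_⟩).ne (T.coe_mem_bdry_iff.1 hxT)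
  · exact unitInterval.pos_iff_ne_zero.2 h2
  · exact unitInterval.lt_one_iff_ne_one.2 h3

/-- A meridional disc disjoint from the discs of the system lies in a single chamber. -/
theorem exists_subset_chamber (K : MeridionalDisc T)
    (hK : Disjoint K.carrier (⋃ i, (S.disc i).carrier)) :
    ∃ i, K.carrier ⊆ (S.chamber i).carrier := by
  let κ : Disc2 → ℂ × Circle := fun v => T.coord (Set.inclusion K.subset (K.homeo.symm v))
  have hκ : Continuous κ := T.isEmbedding_coord.continuous.comp
    ((continuous_inclusion K.subset).comp K.homeo.symm.continuous)
  have hpre : IsPreconnected (range κ) := by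
    have : PreconnectedSpace Disc2 := isPreconnected_iff_preconnectedSpace.1
      (convex_closedBall (0 : ℂ) 1).isPreconnected
    exact isPreconnected_range hκ
  have hmem : ∀ x (hx : x ∈ K.carrier), T.coord ⟨x, K.subset hx⟩ ∈ range κ := fun x hx =>
    ⟨K.homeo ⟨x, hx⟩, by simp [κ]⟩
  let v : Disc2 := Classical.arbitrary _
  obtain ⟨i, hi⟩ := mem_iUnion.1 (S.cover.symm.subset (K.subset (K.homeo.symm v).2))
  let R : Set (ℂ × Circle) := ⋃ j ∈ {j | j ≠ i}, range (S.cyl j)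
  have hR : IsClosed R := (toFinite _).isClosed_biUnion fun j _ => S.isClosed_range_cyl j
  have hcover : range κ ⊆ range (S.cyl i) ∪ R := by
    rintro _ ⟨v, rfl⟩
    obtain ⟨j, hj⟩ := mem_iUnion.1 (S.cover.symm.subset (K.subset (K.homeo.symm v).2))
    have hj' := S.coord_mem_range_cyl_iff (x := Set.inclusion K.subset (K.homeo.symm v)).2 hj
    by_cases hji : j = i
    · exact Or.inl (hji ▸ hj')
    · exact Or.inr (mem_iUnion₂.2 ⟨j, hji, hj'⟩)
  have hempty : ¬ (range κ ∩ (range (S.cyl i) ∩ R)).Nonempty := by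
    rintro ⟨_, ⟨v, rfl⟩, hvi, hvR⟩
    obtain ⟨j, hji, hvj⟩ := mem_iUnion₂.1 hvR
    exact disjoint_left.1 hK (K.homeo.symm v).2 (S.overlap j i hji
      ⟨S.coord_mem_range_cyl_iff.1 hvj, S.coord_mem_range_cyl_iff.1 hvi⟩)
  have hnonempty : (range κ ∩ range (S.cyl i)).Nonempty :=
    ⟨κ v, mem_range_self v, S.coord_mem_range_cyl_iff.2 hi⟩
  refine ⟨i, fun x hx => ?_⟩
  rcases hcover (hmem x hx) with h | h
  · exact S.coord_mem_range_cyl_iff.1 h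
  · exact absurd (isPreconnected_closed_iff.1 hpre _ _ (S.isClosed_range_cyl i) hR hcover
      hnonempty ⟨_, hmem x hx, h⟩) hempty

end ChamberSystem

/-- Lemma 4.2: in the setup, if `N(L ∩ Cᵢ, Cᵢ) ≥ n` for each chamber `Cᵢ`, then
every meridional disc `K` of `T` disjoint from all the discs `Dᵢ` satisfies
`|L ∩ K| ≥ n`. -/
theorem missing_discs_lemma {X : Type} [TopologicalSpace X]
    (T : SolidTorus X) (L : Set X) (hL : IsLink L) (hLint : L ⊆ T.intr)
    (m : ℕ) (S : ChamberSystem T m) (n : ℕ)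
    (htrans : S.Transversal L n)
    (hcham : ∀ i, (n : ℕ∞) ≤ chamberIndex (L ∩ (S.chamber i).carrier) (S.chamber i)) :
    ∀ K : MeridionalDisc T, Disjoint K.carrier (⋃ i, (S.disc i).carrier) →
      (n : ℕ∞) ≤ (L ∩ K.carrier).encard := by
  intro K hK
  obtain ⟨i, hi⟩ := S.exists_subset_chamber K hK
  have hdisc : ∀ x ∈ K.carrier, x ∉ (S.chamber i).top ∪ (S.chamber i).bot := by
    intro x hx hx'
    rw [S.top_eq, S.bot_eq] at hx'
    exact disjoint_left.1 hK hx (hx'.elim (fun h => mem_iUnion.2 ⟨_, h⟩)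
      fun h => mem_iUnion.2 ⟨_, h⟩)
  have hinter : K.carrier ∩ (S.chamber i).bdry = K.bdry := by
    rw [← K.inter_bdry]
    ext x
    exact ⟨fun h => ⟨h.1, S.sideAnnulus_subset i ⟨h.2, hdisc x h.1⟩⟩,
      fun h => ⟨h.1, S.chamber_inter_bdry_subset i ⟨hi h.1, h.2⟩⟩⟩
  let M : InteriorMeridionalDisc (S.chamber i) :=
    { carrier := K.carrier
      subset := fun x hx => ⟨hi hx, hdisc x hx⟩
      homeo := K.homeo
      bdry := K.bdry
      bdry_spec := K.bdry_spec
      inter_bdry := hinter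
      bdry_sub := fun x hx => by
        rw [← hinter] at hx
        exact ⟨hx.2, hdisc x hx.1⟩
      essential := K.not_nullHomotopicIn (S.sideAnnulus_subset i) }
  calc (n : ℕ∞) ≤ chamberIndex (L ∩ (S.chamber i).carrier) (S.chamber i) := hcham i
    _ ≤ (L ∩ (S.chamber i).carrier ∩ K.carrier).encard := iInf_le _ M
    _ ≤ (L ∩ K.carrier).encard := encard_le_encard fun x hx => ⟨hx.1.1, hx.2⟩
end
end
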